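/- arXiv:1811.08386 — 3 statements merged into one kernel-verified Lean document; each statement's English description precedes it below -/
import Mathlib

section
/- Let $S_0 = k[x_0,\ldots,x_{n+e}]$, $J = (x_0,\ldots,x_{e-1})$, $u$ a monomial in $x_0,\ldots,x_{e-1}$ of degree $r$, and $I = (u) + J^{r+1}$. Then the graded Betti numbers of $I$ are: $\beta^{S_0}_{0,r}(I) = 1$; $\beta^{S_0}_{i,r+1}(I) = \binom{e+r}{i+r+1}\binom{r+i}{r} - \binom{e}{i+1}$ for $0 \le i \le e-1$; and all other $\beta^{S_0}_{ij}(I) = 0$. -/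
set_option synthInstance.maxHeartbeats 1000000
set_option maxHeartbeats 2000000

noncomputable section

open MvPolynomial

namespace Paper

variable (k : Type) [Field k]

/-- The degree-`d` graded component of `S₀/I` as a `k`-subspace. -/
def quotComponent {N : ℕ} (I : Ideal (MvPolynomial (Fin N) k)) (d : ℕ) :
    Submodule k (MvPolynomial (Fin N) k ⧸ I) :=
  (MvPolynomial.homogeneousSubmodule (Fin N) k d).map
    (Ideal.Quotient.mkₐ k I).toLinearMap

/-- Hilbert function of `S₀/I`. -/
def hilbFn {N : ℕ} (I : Ideal (MvPolynomial (Fin N) k)) (d : ℕ) : ℕ :=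
  Module.finrank k (quotComponent k I d)

/-- `I` is a homogeneous ideal. -/
def IdealHomog {N : ℕ} (I : Ideal (MvPolynomial (Fin N) k)) : Prop :=
  ∀ f ∈ I, ∀ d : ℕ, MvPolynomial.homogeneousComponent d f ∈ I

/-- `I` is saturated with respect to the irrelevant maximal ideal. -/
def IsSaturatedIdeal {N : ℕ} (I : Ideal (MvPolynomial (Fin N) k)) : Prop :=
  ∀ f : MvPolynomial (Fin N) k, (∀ i : Fin N, MvPolynomial.X i * f ∈ I) → f ∈ I

/-- The subscheme defined by `I` is non-degenerate: `I` contains no nonzero linear form. -/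
def Nondegenerate {N : ℕ} (I : Ideal (MvPolynomial (Fin N) k)) : Prop :=
  ∀ f ∈ I, f.IsHomogeneous 1 → f = 0

/-- `S₀/I` has Hilbert polynomial of degree `n` and multiplicity (degree) `D`. -/
def HasDeg {N : ℕ} (I : Ideal (MvPolynomial (Fin N) k)) (n D : ℕ) : Prop :=
  ∃ P : Polynomial ℚ, P.natDegree = n ∧ (D : ℚ) = P.leadingCoeff * (n.factorial : ℚ) ∧
    ∀ᶠ d : ℕ in Filter.atTop, (hilbFn k I d : ℚ) = Polynomial.eval (d : ℚ) P

/-- The irrelevant maximal ideal of `S₀/I`. -/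
def irrelevantIdeal {N : ℕ} (I : Ideal (MvPolynomial (Fin N) k)) :
    Ideal (MvPolynomial (Fin N) k ⧸ I) :=
  Ideal.span (Set.range fun i : Fin N => Ideal.Quotient.mk I (MvPolynomial.X i))

/-- `S₀/I` is Cohen-Macaulay of dimension `c`: there is a regular sequence of length `c`
in the irrelevant maximal ideal. -/
def IsCMQuot {N : ℕ} (I : Ideal (MvPolynomial (Fin N) k)) (c : ℕ) : Prop :=
  ∃ rs : List (MvPolynomial (Fin N) k ⧸ I), rs.length = c ∧
    (∀ x ∈ rs, x ∈ irrelevantIdeal k I) ∧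
    RingTheory.Sequence.IsRegular (MvPolynomial (Fin N) k ⧸ I) rs

/-- The ideal of `R = S₀/I` generated by the images of `x_e, …, x_{N-1}`. -/
def tailVarsIdeal {N : ℕ} (e : ℕ) (I : Ideal (MvPolynomial (Fin N) k)) :
    Ideal (MvPolynomial (Fin N) k ⧸ I) :=
  Ideal.span {y | ∃ i : Fin N, e ≤ (i : ℕ) ∧ y = Ideal.Quotient.mk I (MvPolynomial.X i)}

/-- The reduction number `r_S(R)` of the Noether normalization by the last variables:
the least `t > 0` with `R_{t+1} = J_{t+1}` for `J = (x_e, …, x_{N-1})R`. -/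
def reductionNumber {N : ℕ} (e : ℕ) (I : Ideal (MvPolynomial (Fin N) k)) : ℕ :=
  sInf {t | 0 < t ∧ quotComponent k I (t + 1) ≤ (tailVarsIdeal k e I).restrictScalars k}

/-- The reduction number `r(R)`: the minimum of `r_J(R₊)` over all minimal reductions `J`
of `R₊`, i.e. ideals generated by `c = dim R` linear forms. -/
def redNumAll {N : ℕ} (I : Ideal (MvPolynomial (Fin N) k)) (c : ℕ) : ℕ :=
  sInf {t | 0 < t ∧ ∃ L : Finset (MvPolynomial (Fin N) k ⧸ I),
    (L : Set (MvPolynomial (Fin N) k ⧸ I)) ⊆ quotComponent k I 1 ∧ L.card = c ∧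
    quotComponent k I (t + 1) ≤
      (Ideal.span (L : Set (MvPolynomial (Fin N) k ⧸ I))).restrictScalars k}

/-- The `k`-algebra map `S = k[x_e, …, x_{N-1}] → R = S₀/I`. -/
def nnMap {N : ℕ} (e : ℕ) (I : Ideal (MvPolynomial (Fin N) k)) :
    MvPolynomial {i : Fin N // e ≤ (i : ℕ)} k →ₐ[k] (MvPolynomial (Fin N) k ⧸ I) :=
  MvPolynomial.aeval fun i => Ideal.Quotient.mk I (MvPolynomial.X i.1)

/-- `S = k[x_e, …, x_{N-1}] → R = S₀/I` is a Noether normalization. -/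
def IsNoetherNormalization {N : ℕ} (e : ℕ) (I : Ideal (MvPolynomial (Fin N) k)) : Prop :=
  Function.Injective (nnMap k e I) ∧ (nnMap k e I).toRingHom.Finite

/-- `μ_S(R) = dim_k R/S₊R`, the minimal number of generators of `R` as an `S`-module. -/
def muS {N : ℕ} (e : ℕ) (I : Ideal (MvPolynomial (Fin N) k)) : ℕ :=
  Module.finrank k ((MvPolynomial (Fin N) k ⧸ I) ⧸ tailVarsIdeal k e I)

/-- total degree of an exponent vector -/
def tdeg {N : ℕ} (a : Fin N →₀ ℕ) : ℕ := a.sum fun _ n => n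

/-- degree reverse lexicographic order with `x_0 > x_1 > ⋯ > x_{N-1}`. -/
def drlLt {N : ℕ} (a b : Fin N →₀ ℕ) : Prop :=
  tdeg a < tdeg b ∨
    (tdeg a = tdeg b ∧ ∃ i : Fin N, b i < a i ∧ ∀ j : Fin N, i < j → a j = b j)

/-- `m` is the leading (largest, w.r.t. degrevlex) exponent of `p`. -/
def IsLeadExp {N : ℕ} (p : MvPolynomial (Fin N) k) (m : Fin N →₀ ℕ) : Prop :=
  m ∈ p.support ∧ ∀ m' ∈ p.support, m' ≠ m → drlLt m' m

/-- The initial ideal of `I` with respect to the degree reverse lexicographic order. -/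
def initialIdeal {N : ℕ} (I : Ideal (MvPolynomial (Fin N) k)) :
    Ideal (MvPolynomial (Fin N) k) :=
  Ideal.span {q | ∃ p ∈ I, ∃ m, IsLeadExp k p m ∧ q = MvPolynomial.monomial m 1}

/-- `p` is homogeneous of degree `d ∈ ℤ` (`0` if `d < 0`). -/
def HomogOfDeg {σ : Type} (p : MvPolynomial σ k) (d : ℤ) : Prop :=
  p = 0 ∨ ∃ m : ℕ, (m : ℤ) = d ∧ p.IsHomogeneous m

/-- A minimal graded free resolution of the graded module `M` (with grading `Mdeg`) over
`A = k[σ]`, recording the graded Betti numbers `β i j = dim_k Tor_i^A(M,k)_{i+j}`: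
the `i`-th free module has `β i j` generators in internal degree `i + j`. -/
structure MinGradedFreeRes (σ : Type) (M : Type) [AddCommGroup M]
    [Module (MvPolynomial σ k) M] [Module k M] (Mdeg : ℤ → Submodule k M) where
  β : ℕ → ℤ → ℕ
  rowFinite : ∀ i, (Function.support (β i)).Finite
  d : ∀ i : ℕ, (((j : ℤ) × Fin (β (i + 1) j)) →₀ MvPolynomial σ k) →ₗ[MvPolynomial σ k]
      ((j : ℤ) × Fin (β i j)) →₀ MvPolynomial σ k
  ε : (((j : ℤ) × Fin (β 0 j)) →₀ MvPolynomial σ k) →ₗ[MvPolynomial σ k] M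
  graded : ∀ (i : ℕ) (j j' : ℤ) (s : Fin (β (i + 1) j)) (s' : Fin (β i j')),
      HomogOfDeg k (d i (Finsupp.single ⟨j, s⟩ 1) ⟨j', s'⟩) (j + 1 - j')
  minimal : ∀ (i : ℕ) (j j' : ℤ) (s : Fin (β (i + 1) j)) (s' : Fin (β i j')),
      j' = j + 1 → d i (Finsupp.single ⟨j, s⟩ 1) ⟨j', s'⟩ = 0
  eps_graded : ∀ (j : ℤ) (s : Fin (β 0 j)), ε (Finsupp.single ⟨j, s⟩ 1) ∈ Mdeg j
  eps_surj : Function.Surjective ε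
  exact0 : Function.Exact (d 0) ε
  exactSeq : ∀ i : ℕ, Function.Exact (d (i + 1)) (d i)

/-- `Mdeg` is a grading of the `k[σ]`-module `M`. -/
def IsGrading (σ : Type) (M : Type) [AddCommGroup M]
    [Module (MvPolynomial σ k) M] [Module k M] (Mdeg : ℤ → Submodule k M) : Prop :=
  (⨆ d, Mdeg d) = ⊤ ∧ iSupIndep Mdeg ∧
    ∀ (i : σ) (d : ℤ), ∀ x ∈ Mdeg d, (MvPolynomial.X i : MvPolynomial σ k) • x ∈ Mdeg (d + 1)

/-- The standard grading on `S₀/I` (indexed by `ℤ`). -/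
def quotDeg {N : ℕ} (I : Ideal (MvPolynomial (Fin N) k)) (d : ℤ) :
    Submodule k (MvPolynomial (Fin N) k ⧸ I) :=
  if 0 ≤ d then quotComponent k I d.toNat else ⊥

/-- The standard grading on a homogeneous ideal `I ⊆ S₀` (indexed by `ℤ`). -/
def idealDeg {N : ℕ} (I : Ideal (MvPolynomial (Fin N) k)) (d : ℤ) :
    Submodule k ↥I :=
  if 0 ≤ d then
    Submodule.comap ((I.subtype).restrictScalars k)
      (MvPolynomial.homogeneousSubmodule (Fin N) k d.toNat)
  else ⊥

/-- `χ_m = Σ_{j=0}^m (-1)^j β_{m-j,j}`. -/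
def chiOf (β : ℕ → ℤ → ℕ) (m : ℤ) : ℤ :=
  if m < 0 then 0
  else ∑ j ∈ Finset.range (m.toNat + 1), (-1 : ℤ) ^ j * (β (m.toNat - j) (j : ℤ) : ℤ)

/-- projective dimension read off from a minimal resolution's Betti table -/
def pdOf (β : ℕ → ℤ → ℕ) : ℕ∞ :=
  ⨆ i : {i : ℕ // ∃ j, β i j ≠ 0}, ((i : ℕ) : ℕ∞)

/-- index type of the variables `x_t, …, x_{N-1}` -/
def tailIdx (N t : ℕ) := {i : Fin N // t ≤ (i : ℕ)}


/-- The `S = k[x_e,…,x_{N-1}]`-module structure on `R = S₀/I` via `nnMap`. -/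
def nnModule {N : ℕ} (e : ℕ) (I : Ideal (MvPolynomial (Fin N) k)) :
    Module (MvPolynomial {i : Fin N // e ≤ (i : ℕ)} k) (MvPolynomial (Fin N) k ⧸ I) :=
  Module.compHom _ (nnMap k e I).toRingHom

/-- The underlying set of the `S`-submodule of `R = S₀/I` spanned by `s`. -/
def nnSpan {N : ℕ} (e : ℕ) (I : Ideal (MvPolynomial (Fin N) k))
    (s : Set (MvPolynomial (Fin N) k ⧸ I)) : Set (MvPolynomial (Fin N) k ⧸ I) :=
  letI := nnModule k e I
  (Submodule.span (MvPolynomial {i : Fin N // e ≤ (i : ℕ)} k) s : Set _)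

/-- The truncated ideal `(I)_{≥ r+1}`, generated by the homogeneous elements of `I`
of degree at least `r + 1`. -/
def truncIdeal {N : ℕ} (I : Ideal (MvPolynomial (Fin N) k)) (r : ℕ) :
    Ideal (MvPolynomial (Fin N) k) :=
  Ideal.span {f | f ∈ I ∧ ∃ d : ℕ, r + 1 ≤ d ∧ f.IsHomogeneous d}

end Paper

end


noncomputable section
namespace BettiAux
open MvPolynomial

variable {k : Type} [Field k] {σ : Type}

/-- homogeneous of integer degree, via supports -/
def HZ (p : MvPolynomial σ k) (m : ℤ) : Prop := ∀ a ∈ p.support, (a.degree : ℤ) = m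

/-- integer-indexed homogeneous component -/
def hcZ (m : ℤ) : MvPolynomial σ k →ₗ[k] MvPolynomial σ k :=
  if 0 ≤ m then homogeneousComponent m.toNat else 0

lemma coeff_hcZ (m : ℤ) (p : MvPolynomial σ k) (a : σ →₀ ℕ) :
    coeff a (hcZ m p) = if (a.degree : ℤ) = m then coeff a p else 0 := by
  unfold hcZ
  split_ifs with h1 h2 h2
  · rw [coeff_homogeneousComponent, if_pos (by omega)]
  · rw [coeff_homogeneousComponent, if_neg (by omega)]
  · omega
  · simp

lemma HZ_hcZ (m : ℤ) (p : MvPolynomial σ k) : HZ (hcZ m p) m := by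
  intro a ha
  rw [mem_support_iff, coeff_hcZ] at ha
  by_contra h
  simp [h] at ha

lemma hcZ_eq_self {m : ℤ} {p : MvPolynomial σ k} (h : HZ p m) : hcZ m p = p := by
  ext a
  rw [coeff_hcZ]
  split_ifs with h1
  · rfl
  · by_contra h2
    exact h1 (h a (mem_support_iff.mpr (Ne.symm h2)))

lemma HZ_iff {m : ℤ} {p : MvPolynomial σ k} : HZ p m ↔ hcZ m p = p :=
  ⟨hcZ_eq_self, fun h => h ▸ HZ_hcZ m p⟩

lemma HZ_zero (m : ℤ) : HZ (0 : MvPolynomial σ k) m := by intro a; simp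

lemma HZ_neg_eq_zero {m : ℤ} (hm : m < 0) {p : MvPolynomial σ k} (h : HZ p m) : p = 0 := by
  by_contra h0
  obtain ⟨a, ha⟩ := (MvPolynomial.support_nonempty.mpr h0)
  have := h a ha
  omega

lemma HZ_of_isHomogeneous {m : ℕ} {p : MvPolynomial σ k} (h : p.IsHomogeneous m) : HZ p m := by
  intro a ha
  have h1 : a.degree = m := by
    rw [Finsupp.degree_eq_weight_one]; exact h (mem_support_iff.mp ha)
  exact_mod_cast h1

lemma HZ_zero_eq_C {p : MvPolynomial σ k} (h : HZ p 0) : p = C (constantCoeff p) := by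
  classical
  ext a
  rw [coeff_C]
  split_ifs with h1
  · subst h1; rfl
  · by_contra h2
    have := h a (mem_support_iff.mpr h2)
    have h3 : a.degree = 0 := by exact_mod_cast this
    rw [Finsupp.degree_eq_zero_iff] at h3
    exact h1 h3.symm

lemma hcZ_mul {m δ : ℤ} {p q : MvPolynomial σ k} (hq : HZ q δ) :
    hcZ (m + δ) (p * q) = hcZ m p * q := by
  classical
  ext a
  rw [coeff_hcZ, coeff_mul, coeff_mul]
  simp only [coeff_hcZ]
  have key : ∀ x ∈ Finset.HasAntidiagonal.antidiagonal a, coeff x.2 q ≠ 0 →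
      ((a.degree : ℤ) = m + δ ↔ (x.1.degree : ℤ) = m) := by
    intro x hx hx2
    have h1 := hq x.2 (mem_support_iff.mpr hx2)
    rw [Finset.HasAntidiagonal.mem_antidiagonal] at hx
    rw [← hx, map_add]
    push_cast
    omega
  split_ifs with h
  · refine Finset.sum_congr rfl fun x hx => ?_
    by_cases hx2 : coeff x.2 q = 0
    · simp [hx2]
    · rw [if_pos ((key x hx hx2).mp h)]
  · symm
    refine Finset.sum_eq_zero fun x hx => ?_
    by_cases hx2 : coeff x.2 q = 0
    · simp [hx2]
    · rw [if_neg (fun h' => h ((key x hx hx2).mpr h'))]; simp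

lemma HZ_mul {m δ : ℤ} {p q : MvPolynomial σ k} (hp : HZ p m) (hq : HZ q δ) :
    HZ (p * q) (m + δ) := by
  rw [HZ_iff, hcZ_mul hq, hcZ_eq_self hp]

lemma HZ_add {m : ℤ} {p q : MvPolynomial σ k} (hp : HZ p m) (hq : HZ q m) :
    HZ (p + q) m := by
  rw [HZ_iff] at *
  rw [map_add, hp, hq]

lemma HZ_sub {m : ℤ} {p q : MvPolynomial σ k} (hp : HZ p m) (hq : HZ q m) :
    HZ (p - q) m := by
  rw [HZ_iff] at *
  rw [map_sub, hp, hq]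

lemma HZ_X (z : σ) : HZ (X z : MvPolynomial σ k) 1 := by
  have := HZ_of_isHomogeneous (isHomogeneous_X k z)
  exact_mod_cast this

/-- ideal generated by a set of variables -/
abbrev idZ (k : Type) [Field k] (Z : Set σ) : Ideal (MvPolynomial σ k) := Ideal.span (X '' Z)

lemma hcZ_mem_idZ {Z : Set σ} {p : MvPolynomial σ k} (h : p ∈ idZ k Z) (m : ℤ) :
    hcZ m p ∈ idZ k Z := by
  rw [mem_ideal_span_X_image] at *
  intro a ha
  apply h
  rw [mem_support_iff, coeff_hcZ] at ha
  rw [mem_support_iff]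
  intro h0
  simp [h0] at ha

lemma idZ_nzd {Z : Set σ} {z : σ} (hz : z ∉ Z) {p : MvPolynomial σ k}
    (h : X z * p ∈ idZ k Z) : p ∈ idZ k Z := by
  classical
  rw [mem_ideal_span_X_image] at *
  intro a ha
  obtain ⟨i, hi, hi2⟩ := h (Finsupp.single z 1 + a) (by
    rw [mem_support_iff, coeff_X_mul]; exact mem_support_iff.mp ha)
  refine ⟨i, hi, ?_⟩
  have : i ≠ z := by rintro rfl; exact hz hi
  simpa [Finsupp.single_apply, this.symm] using hi2

lemma idZ_insert {Z : Set σ} {z : σ} {p : MvPolynomial σ k} (h : p ∈ idZ k (insert z Z)) :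
    ∃ a, p - X z * a ∈ idZ k Z := by
  rw [idZ, Set.image_insert_eq, Ideal.mem_span_insert] at h
  obtain ⟨a, q, hq, rfl⟩ := h
  exact ⟨a, by simpa [mul_comm] using hq⟩

lemma idZ_insert_hom {Z : Set σ} {z : σ} {p : MvPolynomial σ k} (h : p ∈ idZ k (insert z Z))
    {m : ℤ} (hp : HZ p m) :
    ∃ a, HZ a (m - 1) ∧ p - X z * a ∈ idZ k Z := by
  obtain ⟨a, ha⟩ := idZ_insert h
  refine ⟨hcZ (m - 1) a, HZ_hcZ _ _, ?_⟩
  have := hcZ_mem_idZ ha m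
  rw [map_sub, hcZ_eq_self hp, mul_comm (X z)] at this
  have h2 := hcZ_mul (m := m - 1) (p := a) (HZ_X (k := k) z)
  rw [sub_add_cancel] at h2
  rwa [h2, mul_comm] at this

lemma idZ_univ {p : MvPolynomial σ k} : p ∈ idZ k Set.univ ↔ constantCoeff p = 0 := by
  rw [mem_ideal_span_X_image]
  constructor
  · intro h
    by_contra h0
    obtain ⟨i, _, hi⟩ := h 0 (mem_support_iff.mpr h0)
    exact hi rfl
  · intro h a ha
    by_contra h1
    push Not at h1
    have : a = 0 := by ext i; exact h1 i (Set.mem_univ i)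
    subst this
    exact (mem_support_iff.mp ha) h

/-- graded complexes of free modules, with minimal differentials, exact in positive spots -/
structure GC (k : Type) [Field k] (σ : Type) where
  B : ℕ → Type
  fin : ∀ i, Finite (B i)
  deg : ∀ i, B i → ℤ
  D : ∀ i, (B (i + 1) →₀ MvPolynomial σ k) →ₗ[MvPolynomial σ k] (B i →₀ MvPolynomial σ k)
  hom : ∀ i b b', HZ (D i (Finsupp.single b 1) b') (deg (i + 1) b - deg i b')
  min : ∀ i b b', deg (i + 1) b = deg i b' → D i (Finsupp.single b 1) b' = 0
  exact : ∀ i, Function.Exact (D (i + 1)) (D i)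

namespace GC

variable (G : GC k σ)

instance (i : ℕ) : Finite (G.B i) := G.fin i
instance (i : ℕ) : Fintype (G.B i) := Fintype.ofFinite _

lemma D_apply (i : ℕ) (c : G.B (i + 1) →₀ MvPolynomial σ k) (b' : G.B i) :
    G.D i c b' = ∑ b, c b * G.D i (Finsupp.single b 1) b' := by
  classical
  have h : c = ∑ b, c b • Finsupp.single b (1 : MvPolynomial σ k) := by
    ext1 x
    rw [Finsupp.finsetSum_apply]
    simp [Finsupp.single_apply]
  conv_lhs => rw [h]
  rw [map_sum, Finsupp.finsetSum_apply]
  simp only [map_smul, Finsupp.smul_apply, smul_eq_mul]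

/-- homogeneous element of degree `d` -/
def Hom (i : ℕ) (d : ℤ) (c : G.B i →₀ MvPolynomial σ k) : Prop := ∀ b, HZ (c b) (d - G.deg i b)

/-- projection to degree `d` -/
def proj (i : ℕ) (d : ℤ) (c : G.B i →₀ MvPolynomial σ k) : G.B i →₀ MvPolynomial σ k :=
  Finsupp.equivFunOnFinite.symm fun b => hcZ (d - G.deg i b) (c b)

lemma proj_apply (i : ℕ) (d : ℤ) (c : G.B i →₀ MvPolynomial σ k) (b) :
    G.proj i d c b = hcZ (d - G.deg i b) (c b) := rfl

lemma hom_proj (i : ℕ) (d : ℤ) (c : G.B i →₀ MvPolynomial σ k) : G.Hom i d (G.proj i d c) :=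
  fun _ => HZ_hcZ _ _

lemma proj_eq_self {i : ℕ} {d : ℤ} {c : G.B i →₀ MvPolynomial σ k} (h : G.Hom i d c) :
    G.proj i d c = c := by
  ext1 b
  exact hcZ_eq_self (h b)

lemma D_proj (i : ℕ) (d : ℤ) (c : G.B (i + 1) →₀ MvPolynomial σ k) :
    G.D i (G.proj (i + 1) d c) = G.proj i d (G.D i c) := by
  ext1 b'
  rw [D_apply, proj_apply, D_apply, map_sum]
  refine Finset.sum_congr rfl fun b _ => ?_
  rw [proj_apply, ← hcZ_mul (G.hom i b b')]
  congr 2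
  ring

lemma hom_D {i : ℕ} {d : ℤ} {c : G.B (i + 1) →₀ MvPolynomial σ k} (h : G.Hom (i + 1) d c) :
    G.Hom i d (G.D i c) := by
  have := G.D_proj i d c
  rw [G.proj_eq_self h] at this
  rw [this]
  exact G.hom_proj i d _

lemma exact_hom {i : ℕ} {d : ℤ} {c : G.B (i + 1) →₀ MvPolynomial σ k} (h : G.Hom (i + 1) d c)
    (h0 : G.D i c = 0) : ∃ b, G.Hom (i + 2) d b ∧ G.D (i + 1) b = c := by
  obtain ⟨b, hb⟩ := (G.exact i c).mp h0
  refine ⟨G.proj (i + 2) d b, G.hom_proj _ _ _, ?_⟩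
  rw [D_proj, hb, G.proj_eq_self h]

lemma hom_single (i : ℕ) (b : G.B i) : G.Hom i (G.deg i b) (Finsupp.single b 1) := by
  classical
  intro b'
  rw [Finsupp.single_apply]
  split_ifs with h
  · subst h
    rw [sub_self]
    have := HZ_of_isHomogeneous (isHomogeneous_one σ k)
    exact_mod_cast this
  · exact HZ_zero _

lemma constCoeff_D (i : ℕ) (c : G.B (i + 1) →₀ MvPolynomial σ k) (b' : G.B i) :
    constantCoeff (G.D i c b') = 0 := by
  rw [D_apply, map_sum]
  refine Finset.sum_eq_zero fun b _ => ?_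
  rw [map_mul]
  convert mul_zero _
  by_contra h
  have h1 := G.hom i b b' 0 (mem_support_iff.mpr h)
  have h2 := G.min i b b' (by simp at h1; omega)
  rw [h2] at h
  simp at h

lemma D_comp (i : ℕ) (c : G.B (i + 2) →₀ MvPolynomial σ k) : G.D i (G.D (i + 1) c) = 0 :=
  (G.exact i _).mpr ⟨c, rfl⟩

/-- a cycle has vanishing constant coefficients -/
lemma constCoeff_of_cycle (i : ℕ) (c : G.B (i + 1) →₀ MvPolynomial σ k) (h : G.D i c = 0) (b) :
    constantCoeff (c b) = 0 := by
  obtain ⟨x, rfl⟩ := (G.exact i c).mp h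
  exact G.constCoeff_D _ _ _

lemma D_single_ne (i : ℕ) (b : G.B (i + 1)) : G.D i (Finsupp.single b 1) ≠ 0 := by
  intro h
  have := G.constCoeff_of_cycle i _ h b
  simp at this

/-- vanishing of homology modulo variables -/
def P (i : ℕ) (d : ℤ) (Z : Set σ) : Prop :=
  ∀ c, G.Hom (i + 1) d c → (∀ b', G.D i c b' ∈ idZ k Z) →
    ∃ x, ∀ b', (c - G.D (i + 1) x) b' ∈ idZ k Z

def P0 (d : ℤ) (Z : Set σ) : Prop :=
  ∀ c, G.Hom 0 d c → ∃ x, ∀ b', (c - G.D 0 x) b' ∈ idZ k Z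

def Q (i : ℕ) (d : ℤ) (Z : Set σ) (z : σ) : Prop :=
  ∀ a, G.Hom i d a → (∃ c, ∀ b', ((X z : MvPolynomial σ k) • a - G.D i c) b' ∈ idZ k Z) →
    ∃ x, ∀ b', (a - G.D i x) b' ∈ idZ k Z

lemma D_mem_idZ {Z : Set σ} (i : ℕ) {c : G.B (i + 1) →₀ MvPolynomial σ k}
    (h : ∀ b, c b ∈ idZ k Z) (b') : G.D i c b' ∈ idZ k Z := by
  rw [D_apply]
  exact Ideal.sum_mem _ fun b _ => Ideal.mul_mem_right _ _ (h b)

lemma Q_zero {d : ℤ} {Z : Set σ} {z : σ} (h : G.P0 d Z) : G.Q 0 d Z z :=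
  fun a ha _ => h a ha

lemma Q_succ {i : ℕ} {d : ℤ} {Z : Set σ} {z : σ} (hz : z ∉ Z) (h : G.P i d Z) :
    G.Q (i + 1) d Z z := by
  rintro a ha ⟨c, hc⟩
  refine h a ha fun b' => idZ_nzd hz ?_
  have := G.D_mem_idZ i hc b'
  rw [map_sub, G.D_comp, sub_zero, map_smul] at this
  simpa using this

lemma P_empty (i : ℕ) (d : ℤ) : G.P i d ∅ := by
  intro c _ h
  have h0 : G.D i c = 0 := by
    ext1 b'
    have := h b'
    simpa [idZ] using this
  obtain ⟨x, rfl⟩ := (G.exact i c).mp h0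
  exact ⟨x, fun b' => by simp⟩

lemma P_step {i : ℕ} {d : ℤ} {Z : Set σ} {z : σ} (h : G.P i d Z) (hQ : G.Q i (d - 1) Z z) :
    G.P i d (insert z Z) := by
  intro c hc hD
  have h1 := fun b' => idZ_insert_hom (hD b') (G.hom_D hc b')
  choose a ha ha2 using h1
  let a' : G.B i →₀ MvPolynomial σ k := Finsupp.equivFunOnFinite.symm a
  have haa : ∀ b, a' b = a b := fun _ => rfl
  obtain ⟨x, hx⟩ := hQ a' (fun b => by
      rw [haa]; convert ha b using 1; ring) ⟨c, fun b' => by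
      rw [← neg_mem_iff]
      simpa [haa] using ha2 b'⟩
  -- replace `x` by its homogeneous part
  have hx' : ∀ b', (a' - G.D i (G.proj (i + 1) (d - 1) x)) b' ∈ idZ k Z := by
    intro b'
    have := hcZ_mem_idZ (hx b') (d - 1 - G.deg i b')
    rw [D_proj]
    rw [Finsupp.sub_apply, map_sub] at this
    rw [Finsupp.sub_apply, proj_apply]
    convert this using 2
    rw [hcZ_eq_self]
    rw [haa]; convert ha b' using 1; ring
  set w := G.proj (i + 1) (d - 1) x with hw
  have hwh : G.Hom (i + 1) (d - 1) w := G.hom_proj _ _ _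
  obtain ⟨y, hy⟩ := h (c - (X z : MvPolynomial σ k) • w) (fun b => by
      rw [Finsupp.sub_apply, Finsupp.smul_apply, smul_eq_mul]
      refine HZ_sub (hc b) ?_
      convert HZ_mul (HZ_X z) (hwh b) using 1
      ring) (fun b' => by
      have e : G.D i (c - (X z : MvPolynomial σ k) • w) b' =
          (G.D i c b' - X z * a b') + X z * (a' - G.D i w) b' := by
        rw [map_sub, map_smul, Finsupp.sub_apply, Finsupp.sub_apply, Finsupp.smul_apply,
          smul_eq_mul, haa]
        ring
      rw [e]
      exact Ideal.add_mem _ (ha2 b') (Ideal.mul_mem_left _ _ (hx' b')))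
  refine ⟨y, fun b' => ?_⟩
  have e : (c - G.D (i + 1) y) b' =
      (c - (X z : MvPolynomial σ k) • w - G.D (i + 1) y) b' + w b' * X z := by
    simp only [Finsupp.sub_apply, Finsupp.smul_apply, smul_eq_mul]
    ring
  rw [e]
  refine Ideal.add_mem _ (Ideal.span_mono (Set.image_mono (Set.subset_insert _ _)) (hy b')) ?_
  exact Ideal.mul_mem_left _ _ (Ideal.subset_span ⟨z, Set.mem_insert _ _, rfl⟩)

lemma P0_mono {d : ℤ} {Z Z' : Set σ} (hZ : Z ⊆ Z') (h : G.P0 d Z) : G.P0 d Z' := by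
  intro c hc
  obtain ⟨x, hx⟩ := h c hc
  exact ⟨x, fun b' => Ideal.span_mono (Set.image_mono hZ) (hx b')⟩

lemma P_Y (Y : Finset σ)
    (hQ : ∀ (Z : Finset σ) (z : σ), Z ⊆ Y → z ∈ Y → z ∉ Z → ∀ d, G.Q 0 d (Z : Set σ) z) :
    ∀ Z : Finset σ, Z ⊆ Y → ∀ i d, G.P i d (Z : Set σ) := by
  classical
  intro Z
  induction Z using Finset.induction_on with
  | empty => intro _ i d; simpa using G.P_empty i d
  | insert z Z hz ih =>
    intro hZ i d
    have hZ' : Z ⊆ Y := (Finset.subset_insert _ _).trans hZ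
    rw [Finset.coe_insert]
    refine G.P_step (ih hZ' i d) ?_
    cases i with
    | zero => exact hQ Z z hZ' (hZ (Finset.mem_insert_self _ _)) hz _
    | succ i => exact G.Q_succ (by simpa using hz) (ih hZ' i _)

lemma P_X (Y : Finset σ) (r : ℤ)
    (hQ : ∀ (Z : Finset σ) (z : σ), Z ⊆ Y → z ∈ Y → z ∉ Z → ∀ d, G.Q 0 d (Z : Set σ) z)
    (h0 : ∀ d, r < d → G.P0 d (Y : Set σ)) :
    ∀ W : Finset σ, Disjoint W Y → ∀ (i : ℕ) (d : ℤ), r + 1 + i < d →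
      G.P i d ((W : Set σ) ∪ (Y : Set σ)) := by
  classical
  intro W
  induction W using Finset.induction_on with
  | empty => intro _ i d _; simpa using G.P_Y Y hQ Y subset_rfl i d
  | insert z W hz ih =>
    intro hW i d hd
    rw [Finset.disjoint_insert_left] at hW
    rw [Finset.coe_insert, Set.insert_union]
    refine G.P_step (ih hW.2 i d hd) ?_
    cases i with
    | zero =>
      exact G.Q_zero (G.P0_mono Set.subset_union_right (h0 _ (by simp at hd; omega)))
    | succ i =>
      refine G.Q_succ ?_ (ih hW.2 i _ (by push_cast at hd; omega))
      simp [hz, hW.1]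

/-- generators in homological spot `i+1` have degree at most `r+1+i` -/
theorem deg_le [Fintype σ] (Y : Finset σ) (r : ℤ)
    (hQ : ∀ (Z : Finset σ) (z : σ), Z ⊆ Y → z ∈ Y → z ∉ Z → ∀ d, G.Q 0 d (Z : Set σ) z)
    (h0 : ∀ d, r < d → G.P0 d (Y : Set σ)) (i : ℕ) (b : G.B (i + 1)) :
    G.deg (i + 1) b ≤ r + 1 + i := by
  classical
  by_contra hlt
  push Not at hlt
  have h := G.P_X Y r hQ h0 Yᶜ disjoint_compl_left i _ hlt (Finsupp.single b 1)
    (G.hom_single _ b)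
  have hu : ((Yᶜ : Finset σ) : Set σ) ∪ (Y : Set σ) = Set.univ := by
    ext x; simp
  rw [hu] at h
  obtain ⟨x, hx⟩ := h fun b' => idZ_univ.mpr (G.constCoeff_D _ _ _)
  have := idZ_univ.mp (hx b)
  rw [Finsupp.sub_apply, map_sub, G.constCoeff_D] at this
  simp at this

end GC
end BettiAux
end

noncomputable section
namespace BettiAux
open MvPolynomial

variable {k : Type} [Field k] {σ : Type}

lemma exists_filter (s : Set (σ →₀ ℕ)) (a : MvPolynomial σ k) :
    ∃ p : MvPolynomial σ k, (∀ m ∈ s, coeff m p = coeff m a) ∧ (∀ m ∉ s, coeff m p = 0) := by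
  classical
  refine ⟨∑ m ∈ a.support with m ∈ s, monomial m (coeff m a), ?_, ?_⟩
  · intro m hm
    rw [coeff_sum]
    simp only [coeff_monomial]
    rw [Finset.sum_ite_eq']
    split_ifs with h
    · rfl
    · simp [hm] at h
      exact h.symm
  · intro m hm
    rw [coeff_sum]
    simp only [coeff_monomial]
    rw [Finset.sum_ite_eq', if_neg]
    simp [hm]

namespace GC
variable (G : GC k σ)

/-- the complex augments to the monomial ideal with exponent set `s` -/
structure Aug (s : Set (σ →₀ ℕ)) where
  o : G.B 0
  uniq : ∀ b, b = o
  deg0 : G.deg 0 o = 0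
  mem : ∀ p : MvPolynomial σ k, (∃ c, G.D 0 c o = p) ↔ ∀ m ∈ p.support, m ∈ s

variable {G} {s : Set (σ →₀ ℕ)}

lemma Aug.ext0 (A : G.Aug s) {c c' : G.B 0 →₀ MvPolynomial σ k} (h : c A.o = c' A.o) : c = c' := by
  ext1 b
  rw [A.uniq b, h]

lemma Aug.hQ (A : G.Aug s) (Y : Finset σ)
    (hs : ∀ m, ∀ y ∈ Y, Finsupp.single y 1 + m ∈ s → m ∈ s) (Z : Finset σ) (z : σ)
    (hz : z ∈ Y) (hzZ : z ∉ Z) (d : ℤ) : G.Q 0 d (Z : Set σ) z := by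
  classical
  rintro a - ⟨c, hc⟩
  obtain ⟨p, hp1, hp2⟩ := exists_filter s (a A.o)
  obtain ⟨x, hx⟩ := (A.mem p).mpr (by
    intro m hm
    by_contra h
    exact (mem_support_iff.mp hm) (hp2 m h))
  refine ⟨x, fun b' => ?_⟩
  rw [A.uniq b', Finsupp.sub_apply, hx, mem_ideal_span_X_image]
  intro m hm
  rw [mem_support_iff, coeff_sub] at hm
  have hms : m ∉ s := fun h => hm (by rw [hp1 m h, sub_self])
  rw [hp2 m hms, sub_zero] at hm
  have h1 := hc A.o
  rw [Finsupp.sub_apply, Finsupp.smul_apply, smul_eq_mul, mem_ideal_span_X_image] at h1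
  have h2 := (A.mem (G.D 0 c A.o)).mp ⟨c, rfl⟩ (Finsupp.single z 1 + m)
  obtain ⟨i, hi, hi2⟩ := h1 (Finsupp.single z 1 + m) (by
    rw [mem_support_iff, coeff_sub, coeff_X_mul]
    have : coeff (Finsupp.single z 1 + m) (G.D 0 c A.o) = 0 := by
      by_contra h
      exact hms (hs m z hz (h2 (mem_support_iff.mpr h)))
    rw [this, sub_zero]
    exact hm)
  refine ⟨i, hi, ?_⟩
  have : i ≠ z := by rintro rfl; exact hzZ hi
  simpa [Finsupp.single_apply, this.symm] using hi2

lemma Aug.hP0 (A : G.Aug s) (Y : Finset σ) (r : ℕ)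
    (hs : ∀ m : σ →₀ ℕ, r < m.degree → m ∈ s ∨ ∃ y ∈ Y, m y ≠ 0) (d : ℤ) (hd : (r : ℤ) < d) :
    G.P0 d (Y : Set σ) := by
  intro a ha
  obtain ⟨p, hp1, hp2⟩ := exists_filter s (a A.o)
  obtain ⟨x, hx⟩ := (A.mem p).mpr (by
    intro m hm
    by_contra h
    exact (mem_support_iff.mp hm) (hp2 m h))
  refine ⟨x, fun b' => ?_⟩
  rw [A.uniq b', Finsupp.sub_apply, hx, mem_ideal_span_X_image]
  intro m hm
  rw [mem_support_iff, coeff_sub] at hm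
  have hms : m ∉ s := fun h => hm (by rw [hp1 m h, sub_self])
  rw [hp2 m hms, sub_zero] at hm
  have h1 := ha A.o m (mem_support_iff.mpr hm)
  rw [A.deg0] at h1
  rcases hs m (by omega) with h | h
  · exact absurd h hms
  · exact h

/-- lower bound, spot 1 -/
lemma Aug.deg1 (A : G.Aug s) (r : ℕ) (hs : ∀ m ∈ s, r ≤ m.degree) (b : G.B 1) :
    (r : ℤ) ≤ G.deg 1 b := by
  by_contra h
  push Not at h
  refine G.D_single_ne 0 b (A.ext0 ?_)
  rw [Finsupp.zero_apply]
  by_contra h0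
  obtain ⟨a, ha⟩ := support_nonempty.mpr h0
  have h1 := G.hom 0 b A.o a ha
  have h2 := hs a ((A.mem _).mp ⟨_, rfl⟩ a ha)
  rw [A.deg0] at h1
  change _ = G.deg 1 b - 0 at h1
  omega

lemma entry_zero {i : ℕ} {b : G.B (i + 1)} {b' : G.B i} (h : G.deg (i + 1) b ≤ G.deg i b') :
    G.D i (Finsupp.single b 1) b' = 0 := by
  rcases h.lt_or_eq with h | h
  · exact HZ_neg_eq_zero (by omega) (G.hom i b b')
  · exact G.min i b b' h

lemma Aug.D_single_r (A : G.Aug s) {r : ℕ} {mu : σ →₀ ℕ}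
    (hs : ∀ m ∈ s, m.degree = r → m = mu) {b : G.B 1} (hb : G.deg 1 b = r) :
    G.D 0 (Finsupp.single b 1) A.o =
      monomial mu (coeff mu (G.D 0 (Finsupp.single b 1) A.o)) := by
  classical
  ext a
  rw [coeff_monomial]
  split_ifs with h
  · rw [h]
  · by_contra h0
    have ha := mem_support_iff.mpr h0
    have h1 := G.hom 0 b A.o a ha
    rw [A.deg0, hb] at h1
    exact h (hs a ((A.mem _).mp ⟨_, rfl⟩ a ha) (by omega)).symm

lemma Aug.unique1 (A : G.Aug s) {r : ℕ} {mu : σ →₀ ℕ}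
    (hs : ∀ m ∈ s, m.degree = r → m = mu) {b b' : G.B 1} (hb : G.deg 1 b = r)
    (hb' : G.deg 1 b' = r) : b = b' := by
  classical
  by_contra hne
  set γ := coeff mu (G.D 0 (Finsupp.single b 1) A.o) with hγ
  set γ' := coeff mu (G.D 0 (Finsupp.single b' 1) A.o) with hγ'
  have e := A.D_single_r hs hb
  have e' := A.D_single_r hs hb'
  rw [← hγ] at e
  rw [← hγ'] at e'
  have h0 : γ' ≠ 0 := by
    intro h
    refine G.D_single_ne 0 b' (A.ext0 ?_)
    rw [e', h]; simp
  have := G.constCoeff_of_cycle 0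
    ((C γ' : MvPolynomial σ k) • Finsupp.single b (1 : MvPolynomial σ k) -
      (C γ : MvPolynomial σ k) • Finsupp.single b' (1 : MvPolynomial σ k)) (by
      apply A.ext0
      rw [map_sub, LinearMap.map_smul, LinearMap.map_smul, Finsupp.sub_apply, Finsupp.smul_apply,
        Finsupp.smul_apply, e, e', smul_eq_mul, smul_eq_mul, C_mul_monomial, C_mul_monomial,
        mul_comm, sub_self]
      rfl) b
  rw [Finsupp.sub_apply, Finsupp.smul_apply, Finsupp.smul_apply, Finsupp.single_eq_same,
    Finsupp.single_apply, if_neg (Ne.symm hne)] at this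
  simp at this
  exact h0 this

lemma Aug.exists1 (A : G.Aug s) {r : ℕ} {mu : σ →₀ ℕ} (hmu : mu ∈ s) (hmud : mu.degree = r)
    (hs : ∀ m ∈ s, r ≤ m.degree) : ∃ b : G.B 1, G.deg 1 b = r := by
  classical
  by_contra h
  push Not at h
  obtain ⟨c, hc⟩ := (A.mem (monomial mu (1 : k))).mpr (by
    intro m hm
    rw [support_monomial] at hm
    simp at hm
    rwa [hm])
  have h1 : G.proj 1 r c = 0 := by
    ext1 b
    refine HZ_neg_eq_zero ?_ (G.hom_proj 1 r c b)
    have := A.deg1 r hs b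
    have := h b
    omega
  have h2 := G.D_proj 0 r c
  rw [h1, map_zero] at h2
  have h3 := DFunLike.congr_fun h2 A.o
  rw [proj_apply, hc, A.deg0, sub_zero, Finsupp.zero_apply] at h3
  have h4 := congrArg (coeff mu) h3
  rw [coeff_hcZ, if_pos (by exact_mod_cast hmud)] at h4
  simp at h4

lemma Aug.deg2 (A : G.Aug s) {r : ℕ} {mu : σ →₀ ℕ}
    (hs : ∀ m ∈ s, m.degree = r → m = mu) (hs' : ∀ m ∈ s, r ≤ m.degree) (b : G.B 2) :
    (r : ℤ) + 2 ≤ G.deg 2 b := by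
  classical
  by_contra h
  push Not at h
  have h0 := G.D_single_ne 1 b
  obtain ⟨b0, hb0⟩ : ∃ b0, G.D 1 (Finsupp.single b 1) b0 ≠ 0 := by
    by_contra h1
    push Not at h1
    exact h0 (Finsupp.ext h1)
  have small : ∀ b', G.D 1 (Finsupp.single b 1) b' ≠ 0 → G.deg 1 b' = r := by
    intro b' hb'
    have h1 := A.deg1 r hs' b'
    by_contra h2
    exact hb' (G.entry_zero (by
      change G.deg 2 b ≤ G.deg 1 b'
      omega))
  have e : G.D 1 (Finsupp.single b 1) =
      G.D 1 (Finsupp.single b 1) b0 • Finsupp.single b0 (1 : MvPolynomial σ k) := by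
    ext1 b'
    by_cases hb' : b' = b0
    · subst hb'; simp
    · have : G.D 1 (Finsupp.single b 1) b' = 0 := by
        by_contra h1
        exact hb' (A.unique1 hs (small b' h1) (small b0 hb0))
      rw [this]
      simp [Ne.symm hb']
  have h1 := G.D_comp 0 (Finsupp.single b 1)
  change G.D 0 (G.D 1 (Finsupp.single b 1)) = 0 at h1
  rw [e, LinearMap.map_smul] at h1
  refine G.D_single_ne 0 b0 (A.ext0 ?_)
  have h2 := DFunLike.congr_fun h1 A.o
  rw [Finsupp.smul_apply, smul_eq_mul, Finsupp.zero_apply, mul_eq_zero] at h2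
  exact h2.resolve_left hb0

lemma Aug.deg_ge (A : G.Aug s) {r : ℕ} {mu : σ →₀ ℕ}
    (hs : ∀ m ∈ s, m.degree = r → m = mu) (hs' : ∀ m ∈ s, r ≤ m.degree) (i : ℕ) :
    ∀ b : G.B (i + 2), (r : ℤ) + 2 + i ≤ G.deg (i + 2) b := by
  induction i with
  | zero => intro b; simpa using A.deg2 hs hs' b
  | succ i ih =>
    intro b
    by_contra h
    push Not at h
    refine G.D_single_ne (i + 2) b (Finsupp.ext fun b' => ?_)
    refine G.entry_zero ?_
    have := ih b'
    push_cast at h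
    change G.deg (i + 3) b ≤ _
    change G.deg (i + 3) b < _ at h
    omega

/-! ### dimensions -/

/-- homogeneous polynomials of degree `d` -/
abbrev hz (k : Type) [Field k] (σ : Type) (d : ℤ) : Submodule k (MvPolynomial σ k) :=
  restrictSupport k {a : σ →₀ ℕ | (a.degree : ℤ) = d}

lemma mem_hz {d : ℤ} {p : MvPolynomial σ k} : p ∈ hz k σ d ↔ HZ p d := by
  rw [mem_restrictSupport_iff]; rfl

lemma finrank_restrictSupport (t : Set (σ →₀ ℕ)) :
    Module.finrank k (restrictSupport k t) = Nat.card t :=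
  Module.finrank_eq_nat_card_basis (basisRestrictSupport k t)

lemma finite_deg [Finite σ] (d : ℕ) : {a : σ →₀ ℕ | a.degree = d}.Finite := by
  classical
  have := Fintype.ofFinite σ
  refine Set.Finite.subset (Finset.finite_toSet (Finset.finsuppAntidiag Finset.univ d)) ?_
  intro a ha
  simp only [Finset.mem_coe, Finset.mem_finsuppAntidiag, Set.mem_ofPred_eq] at *
  rw [Finsupp.degree_eq_sum] at ha
  exact ⟨ha, Finset.subset_univ _⟩

instance [Finite σ] (d : ℤ) : Finite {a : σ →₀ ℕ | (a.degree : ℤ) = d} := by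
  refine Set.Finite.subset (finite_deg (σ := σ) d.toNat) ?_
  intro a ha
  simp only [Set.mem_ofPred_eq] at *
  omega

instance [Finite σ] (d : ℤ) : Module.Finite k (hz k σ d) :=
  Module.Finite.of_basis (basisRestrictSupport k _)

variable (G) in
/-- graded piece -/
def pc (i : ℕ) (d : ℤ) : Submodule k (G.B i →₀ MvPolynomial σ k) where
  carrier := {c | G.Hom i d c}
  add_mem' := fun ha hb b => HZ_add (ha b) (hb b)
  zero_mem' := fun _ => HZ_zero _
  smul_mem' := fun x c hc b => by
    have := (hz k σ (d - G.deg i b)).smul_mem x (mem_hz.mpr (hc b))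
    exact mem_hz.mp this

variable (G) in
def pcEquiv (i : ℕ) (d : ℤ) : G.pc i d ≃ₗ[k] ((b : G.B i) → hz k σ (d - G.deg i b)) where
  toFun c b := ⟨c.1 b, mem_hz.mpr (c.2 b)⟩
  invFun f := ⟨Finsupp.equivFunOnFinite.symm fun b => (f b).1, fun b => mem_hz.mp (f b).2⟩
  map_add' _ _ := rfl
  map_smul' _ _ := rfl
  left_inv c := by
    apply Subtype.ext
    ext1 b
    rfl
  right_inv f := rfl

instance [Finite σ] (i : ℕ) (d : ℤ) : Module.Finite k (G.pc i d) :=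
  Module.Finite.equiv (G.pcEquiv i d).symm

variable (G) in
lemma finrank_pc [Finite σ] (i : ℕ) (d : ℤ) : Module.finrank k (G.pc i d) =
    ∑ b, Nat.card {a : σ →₀ ℕ | (a.degree : ℤ) = d - G.deg i b} := by
  rw [(G.pcEquiv i d).finrank_eq, Module.finrank_pi_fintype]
  exact Finset.sum_congr rfl fun b _ => finrank_restrictSupport _

variable (G) in
def pcD (i : ℕ) (d : ℤ) : G.pc (i + 1) d →ₗ[k] G.pc i d :=
  ((G.D i).restrictScalars k).restrict fun _ hc => G.hom_D hc

variable (G) in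
/-- dimension of the boundaries -/
def bd (i : ℕ) (d : ℤ) : ℕ := Module.finrank k (LinearMap.range (G.pcD i d))

variable (G) in
lemma bd_add [Finite σ] (i : ℕ) (d : ℤ) :
    G.bd i d + G.bd (i + 1) d = Module.finrank k (G.pc (i + 1) d) := by
  have h : LinearMap.range (G.pcD (i + 1) d) = LinearMap.ker (G.pcD i d) := by
    ext c
    rw [LinearMap.mem_range, LinearMap.mem_ker]
    constructor
    · rintro ⟨x, rfl⟩
      exact Subtype.ext (G.D_comp i x.1)
    · intro hc
      obtain ⟨x, hx, hx2⟩ := G.exact_hom c.2 (congrArg Subtype.val hc)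
      exact ⟨⟨x, hx⟩, Subtype.ext hx2⟩
  have h2 : G.bd (i + 1) d = Module.finrank k (LinearMap.ker (G.pcD i d)) := by
    rw [← h]; rfl
  have h3 := LinearMap.finrank_range_add_finrank_ker (K := k) (V := G.pc (i + 1) d) (V₂ := G.pc i d)
    (G.pcD i d)
  rw [h2, ← h3]
  rfl

variable (G) in
lemma bd_eq_zero [Finite σ] (i : ℕ) (d : ℤ) (h : ∀ b, d < G.deg (i + 1) b) : G.bd i d = 0 := by
  have h0 : Module.finrank k (G.pc (i + 1) d) = 0 := by
    rw [finrank_pc]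
    refine Finset.sum_eq_zero fun b _ => ?_
    rw [Nat.card_eq_zero]
    left
    constructor
    rintro ⟨a, ha⟩
    have := h b
    simp only [Set.mem_ofPred_eq] at ha
    omega
  have := G.bd_add i d
  omega

lemma Aug.bd_zero (A : G.Aug s) [Finite σ] (d : ℤ) :
    G.bd 0 d = Nat.card {a : σ →₀ ℕ | a ∈ s ∧ (a.degree : ℤ) = d} := by
  rw [← finrank_restrictSupport (k := k)]
  refine LinearEquiv.finrank_eq ?_
  refine LinearEquiv.ofBijective
    (LinearMap.codRestrict _ ((Finsupp.lapply A.o ∘ₗ (G.pc 0 d).subtype) ∘ₗ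
      (LinearMap.range (G.pcD 0 d)).subtype) ?_) ⟨?_, ?_⟩
  · rintro ⟨c, ⟨x, rfl⟩⟩
    rw [mem_restrictSupport_iff]
    intro m hm
    refine ⟨(A.mem _).mp ⟨x.1, rfl⟩ m hm, ?_⟩
    have := G.hom_D x.2 A.o m hm
    rwa [A.deg0, sub_zero] at this
  · rintro ⟨c, hc⟩ ⟨c', hc'⟩ h
    have h1 := congrArg Subtype.val h
    exact Subtype.ext (Subtype.ext (A.ext0 h1))
  · rintro ⟨p, hp⟩
    rw [mem_restrictSupport_iff] at hp
    obtain ⟨c, hc⟩ := (A.mem p).mpr fun m hm => (hp hm).1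
    refine ⟨⟨_, ⟨⟨G.proj 1 d c, G.hom_proj 1 d c⟩, rfl⟩⟩, Subtype.ext ?_⟩
    change G.D 0 (G.proj 1 d c) A.o = p
    rw [D_proj, proj_apply, hc, A.deg0, sub_zero, hcZ_eq_self]
    exact fun m hm => (hp hm).2

end GC
end BettiAux
end

noncomputable section
namespace BettiAux
open PowerSeries

lemma one_sub_pow_mk (e : ℕ) :
    (1 - X : ℤ⟦X⟧) ^ e = PowerSeries.mk fun m => (-1) ^ m * (e.choose m : ℤ) := by
  induction e with
  | zero =>
    ext m
    rcases m with _ | m <;> simp [PowerSeries.coeff_one]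
  | succ e ih =>
    rw [pow_succ, ih, mul_sub, mul_one]
    ext m
    rcases m with _ | m
    · simp
    · rw [map_sub, coeff_succ_mul_X, coeff_mk, coeff_mk, coeff_mk, Nat.choose_succ_succ]
      push_cast
      ring

lemma one_sub_pow_X (e : ℕ) :
    1 - (1 - X : ℤ⟦X⟧) ^ e = X * PowerSeries.mk fun m => (-1) ^ m * (e.choose (m + 1) : ℤ) := by
  rw [one_sub_pow_mk]
  ext m
  rcases m with _ | m
  · simp
  · rw [coeff_succ_X_mul]
    simp [PowerSeries.coeff_one, pow_succ]

/-- truncated Hilbert series of a polynomial ring in `e+1` variables -/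
def Atr (e r : ℕ) : ℤ⟦X⟧ := PowerSeries.mk fun d => if d ≤ r then ((d + e).choose e : ℤ) else 0

lemma Atr_succ (e r : ℕ) :
    Atr e (r + 1) = Atr e r + X ^ (r + 1) * C (((r + 1 + e).choose e : ℕ) : ℤ) := by
  ext d
  simp only [Atr, map_add, coeff_mk, coeff_X_pow_mul', coeff_C]
  rcases lt_trichotomy d (r + 1) with h | h | h
  · rw [if_pos (by omega), if_pos (by omega), if_neg (by omega)]; simp
  · subst h; simp
  · rw [if_neg (by omega), if_neg (by omega), if_pos (by omega), if_neg (by omega)]; simp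

lemma choose_aux (e r m : ℕ) :
    (e + 1 + r).choose (m + r + 2) * (r + m + 1).choose r +
      (e + 1 + r + 1).choose (m + r + 2) * (r + m + 1).choose (r + 1) =
    (e + 1).choose (m + 1) * (r + 1 + e).choose e := by
  have h1 : (e + 1 + r).choose (m + r + 2) * (m + r + 2).choose (r + 1) =
      (e + 1 + r).choose (r + 1) * e.choose (m + 1) := by
    have := Nat.choose_mul (n := e + 1 + r) (show r + 1 ≤ m + r + 2 by omega)
    rw [this, show e + 1 + r - (r + 1) = e by omega, show m + r + 2 - (r + 1) = m + 1 by omega]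
  have h2 : (e + 1 + r).choose (m + r + 1) * (m + r + 1).choose (r + 1) =
      (e + 1 + r).choose (r + 1) * e.choose m := by
    have := Nat.choose_mul (n := e + 1 + r) (show r + 1 ≤ m + r + 1 by omega)
    rw [this, show e + 1 + r - (r + 1) = e by omega, show m + r + 1 - (r + 1) = m by omega]
  have h3 : (r + 1 + e).choose e = (e + 1 + r).choose (r + 1) := by
    rw [show e + 1 + r = r + 1 + e by ring]
    exact (Nat.choose_symm_add).symm
  rw [h3, Nat.choose_succ_succ (e + 1 + r) (m + r + 1), Nat.choose_succ_succ e m]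
  rw [show m + r + 2 = (m + r + 1) + 1 by rfl, Nat.choose_succ_succ (m + r + 1) r] at h1
  rw [show r + m + 1 = m + r + 1 by ring]
  simp only [Nat.succ_eq_add_one, show m + r + 2 = (m + r + 1) + 1 by rfl] at *
  nlinarith

lemma Atr_identity (e r : ℕ) :
    1 - (1 - X : ℤ⟦X⟧) ^ (e + 1) * Atr e r = X ^ (r + 1) * PowerSeries.mk fun m =>
      (-1) ^ m * (((e + 1 + r).choose (m + r + 1) * (r + m).choose r : ℕ) : ℤ) := by
  induction r with
  | zero =>
    have : Atr e 0 = 1 := by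
      ext d
      rcases d with _ | d <;> simp [Atr, PowerSeries.coeff_one]
    rw [this, mul_one, one_sub_pow_X]
    simp
  | succ r ih =>
    rw [Atr_succ, mul_add, ← sub_sub, ih, one_sub_pow_mk, pow_succ _ (r + 1), mul_left_comm,
      ← mul_sub, mul_assoc]
    congr 1
    ext m
    rw [map_sub, coeff_mul_C]
    rcases m with _ | m
    · simp
      rw [show e + 1 + r = r + 1 + e by ring]
      rw [sub_eq_zero]
      exact_mod_cast Nat.choose_symm_add
    · rw [coeff_succ_X_mul, coeff_mk, coeff_mk, coeff_mk]
      have := choose_aux e r m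
      have h : ((((e + 1 + r).choose (m + r + 2) * (r + m + 1).choose r +
      (e + 1 + r + 1).choose (m + r + 2) * (r + m + 1).choose (r + 1) : ℕ)) : ℤ) =
    (((e + 1).choose (m + 1) * (r + 1 + e).choose e : ℕ) : ℤ) := by rw [this]
      push_cast at h
      push_cast
      rw [show m + 1 + r + 1 = m + r + 2 by ring, show r + (m + 1) = r + m + 1 by ring,
        show e + 1 + (r + 1) = e + 1 + r + 1 by ring, show m + (r + 1) + 1 = m + r + 2 by ring,
        show r + 1 + m = r + m + 1 by ring, pow_succ]
      linear_combination (- (-1) ^ m) * h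

/-- expected Betti numbers -/
def Tb (e r i : ℕ) : ℤ :=
  (((e + 1 + r).choose (i + r + 1) * (r + i).choose r : ℕ) : ℤ) - (e + 1).choose (i + 1)

/-- tail series -/
def Tser (e r i : ℕ) : ℤ⟦X⟧ := X ^ (r + 1 + i) * PowerSeries.mk fun m => (-1) ^ m * Tb e r (i + m)

lemma Tser_zero (e r : ℕ) :
    1 - (1 - X : ℤ⟦X⟧) ^ (e + 1) * (Atr e r - X ^ r) = X ^ r + Tser e r 0 := by
  have h1 := Atr_identity e r
  have h2 := one_sub_pow_X (e + 1)
  have h3 : Tser e r 0 = X ^ (r + 1) * (PowerSeries.mk fun m =>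
      (-1) ^ m * (((e + 1 + r).choose (m + r + 1) * (r + m).choose r : ℕ) : ℤ)) -
      X ^ (r + 1) * (PowerSeries.mk fun m => (-1) ^ m * ((e + 1).choose (m + 1) : ℤ)) := by
    rw [← mul_sub]
    unfold Tser
    congr 1
    ext m
    simp [Tb, mul_sub]
  have h4 : (X : ℤ⟦X⟧) ^ (r + 1) * (PowerSeries.mk fun m => (-1) ^ m * ((e + 1).choose (m + 1) : ℤ))
      = X ^ r * (1 - (1 - X) ^ (e + 1)) := by rw [h2]; ring
  rw [h3, ← h1, h4]
  ring

lemma Tser_succ (e r i : ℕ) :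
    Tser e r i = X ^ (r + 1 + i) * C (Tb e r i) - Tser e r (i + 1) := by
  unfold Tser
  rw [← add_assoc, pow_succ _ (r + 1 + i), mul_assoc, ← mul_sub]
  congr 1
  ext m
  rw [map_sub]
  rcases m with _ | m
  · simp
  · rw [coeff_succ_X_mul, coeff_mk, coeff_mk, coeff_C, if_neg (by omega),
      show i + 1 + m = i + (m + 1) by ring]
    ring

lemma core_step (e r i : ℕ) (c : ℤ) (B' : ℤ⟦X⟧)
    (h : Tser e r i + B' = X ^ (r + 1 + i) * C c) (hB : X ^ (r + 2 + i) ∣ B') :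
    c = Tb e r i ∧ B' = Tser e r (i + 1) := by
  have h1 : c = Tb e r i := by
    have h2 := congrArg (coeff (r + 1 + i)) h
    rw [map_add, X_pow_dvd_iff.mp hB _ (by omega), Tser] at h2
    simp only [coeff_X_pow_mul', le_refl, if_true, Nat.sub_self, coeff_mk, coeff_C] at h2
    simpa using h2.symm
  refine ⟨h1, ?_⟩
  rw [Tser_succ, ← h1] at h
  linear_combination h

/-- counting series of a set of exponents -/
def ser {σ : Type} (s : Set (σ →₀ ℕ)) : ℤ⟦X⟧ :=
  PowerSeries.mk fun d => (Nat.card {a : σ →₀ ℕ | a ∈ s ∧ a.degree = d} : ℤ)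

variable {σ : Type}

lemma finite_ser [Finite σ] (s : Set (σ →₀ ℕ)) (d : ℕ) :
    {a : σ →₀ ℕ | a ∈ s ∧ a.degree = d}.Finite :=
  (GC.finite_deg (σ := σ) d).subset fun _ h => h.2

lemma ser_union [Finite σ] {s t u : Set (σ →₀ ℕ)} (hd : ∀ a ∈ s, a ∉ t)
    (hu : ∀ a, a ∈ u ↔ a ∈ s ∨ a ∈ t) : ser u = ser s + ser t := by
  ext d
  simp only [ser, map_add, coeff_mk]
  simp only [Nat.card_coe_set_eq]
  rw [← Nat.cast_add, ← Set.ncard_union_eq _ (finite_ser s d) (finite_ser t d)]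
  · congr 2
    ext a
    simp only [Set.mem_ofPred_eq, Set.mem_union, hu]
    tauto
  · rw [Set.disjoint_left]
    rintro a ⟨h1, _⟩ ⟨h2, _⟩
    exact hd a h1 h2

lemma ser_single (mu : σ →₀ ℕ) : ser {mu} = X ^ mu.degree := by
  ext d
  rw [ser, coeff_mk, coeff_X_pow]
  split_ifs with h
  · have : {a : σ →₀ ℕ | a ∈ ({mu} : Set (σ →₀ ℕ)) ∧ a.degree = d} = {mu} := by
      ext a; simp; rintro rfl; exact h.symm
    rw [this]; simp
  · have : {a : σ →₀ ℕ | a ∈ ({mu} : Set (σ →₀ ℕ)) ∧ a.degree = d} = ∅ := by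
      ext a; simp; rintro rfl; exact fun h' => h h'.symm
    rw [this]; simp

lemma card_deg [Fintype σ] (e : ℕ) (he : Fintype.card σ = e + 1) (d : ℕ) :
    Nat.card {a : σ →₀ ℕ | a.degree = d} = (d + e).choose e := by
  classical
  have : {a : σ →₀ ℕ | a.degree = d} = (Finset.finsuppAntidiag (Finset.univ : Finset σ) d) := by
    ext a
    simp only [Finset.mem_coe, Finset.mem_finsuppAntidiag, Set.mem_ofPred_eq]
    rw [Finsupp.degree_eq_sum]
    simp
  rw [this, Nat.card_coe_set_eq, Set.ncard_coe_finset, Finset.card_finsuppAntidiag_nat_eq_choose,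
    Finset.card_univ, he, show e + 1 + d - 1 = d + e by omega]
  exact Nat.choose_symm_add

lemma ser_univ [Fintype σ] (e : ℕ) (he : Fintype.card σ = e + 1) :
    ser (Set.univ : Set (σ →₀ ℕ)) * (1 - X) ^ (e + 1) = 1 := by
  refine Eq.trans ?_ (PowerSeries.mk_add_choose_mul_one_sub_pow_eq_one ℤ e)
  congr 1
  ext d
  rw [ser, coeff_mk, coeff_mk, add_comm e d, ← card_deg e he d]
  simp

lemma ser_le [Fintype σ] (e : ℕ) (he : Fintype.card σ = e + 1) (r : ℕ) :
    ser {a : σ →₀ ℕ | a.degree ≤ r} = Atr e r := by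
  ext d
  rw [ser, Atr, coeff_mk, coeff_mk]
  split_ifs with h
  · rw [← card_deg e he d]
    congr 3
    ext a
    simp only [Set.mem_ofPred_eq]
    omega
  · have : {a : σ →₀ ℕ | a ∈ {a : σ →₀ ℕ | a.degree ≤ r} ∧ a.degree = d} = ∅ := by
      ext a
      simp only [Set.mem_ofPred_eq, Set.mem_empty_iff_false, iff_false]
      omega
    rw [this]; simp

lemma ser_prod {α β : Type} [Finite σ] [Finite α] [Finite β] (φ : (σ →₀ ℕ) ≃ (α →₀ ℕ) × (β →₀ ℕ))
    (hφ : ∀ m, m.degree = (φ m).1.degree + (φ m).2.degree) (R : Set (α →₀ ℕ)) :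
    ser {m | (φ m).1 ∈ R} = ser R * ser (Set.univ : Set (β →₀ ℕ)) := by
  classical
  ext d
  rw [coeff_mul, ser, ser, ser]
  simp only [coeff_mk]
  have E : {a : σ →₀ ℕ | a ∈ {m | (φ m).1 ∈ R} ∧ a.degree = d} ≃
      Σ q : Finset.HasAntidiagonal.antidiagonal d, {a : α →₀ ℕ | a ∈ R ∧ a.degree = q.1.1} ×
        {b : β →₀ ℕ | b ∈ (Set.univ : Set (β →₀ ℕ)) ∧ b.degree = q.1.2} :=
    Equiv.ofBijective (fun m => ⟨⟨((φ m.1).1.degree, (φ m.1).2.degree), by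
          rw [Finset.HasAntidiagonal.mem_antidiagonal, ← hφ]; exact m.2.2⟩,
          ⟨(φ m.1).1, m.2.1, rfl⟩, ⟨(φ m.1).2, Set.mem_univ _, rfl⟩⟩) (by
      constructor
      · intro m m' h
        have h' := congrArg (fun q : (Σ q : Finset.HasAntidiagonal.antidiagonal d,
          {a : α →₀ ℕ | a ∈ R ∧ a.degree = q.1.1} ×
          {b : β →₀ ℕ | b ∈ (Set.univ : Set (β →₀ ℕ)) ∧ b.degree = q.1.2}) =>
            (q.2.1.1, q.2.2.1)) h
        exact Subtype.ext (φ.injective h')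
      · rintro ⟨⟨⟨a, b⟩, hab⟩, ⟨x, hx, hx2⟩, ⟨y, hy, hy2⟩⟩
        simp only at hx2 hy2
        obtain ⟨m, hm⟩ := φ.surjective (x, y)
        obtain rfl : (φ m).1 = x := by rw [hm]
        obtain rfl : (φ m).2 = y := by rw [hm]
        subst hx2 hy2
        refine ⟨⟨m, hx, ?_⟩, rfl⟩
        rw [hφ]
        exact Finset.HasAntidiagonal.mem_antidiagonal.mp hab)
  have := fun (q : Finset.HasAntidiagonal.antidiagonal d) => (finite_ser R q.1.1).to_subtype
  have := fun (q : Finset.HasAntidiagonal.antidiagonal d) =>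
    (finite_ser (Set.univ : Set (β →₀ ℕ)) q.1.2).to_subtype
  rw [Nat.card_congr E, Nat.card_sigma]
  simp only [Nat.card_prod]
  push_cast
  rw [← Finset.sum_coe_sort (Finset.HasAntidiagonal.antidiagonal d)]

/-- splitting exponents along a predicate -/
def splitEquiv [Finite σ] (p : σ → Prop) [DecidablePred p] :
    (σ →₀ ℕ) ≃ ({i // p i} →₀ ℕ) × ({i // ¬ p i} →₀ ℕ) :=
  (Finsupp.equivFunOnFinite.trans (Equiv.piEquivPiSubtypeProd p fun _ => ℕ)).trans
    (Equiv.prodCongr Finsupp.equivFunOnFinite.symm Finsupp.equivFunOnFinite.symm)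

lemma split_fst [Finite σ] (p : σ → Prop) [DecidablePred p] (m : σ →₀ ℕ) (i) :
    (splitEquiv p m).1 i = m i.1 := rfl
lemma split_snd [Finite σ] (p : σ → Prop) [DecidablePred p] (m : σ →₀ ℕ) (i) :
    (splitEquiv p m).2 i = m i.1 := rfl

lemma split_degree [Fintype σ] (p : σ → Prop) [DecidablePred p] (m : σ →₀ ℕ) :
    m.degree = (splitEquiv p m).1.degree + (splitEquiv p m).2.degree := by
  classical
  rw [Finsupp.degree_eq_sum, Finsupp.degree_eq_sum, Finsupp.degree_eq_sum]
  simp only [split_fst, split_snd]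
  exact (Fintype.sum_subtype_add_sum_subtype p m).symm

/-- exponents of the monomial ideal `(u) + J^{r+1}` -/
def Qm [Fintype σ] (p : σ → Prop) [DecidablePred p] (mu : σ →₀ ℕ) (r : ℕ) : Set (σ →₀ ℕ) :=
  {m | mu ≤ m ∨ r + 1 ≤ ∑ i with p i, m i}

lemma sum_filter_eq [Fintype σ] (p : σ → Prop) [DecidablePred p] (m : σ →₀ ℕ) :
    ∑ i with p i, m i = (splitEquiv p m).1.degree := by
  rw [Finsupp.degree_eq_sum]
  simp only [split_fst]
  exact Finset.sum_subtype _ (by simp) _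

lemma degree_eq_of_le {α : Type} [Finite α] {a b : α →₀ ℕ} (h : a ≤ b) (hd : b.degree ≤ a.degree) :
    a = b := by
  have := Fintype.ofFinite α
  rw [Finsupp.degree_eq_sum, Finsupp.degree_eq_sum] at hd
  ext i
  by_contra hne
  have hlt : a i < b i := lt_of_le_of_ne (h i) hne
  have := Finset.sum_lt_sum (s := Finset.univ) (fun i _ => h i) ⟨i, Finset.mem_univ i, hlt⟩
  omega

lemma ser_Qm [Fintype σ] (p : σ → Prop) [DecidablePred p] (mu : σ →₀ ℕ) (r : ℕ)
    (hmu : mu.degree = r) (hp : ∀ i, ¬ p i → mu i = 0) (e f : ℕ)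
    (he : Fintype.card {i // p i} = e + 1) (hf : Fintype.card {i // ¬ p i} = f + 1) :
    ser (Qm p mu r) * (1 - X) ^ (e + f + 2) = X ^ r + Tser e r 0 := by
  have hcard : Fintype.card σ = (e + f + 1) + 1 := by
    have := Fintype.card_subtype_compl p
    have h2 := Fintype.card_subtype_le p
    omega
  have hmu2 : (splitEquiv p mu).2 = 0 := by
    ext i; exact hp i.1 i.2
  have hmu1 : (splitEquiv p mu).1.degree = r := by
    have := split_degree p mu
    rw [hmu2, map_zero] at this
    omega
  set mx := (splitEquiv p mu).1 with hmx
  have h1 := ser_union (s := Qm p mu r) (t := (Qm p mu r)ᶜ) (u := Set.univ)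
    (fun a h h' => h' h) (fun a => by simp; tauto)
  have h2 : (Qm p mu r)ᶜ = {m | (splitEquiv p m).1 ∈ {x | x.degree ≤ r ∧ x ≠ mx}} := by
    ext m
    simp only [Qm, Set.mem_compl_iff, Set.mem_ofPred_eq, sum_filter_eq]
    constructor
    · intro h
      push Not at h
      refine ⟨by omega, fun h' => h.1 fun i => ?_⟩
      by_cases hi : p i
      · have := DFunLike.congr_fun h' ⟨i, hi⟩
        rw [hmx, split_fst, split_fst] at this
        exact this.ge
      · rw [hp i hi]; exact Nat.zero_le _
    · rintro ⟨h3, h4⟩ (h5 | h5)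
      · refine h4 (degree_eq_of_le ?_ (by omega)).symm
        intro i
        exact h5 i.1
      · omega
  have h3 := ser_prod (splitEquiv p) (split_degree p)
    {x : {i // p i} →₀ ℕ | x.degree ≤ r ∧ x ≠ mx}
  have h4 := ser_union (s := {x : {i // p i} →₀ ℕ | x.degree ≤ r ∧ x ≠ mx}) (t := {mx})
    (u := {x : {i // p i} →₀ ℕ | x.degree ≤ r}) (fun a h h' => h.2 h') (fun a => by
      simp only [Set.mem_ofPred_eq, Set.mem_singleton_iff]
      constructor
      · intro h; tauto
      · rintro (h | h)
        · exact h.1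
        · rw [h]; omega)
  rw [ser_single, hmu1, ser_le e he] at h4
  have h5 := ser_univ _ hcard
  have h6 := ser_univ f hf
  rw [← h2] at h3
  rw [← Tser_zero]
  have h7 : ser (Qm p mu r) = ser (Set.univ : Set (σ →₀ ℕ)) -
      (Atr e r - X ^ r) * ser (Set.univ : Set ({i // ¬ p i} →₀ ℕ)) := by
    rw [h1, h3, h4]; ring
  rw [h7, sub_mul, show e + f + 2 = e + f + 1 + 1 by ring, h5,
    show e + f + 1 + 1 = (f + 1) + (e + 1) by ring, pow_add]
  linear_combination (- (Atr e r - X ^ r) * (1 - X) ^ (e + 1)) * h6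

end BettiAux
end

noncomputable section
namespace BettiAux
open PowerSeries

variable {k : Type} [Field k] {σ : Type}

lemma coeff_shift (t d : ℕ) : coeff d (X ^ t * ser (Set.univ : Set (σ →₀ ℕ))) =
    (Nat.card {a : σ →₀ ℕ | (a.degree : ℤ) = d - t} : ℤ) := by
  rw [coeff_X_pow_mul']
  split_ifs with h
  · rw [ser, coeff_mk]
    congr 3
    ext a
    simp only [Set.mem_ofPred_eq, Set.mem_univ, true_and]
    omega
  · have : {a : σ →₀ ℕ | (a.degree : ℤ) = d - t} = ∅ := by
      ext a
      simp only [Set.mem_ofPred_eq, Set.mem_empty_iff_false, iff_false]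
      omega
    rw [this]; simp

/-- generating series of the boundaries -/
def GC.Zs (G : GC k σ) (i : ℕ) : ℤ⟦X⟧ := PowerSeries.mk fun d => (G.bd i d : ℤ)

lemma GC.Zs_add [Finite σ] (G : GC k σ) (i : ℕ) (t : G.B (i + 1) → ℕ)
    (ht : ∀ b, G.deg (i + 1) b = t b) :
    G.Zs i + G.Zs (i + 1) = (∑ b, X ^ t b) * ser (Set.univ : Set (σ →₀ ℕ)) := by
  ext d
  rw [Finset.sum_mul, map_sum, map_add, GC.Zs, GC.Zs, coeff_mk, coeff_mk, ← Nat.cast_add,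
    G.bd_add, G.finrank_pc, Nat.cast_sum]
  refine Finset.sum_congr rfl fun b _ => ?_
  rw [coeff_shift, ht]

lemma X_pow_dvd_Zs [Finite σ] (G : GC k σ) (i t : ℕ) (h : ∀ b, (t : ℤ) ≤ G.deg (i + 1) b) :
    X ^ t ∣ G.Zs i := by
  rw [X_pow_dvd_iff]
  intro m hm
  rw [GC.Zs, coeff_mk, G.bd_eq_zero i m fun b => by have := h b; omega]
  rfl

lemma Aug_Zs_zero [Finite σ] {G : GC k σ} {s : Set (σ →₀ ℕ)} (A : G.Aug s) : G.Zs 0 = ser s := by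
  ext d
  rw [GC.Zs, ser, coeff_mk, coeff_mk, A.bd_zero]
  norm_cast

section
variable [Fintype σ] (p : σ → Prop) [DecidablePred p] (mu : σ →₀ ℕ) (r : ℕ)

lemma psum_le (m : σ →₀ ℕ) : ∑ i with p i, m i ≤ m.degree := by
  rw [Finsupp.degree_eq_sum]
  exact Finset.sum_le_sum_of_subset (Finset.filter_subset _ _)

lemma Qm_deg (hmu : mu.degree = r) (m) (hm : m ∈ Qm p mu r) : r ≤ m.degree := by
  rcases hm with h | h
  · rw [← hmu]; exact Finsupp.degree_mono h
  · have := psum_le p m; omega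

lemma Qm_uniq (hmu : mu.degree = r) (m) (hm : m ∈ Qm p mu r) (hd : m.degree = r) : m = mu := by
  rcases hm with h | h
  · exact (degree_eq_of_le h (by omega)).symm
  · have := psum_le p m; omega

lemma Qm_nzd (hp : ∀ i, ¬ p i → mu i = 0) (m : σ →₀ ℕ) (y : σ) (hy : ¬ p y) (hm : Finsupp.single y 1 + m ∈ Qm p mu r) :
    m ∈ Qm p mu r := by
  classical
  rcases hm with h | h
  · left
    intro i
    by_cases hi : i = y
    · subst hi; rw [hp i hy]; exact Nat.zero_le _
    · have := h i
      rw [Finsupp.add_apply, Finsupp.single_apply, if_neg (fun h => hi h.symm)] at this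
      simpa using this
  · right
    refine h.trans (le_of_eq (Finset.sum_congr rfl fun i hi => ?_))
    rw [Finsupp.add_apply, Finsupp.single_apply, if_neg, zero_add]
    rintro rfl
    exact hy (by simpa using hi)

lemma Qm_big (m : σ →₀ ℕ) (hm : r < m.degree) :
    m ∈ Qm p mu r ∨ ∃ y, ¬ p y ∧ m y ≠ 0 := by
  by_contra! h
  apply h.1
  right
  rw [Finset.sum_filter_of_ne, ← Finsupp.degree_eq_sum]
  · exact hm
  · intro x _ hx
    by_contra hpx
    exact hx (h.2 x hpx)

theorem Aug_betti (hmu : mu.degree = r) (hp : ∀ i, ¬ p i → mu i = 0)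
    {G : GC k σ} (A : G.Aug (Qm p mu r)) (e f : ℕ)
    (he : Fintype.card {i // p i} = e + 1) (hf : Fintype.card {i // ¬ p i} = f + 1) :
    (∀ b : G.B 1, G.deg 1 b = r ∨ G.deg 1 b = r + 1) ∧ (∃! b : G.B 1, G.deg 1 b = r) ∧
    (∀ i, ∀ b : G.B (i + 2), G.deg (i + 2) b = r + 2 + i) ∧
    (∀ i, (Nat.card {b : G.B (i + 1) // G.deg (i + 1) b = r + 1 + i} : ℤ) = Tb e r i) := by
  classical
  have hle := G.deg_le (Finset.univ.filter fun i => ¬ p i) r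
    (fun Z z _ hz hzZ d => A.hQ _ (fun m y hy h => Qm_nzd p mu r hp m y (by simpa using hy) h)
      Z z hz hzZ d)
    (fun d hd => A.hP0 _ r (fun m hm => by
      rcases Qm_big p mu r m hm with h | ⟨y, hy, h⟩
      · exact Or.inl h
      · exact Or.inr ⟨y, by simpa using hy, h⟩) d hd)
  have hge := A.deg_ge (Qm_uniq p mu r hmu) (Qm_deg p mu r hmu)
  have hge1 := A.deg1 r (Qm_deg p mu r hmu)
  have h1 : ∀ b : G.B 1, G.deg 1 b = r ∨ G.deg 1 b = r + 1 := by
    intro b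
    have h2 : G.deg 1 b ≤ r + 1 + (0 : ℕ) := hle 0 b
    have := hge1 b
    push_cast at h2
    omega
  have h2 : ∀ i, ∀ b : G.B (i + 2), G.deg (i + 2) b = r + 2 + i := by
    intro i b
    have h3 : G.deg (i + 2) b ≤ r + 1 + (i + 1 : ℕ) := hle (i + 1) b
    have := hge i b
    push_cast at h3
    omega
  obtain ⟨b0, hb0⟩ := A.exists1 (mu := mu) (Or.inl le_rfl) hmu (Qm_deg p mu r hmu)
  have hu : ∀ b : G.B 1, G.deg 1 b = r → b = b0 := fun b hb =>
    A.unique1 (Qm_uniq p mu r hmu) hb hb0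
  refine ⟨h1, ⟨b0, hb0, hu⟩, h2, ?_⟩
  have hcard : Fintype.card σ = (e + f + 1) + 1 := by
    have := Fintype.card_subtype_compl p
    have h2 := Fintype.card_subtype_le p
    omega
  have hU : ser (Set.univ : Set (σ →₀ ℕ)) * (1 - X) ^ (e + f + 2) = 1 := ser_univ _ hcard
  have hdiv : ∀ i, X ^ (r + 2 + i) ∣ G.Zs (i + 1) * (1 - X) ^ (e + f + 2) := fun i =>
    Dvd.dvd.mul_right (X_pow_dvd_Zs G (i + 1) _ fun b => by
      have := h2 i b
      change _ ≤ G.deg (i + 2) b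
      rw [this]; push_cast; rfl) _
  have hmain : ∀ i, (Nat.card {b : G.B (i + 1) // G.deg (i + 1) b = r + 1 + i} : ℤ) = Tb e r i ∧
      G.Zs (i + 1) * (1 - X) ^ (e + f + 2) = Tser e r (i + 1) := by
    intro i
    induction i with
    | zero =>
      refine core_step e r 0 _ _ ?_ (hdiv 0)
      have h3 := G.Zs_add 0 (fun b => if b = b0 then r else r + 1) (by
        intro b
        split_ifs with h
        · rw [h]; exact hb0
        · rcases h1 b with h' | h'
          · exact absurd (hu b h') h
          · push_cast; exact h')
      have h4 := ser_Qm p mu r hmu hp e f he hf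
      have h5 : (∑ b : G.B (0 + 1), (X : ℤ⟦X⟧) ^ (if b = b0 then r else r + 1)) =
          X ^ r + X ^ (r + 1 + 0) *
            C (Nat.card {b : G.B (0 + 1) // G.deg (0 + 1) b = r + 1 + (0 : ℕ)} : ℤ) := by
        rw [Nat.card_eq_fintype_card, Fintype.card_subtype,
          ← Finset.add_sum_erase _ _ (Finset.mem_univ (b0 : G.B (0 + 1))), if_pos rfl]
        have h6 : Finset.univ.erase (b0 : G.B (0 + 1)) =
            Finset.univ.filter fun b : G.B (0 + 1) => G.deg (0 + 1) b = r + 1 + (0 : ℕ) := by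
          ext b
          simp only [Finset.mem_erase, Finset.mem_filter, Finset.mem_univ, true_and, and_true]
          constructor
          · intro h
            rcases h1 b with h' | h'
            · exact absurd (hu b h') h
            · simpa using h'
          · rintro h rfl
            have h7 : G.deg 1 b = r + 1 + (0 : ℕ) := h
            push_cast at h7
            omega
        rw [← h6, Finset.sum_congr rfl (g := fun _ => (X : ℤ⟦X⟧) ^ (r + 1))]
        · simp [mul_comm]
        · intro b hb
          rw [if_neg (Finset.ne_of_mem_erase hb)]
      rw [h5, Aug_Zs_zero A] at h3
      linear_combination (1 - X) ^ (e + f + 2) * h3 - h4 +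
        (X ^ r + X ^ (r + 1 + 0) *
          C (Nat.card {b : G.B (0 + 1) // G.deg (0 + 1) b = r + 1 + (0 : ℕ)} : ℤ)) * hU
    | succ i ih =>
      refine core_step e r (i + 1) _ _ ?_ (hdiv (i + 1))
      have hd : ∀ b : G.B (i + 1 + 1), G.deg (i + 1 + 1) b = r + 1 + (i + 1 : ℕ) := by
        intro b
        have := h2 i b
        push_cast
        change G.deg (i + 2) b = _
        rw [this]; ring
      have h3 := G.Zs_add (i + 1) (fun b => r + 1 + (i + 1)) (by
        intro b; rw [hd b]; push_cast; ring)
      have h5 : Nat.card {b : G.B (i + 1 + 1) // G.deg (i + 1 + 1) b = r + 1 + (i + 1 : ℕ)} =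
          Fintype.card (G.B (i + 1 + 1)) := by
        rw [Nat.card_eq_fintype_card, Fintype.card_subtype, Finset.filter_true_of_mem]
        · rfl
        · intro b _; exact hd b
      rw [h5, ← ih.2]
      rw [Finset.sum_const, Finset.card_univ, nsmul_eq_mul] at h3
      rw [map_natCast]
      linear_combination (1 - X) ^ (e + f + 2) * h3 +
        ((Fintype.card (G.B (i + 1 + 1)) : ℤ⟦X⟧) * X ^ (r + 1 + (i + 1))) * hU
  exact fun i => (hmain i).1
end
end BettiAux
end

noncomputable section
namespace BettiAux
open MvPolynomial

variable {k : Type} [Field k] {σ : Type}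

/-- ideal of polynomials all of whose monomials lie in an upward closed set -/
def supIdeal (k : Type) [Field k] (s : Set (σ →₀ ℕ)) (hs : ∀ a b, a ∈ s → b + a ∈ s) :
    Ideal (MvPolynomial σ k) where
  carrier := {f | ∀ m ∈ f.support, m ∈ s}
  add_mem' := by
    classical
    intro f g hf hg m hm
    rcases Finset.mem_union.mp (support_add hm) with h | h
    · exact hf m h
    · exact hg m h
  zero_mem' := by intro m hm; simp at hm
  smul_mem' := by
    classical
    intro c f hf m hm
    rw [smul_eq_mul] at hm
    obtain ⟨a, _, b, hb, rfl⟩ := Finset.mem_add.mp (support_mul _ _ hm)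
    exact hs b a (hf b hb)

lemma mem_supIdeal {s : Set (σ →₀ ℕ)} {hs} {f : MvPolynomial σ k} :
    f ∈ supIdeal k s hs ↔ ∀ m ∈ f.support, m ∈ s := Iff.rfl

variable [Fintype σ] (p : σ → Prop) [DecidablePred p]

lemma psum_add (a b : σ →₀ ℕ) :
    ∑ i with p i, (a + b) i = ∑ i with p i, a i + ∑ i with p i, b i := by
  rw [← Finset.sum_add_distrib]; rfl

lemma J_le (J : Ideal (MvPolynomial σ k))
    (hJ : J = Ideal.span {q | ∃ i, p i ∧ q = X i}) (s : ℕ) :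
    ∀ f ∈ J ^ s, ∀ m ∈ f.support, s ≤ ∑ i with p i, m i := by
  classical
  have hup : ∀ s : ℕ, ∀ a b : σ →₀ ℕ, a ∈ {m : σ →₀ ℕ | s ≤ ∑ i with p i, m i} →
      b + a ∈ {m : σ →₀ ℕ | s ≤ ∑ i with p i, m i} := by
    intro s a b h
    simp only [Set.mem_ofPred_eq] at *
    rw [psum_add]; omega
  induction s with
  | zero => intros; exact Nat.zero_le _
  | succ s ih =>
    intro f hf
    rw [pow_succ] at hf
    have : J ^ s * J ≤ supIdeal k {m : σ →₀ ℕ | s + 1 ≤ ∑ i with p i, m i} (hup (s + 1)) := by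
      rw [hJ, Ideal.mul_le]
      intro x hx y hy
      rw [← hJ] at hx
      induction hy using Submodule.span_induction with
      | mem y hy =>
        obtain ⟨i, hi, rfl⟩ := hy
        rw [mem_supIdeal]
        intro m hm
        rw [support_mul_X, Finset.mem_map] at hm
        obtain ⟨m', hm', rfl⟩ := hm
        have := ih x hx m' hm'
        simp only [Set.mem_ofPred_eq, addRightEmbedding_apply]
        rw [psum_add]
        have h1 : ∑ j with p j, (Finsupp.single i 1 : σ →₀ ℕ) j = 1 := by
          rw [Finset.sum_eq_single i]
          · simp
          · intro j _ hj; rw [Finsupp.single_apply, if_neg (fun h => hj h.symm)]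
          · intro h; simp [hi] at h
        omega
      | zero => rw [mul_zero]; exact zero_mem _
      | add a b _ _ ha hb => rw [mul_add]; exact add_mem ha hb
      | smul c a _ ha =>
        rw [smul_eq_mul, mul_left_comm]; exact Ideal.mul_mem_left _ _ ha
    exact this hf

lemma mem_J (J : Ideal (MvPolynomial σ k))
    (hJ : J = Ideal.span {q | ∃ i, p i ∧ q = X i}) (s : ℕ) :
    ∀ m : σ →₀ ℕ, s ≤ ∑ i with p i, m i → monomial m (1 : k) ∈ J ^ s := by
  classical
  induction s with
  | zero => intros; simp
  | succ s ih =>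
    intro m hm
    obtain ⟨i, hi, hne⟩ : ∃ i ∈ Finset.univ.filter p, m i ≠ 0 := by
      by_contra! h
      rw [Finset.sum_eq_zero h] at hm
      omega
    rw [Finset.mem_filter] at hi
    have hle : Finsupp.single i 1 ≤ m := by
      rw [Finsupp.single_le_iff]; omega
    obtain ⟨m', rfl⟩ := exists_add_of_le hle
    have h1 : ∑ j with p j, (Finsupp.single i 1 : σ →₀ ℕ) j = 1 := by
      rw [Finset.sum_eq_single i]
      · simp
      · intro j _ hj; rw [Finsupp.single_apply, if_neg (fun h => hj h.symm)]
      · intro h; simp [hi] at h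
    rw [psum_add] at hm
    have h2 := ih m' (by omega)
    rw [pow_succ, add_comm, show monomial (m' + Finsupp.single i 1) (1 : k) =
      monomial m' 1 * X i by rw [X, monomial_mul, one_mul]]
    exact Ideal.mul_mem_mul h2 (by rw [hJ]; exact Ideal.subset_span ⟨i, hi.2, rfl⟩)

lemma mem_I_iff (J I : Ideal (MvPolynomial σ k))
    (hJ : J = Ideal.span {q | ∃ i, p i ∧ q = X i}) (mu : σ →₀ ℕ) (r : ℕ)
    (hI : I = Ideal.span {monomial mu (1 : k)} ⊔ J ^ (r + 1)) (f : MvPolynomial σ k) :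
    f ∈ I ↔ ∀ m ∈ f.support, m ∈ Qm p mu r := by
  classical
  have hup : ∀ a b : σ →₀ ℕ, a ∈ Qm p mu r → b + a ∈ Qm p mu r := by
    rintro a b (h | h)
    · exact Or.inl (h.trans (le_add_of_nonneg_left (zero_le)))
    · right; rw [psum_add]; omega
  constructor
  · intro hf
    have : I ≤ supIdeal k (Qm p mu r) hup := by
      rw [hI, sup_le_iff]
      constructor
      · rw [Ideal.span_singleton_le_iff_mem, mem_supIdeal]
        intro m hm
        have := support_monomial_subset hm
        rw [Finset.mem_singleton] at this
        exact Or.inl this.ge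
      · intro g hg m hm
        exact Or.inr (J_le p J hJ (r + 1) g hg m hm)
    exact this hf
  · intro h
    rw [f.as_sum]
    refine sum_mem fun m hm => ?_
    rw [show monomial m (coeff m f) = C (coeff m f) * monomial m 1 by rw [C_mul_monomial, mul_one]]
    refine Ideal.mul_mem_left _ _ ?_
    rw [hI]
    rcases h m hm with h | h
    · refine Ideal.mem_sup_left (Ideal.mem_span_singleton.mpr ?_)
      obtain ⟨m', rfl⟩ := exists_add_of_le h
      exact ⟨monomial m' 1, by rw [monomial_mul, one_mul]⟩
    · exact Ideal.mem_sup_right (mem_J p J hJ _ m h)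
end BettiAux
end

noncomputable section
namespace BettiAux
open MvPolynomial

variable {k : Type} [Field k]

lemma HZ_of_HomogOfDeg {σ : Type} {q : MvPolynomial σ k} {d : ℤ} (h : Paper.HomogOfDeg k q d) :
    HZ q d := by
  rcases h with rfl | ⟨m, rfl, h⟩
  · exact HZ_zero _
  · exact HZ_of_isHomogeneous h

lemma HZ_of_idealDeg {N : ℕ} {I : Ideal (MvPolynomial (Fin N) k)} {d : ℤ} {x : ↥I}
    (h : x ∈ Paper.idealDeg k I d) : HZ (x : MvPolynomial (Fin N) k) d := by
  unfold Paper.idealDeg at h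
  split_ifs at h with h0
  · have h1 : (x : MvPolynomial (Fin N) k).IsHomogeneous d.toNat := h
    have := HZ_of_isHomogeneous h1
    rwa [Int.toNat_of_nonneg h0] at this
  · rw [Submodule.mem_bot] at h
    rw [h]; exact HZ_zero _

lemma HZ_cast {σ : Type} {q q' : MvPolynomial σ k} {d d' : ℤ} (h : HZ q d) (hq : q' = q)
    (hd : d = d') : HZ q' d' := by
  subst hq hd; exact h

section
variable {N : ℕ} {I : Ideal (MvPolynomial (Fin N) k)}
  (res : Paper.MinGradedFreeRes k (Fin N) ↥I (Paper.idealDeg k I))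

/-- bases of the augmented complex -/
def gB : ℕ → Type
  | 0 => Unit
  | i + 1 => (j : ℤ) × Fin (res.β i j)

/-- degrees of the basis elements -/
def gdeg : ∀ i, gB res i → ℤ
  | 0 => fun _ => 0
  | i + 1 => fun b => (i : ℤ) + b.1

/-- differentials of the augmented complex -/
def gD : ∀ i, (gB res (i + 1) →₀ MvPolynomial (Fin N) k) →ₗ[MvPolynomial (Fin N) k]
    (gB res i →₀ MvPolynomial (Fin N) k)
  | 0 => (Finsupp.lsingle (R := MvPolynomial (Fin N) k) (M := MvPolynomial (Fin N) k) ()) ∘ₗ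
      (I.subtype ∘ₗ res.ε)
  | i + 1 => res.d i

lemma gB_fin : ∀ i, Finite (gB res i)
  | 0 => inferInstanceAs (Finite Unit)
  | i + 1 => by
    have := (res.rowFinite i).to_subtype
    refine Finite.of_injective (β := Σ j : Function.support (res.β i), Fin (res.β i j.1))
      (fun b : (j : ℤ) × Fin (res.β i j) => ⟨⟨b.1, ?_⟩, b.2⟩) ?_
    · rw [Function.mem_support]
      have := b.2.2
      omega
    · rintro ⟨j, s⟩ ⟨j', s'⟩ h
      simp only [Sigma.mk.injEq, Subtype.mk.injEq] at h
      obtain ⟨rfl, h⟩ := h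
      rw [eq_of_heq h]

lemma gD_zero_apply (c) : gD res 0 c () = (res.ε c : MvPolynomial (Fin N) k) :=
  Finsupp.single_eq_same

/-- the augmented complex -/
def toGC (h1 : ∀ f ∈ I, constantCoeff f = 0) : GC k (Fin N) where
  B := gB res
  fin := gB_fin res
  deg := gdeg res
  D := gD res
  hom := by
    rintro (_ | i) b b'
    · have := HZ_of_idealDeg (res.eps_graded b.1 b.2)
      refine HZ_cast this (gD_zero_apply res _) ?_
      change b.1 = ((0 : ℕ) : ℤ) + b.1 - 0
      simp
    · have := HZ_of_HomogOfDeg (res.graded i b.1 b'.1 b.2 b'.2)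
      change HZ _ (((i + 1 : ℕ) : ℤ) + b.1 - (i + b'.1))
      rw [show ((i + 1 : ℕ) : ℤ) + b.1 - (i + b'.1) = b.1 + 1 - b'.1 by push_cast; ring]
      exact this
  min := by
    rintro (_ | i) b b' h
    · have h2 := HZ_of_idealDeg (res.eps_graded b.1 b.2)
      change ((0 : ℕ) : ℤ) + b.1 = 0 at h
      rw [Nat.cast_zero, zero_add] at h
      refine (gD_zero_apply res _).trans ?_
      have h3 := h1 _ (res.ε (Finsupp.single b 1)).2
      have h4 := HZ_zero_eq_C (HZ_cast h2 rfl h)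
      refine h4.trans ?_
      have h5 : constantCoeff ((res.ε (Finsupp.single ⟨b.1, b.2⟩ 1) : ↥I) :
        MvPolynomial (Fin N) k) = 0 := h3
      rw [h5, map_zero]
    · change ((i + 1 : ℕ) : ℤ) + b.1 = i + b'.1 at h
      exact res.minimal i b.1 b'.1 b.2 b'.2 (by push_cast at h; linarith)
  exact := by
    rintro (_ | i)
    · intro y
      refine Iff.trans ?_ (res.exact0 y)
      constructor
      · intro h
        have h2 := DFunLike.congr_fun h ()
        have h3 := (gD_zero_apply res y).symm.trans h2
        exact Subtype.ext h3
      · intro h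
        change Finsupp.single () ((res.ε y : ↥I) : MvPolynomial (Fin N) k) = 0
        rw [h]
        simp
    · exact res.exactSeq i

/-- its augmentation -/
def toAug (h1 : ∀ f ∈ I, constantCoeff f = 0) (s : Set (Fin N →₀ ℕ))
    (hs : ∀ f : MvPolynomial (Fin N) k, f ∈ I ↔ ∀ m ∈ f.support, m ∈ s) :
    (toGC res h1).Aug s where
  o := ()
  uniq := fun _ => rfl
  deg0 := rfl
  mem := by
    intro q
    rw [← hs]
    constructor
    · rintro ⟨c, rfl⟩
      exact (gD_zero_apply res c).symm ▸ (res.ε c).2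
    · intro hq
      obtain ⟨c, hc⟩ := res.eps_surj ⟨q, hq⟩
      refine ⟨c, (gD_zero_apply res c).trans ?_⟩
      rw [hc]

lemma card_gB (h1 : ∀ f ∈ I, constantCoeff f = 0) (i : ℕ) (j d : ℤ) (hd : d = i + j) :
    Nat.card {b : (toGC res h1).B (i + 1) // (toGC res h1).deg (i + 1) b = d} = res.β i j := by
  subst hd
  rw [← Nat.card_fin (res.β i j)]
  refine (Nat.card_congr (Equiv.ofBijective (fun s : Fin (res.β i j) =>
    (⟨(⟨j, s⟩ : (j : ℤ) × Fin (res.β i j)), rfl⟩ :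
      {b : (toGC res h1).B (i + 1) // (toGC res h1).deg (i + 1) b = i + j})) ⟨?_, ?_⟩)).symm
  · intro s s' h
    have h2 := congrArg Subtype.val h
    have h3 : (⟨j, s⟩ : (j : ℤ) × Fin (res.β i j)) = ⟨j, s'⟩ := h2
    exact eq_of_heq (Sigma.mk.inj h3).2
  · rintro ⟨⟨j', s⟩, h⟩
    have h2 : (i : ℤ) + j' = i + j := h
    obtain rfl : j' = j := by omega
    exact ⟨s, rfl⟩

end
end BettiAux
end

/-- Lemma 4.4: for `I = (u) + J^{r+1}` with `J = (x_0,…,x_{e-1})` and `u` a monomial of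
degree `r` in `x_0,…,x_{e-1}`, the graded Betti numbers of the ideal `I` are
`β_{0,r}(I) = 1`, `β_{i,r+1}(I) = C(e+r, i+r+1)·C(r+i, r) - C(e, i+1)` for
`0 ≤ i ≤ e-1`, and all others vanish. -/
theorem stmt14 (k : Type) [Field k] (n e r : ℕ) (he : 1 ≤ e) (hr : 1 ≤ r)
    (mu : Fin (n + e + 1) →₀ ℕ) (hmu : Paper.tdeg mu = r)
    (hmusupp : ∀ i : Fin (n + e + 1), e ≤ (i : ℕ) → mu i = 0)
    (J I : Ideal (MvPolynomial (Fin (n + e + 1)) k))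
    (hJdef : J = Ideal.span {p | ∃ i : Fin (n + e + 1), (i : ℕ) < e ∧ p = MvPolynomial.X i})
    (hIdef : I = Ideal.span {MvPolynomial.monomial mu (1 : k)} ⊔ J ^ (r + 1)) :
    ∀ res : Paper.MinGradedFreeRes k (Fin (n + e + 1)) ↥I (Paper.idealDeg k I),
      res.β 0 (r : ℤ) = 1 ∧
      (∀ i : ℕ, i ≤ e - 1 →
        res.β i ((r : ℤ) + 1) =
          (e + r).choose (i + r + 1) * (r + i).choose r - e.choose (i + 1)) ∧
      (∀ (i : ℕ) (j : ℤ), ¬(i = 0 ∧ j = (r : ℤ)) →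
        ¬(i ≤ e - 1 ∧ j = (r : ℤ) + 1) → res.β i j = 0) := by
  classical
  intro res
  have hmu' : mu.degree = r := by
    rw [← hmu, Paper.tdeg, Finsupp.degree_apply]
    rfl
  have hI := BettiAux.mem_I_iff (k := k) (fun i : Fin (n + e + 1) => (i : ℕ) < e) J I hJdef mu r hIdef
  have hp : ∀ i : Fin (n + e + 1), ¬ ((i : ℕ) < e) → mu i = 0 := fun i hi => hmusupp i (by omega)
  have h1 : ∀ f ∈ I, MvPolynomial.constantCoeff f = 0 := by
    intro f hf
    by_contra h0
    have := BettiAux.Qm_deg _ mu r hmu' 0 ((hI f).mp hf 0 (MvPolynomial.mem_support_iff.mpr h0))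
    rw [map_zero] at this
    omega
  have hcard : Fintype.card {i : Fin (n + e + 1) // (i : ℕ) < e} = e - 1 + 1 := by
    rw [Fintype.card_subtype, Fin.card_filter_val_lt]
    omega
  have hcard2 : Fintype.card {i : Fin (n + e + 1) // ¬ (i : ℕ) < e} = n + 1 := by
    rw [Fintype.card_subtype_compl, hcard, Fintype.card_fin]
    omega
  obtain ⟨ha, hb, hc, hd⟩ := BettiAux.Aug_betti _ mu r hmu' hp
    (BettiAux.toAug res h1 _ hI) (e - 1) n hcard hcard2
  have hT : ∀ i : ℕ, (res.β i (r + 1) : ℤ) = BettiAux.Tb (e - 1) r i := by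
    intro i
    rw [← hd i, BettiAux.card_gB res h1 i (r + 1) _ (by ring)]
  have hzero : ∀ (i : ℕ) (j : ℤ), (∀ b : (BettiAux.toGC res h1).B (i + 1),
      (BettiAux.toGC res h1).deg (i + 1) b ≠ i + j) → res.β i j = 0 := by
    intro i j h
    rw [← BettiAux.card_gB res h1 i j _ rfl, Nat.card_eq_zero]
    left
    exact ⟨fun b => h b.1 b.2⟩
  have he' : e - 1 + 1 = e := by omega
  refine ⟨?_, ?_, ?_⟩
  · rw [← BettiAux.card_gB res h1 0 r r (by simp)]
    obtain ⟨b, hb1, hb2⟩ := hb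
    rw [Nat.card_eq_one_iff_unique]
    exact ⟨⟨fun x y => Subtype.ext ((hb2 _ x.2).trans (hb2 _ y.2).symm)⟩, ⟨⟨b, hb1⟩⟩⟩
  · intro i _
    have := hT i
    rw [BettiAux.Tb, he'] at this
    omega
  · intro i j hj1 hj2
    by_cases hj : j = r + 1
    · subst hj
      have := hT i
      have hi : e ≤ i := by
        by_contra h
        exact hj2 ⟨by omega, rfl⟩
      rw [BettiAux.Tb, he', Nat.choose_eq_zero_of_lt (n := e + r) (by omega),
        Nat.choose_eq_zero_of_lt (n := e) (by omega)] at this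
      simpa using this
    · apply hzero
      rcases i with _ | i
      · intro b h
        have h2 : (BettiAux.toGC res h1).deg 1 b = (0 : ℕ) + j := h
        push_cast at h2
        rcases ha b with h3 | h3
        · exact hj1 ⟨rfl, by omega⟩
        · omega
      · intro b h
        have h3 := hc i b
        have h2 : (BettiAux.toGC res h1).deg (i + 2) b = (i + 1 : ℕ) + j := h
        push_cast at h2
        omega
end

section
/- Let $S_0 = k[x_0,\ldots,x_{n+e}]$, $J = (x_0,\ldots,x_{e-1})$, $u$ a monomial in $x_0,\ldots,x_{e-1}$ of degree $r$, $v$ a non-constant monomial in $x_e,\ldots,x_{n+e}$ with $\deg(uv) > r+1$, and $I = (uv) + J^{r+1}$. Then $\beta^{S_0}_{i,r+1}(I) = \binom{e+r}{i+r+1}\binom{r+i}{r}$ for $0 \le i < e$, $\beta^{S_0}_{i,\deg(uv)}(I) = \binom{e}{i}$ for $0 \le i \le e$, and all other graded Betti numbers of $I$ vanish. -/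
set_option synthInstance.maxHeartbeats 1000000
set_option maxHeartbeats 2000000

namespace Betti

open MvPolynomial

section basics

variable {k : Type} [Field k] {σ : Type}

/-- the degree `d` component, for `d` an integer -/
noncomputable def hc (d : ℤ) : MvPolynomial σ k →ₗ[k] MvPolynomial σ k :=
  if 0 ≤ d then homogeneousComponent d.toNat else 0

theorem coeff_hc (d : ℤ) (p : MvPolynomial σ k) (m : σ →₀ ℕ) :
    coeff m (hc d p) = if ((Finsupp.degree m : ℕ) : ℤ) = d then coeff m p else 0 := by
  unfold hc
  split_ifs with h1 h2 h2
  · rw [coeff_homogeneousComponent, if_pos (by omega)]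
  · rw [coeff_homogeneousComponent, if_neg (by omega)]
  · omega
  · simp

theorem hc_eq_self_iff (d : ℤ) (p : MvPolynomial σ k) :
    hc d p = p ↔ ∀ m, coeff m p ≠ 0 → ((Finsupp.degree m : ℕ) : ℤ) = d := by
  constructor
  · intro h m hm
    by_contra hne
    apply hm
    rw [← h, coeff_hc, if_neg hne]
  · intro h
    ext m
    rw [coeff_hc]
    split_ifs with h1
    · rfl
    · by_contra h2
      exact h1 (h m (Ne.symm h2))

theorem hc_idem (d : ℤ) (p : MvPolynomial σ k) : hc d (hc d p) = hc d p := by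
  ext m
  simp only [coeff_hc]
  split_ifs <;> rfl

theorem hc_mul (a b : ℤ) (p q : MvPolynomial σ k) (hq : hc b q = q) :
    hc a (p * q) = hc (a - b) p * q := by
  classical
  rw [hc_eq_self_iff] at hq
  ext m
  rw [coeff_hc, coeff_mul, coeff_mul]
  have hsum : ∀ (P : Prop) [Decidable P] (F : (σ →₀ ℕ) × (σ →₀ ℕ) → k)
      (s : Finset ((σ →₀ ℕ) × (σ →₀ ℕ))),
      (if P then ∑ x ∈ s, F x else 0) = ∑ x ∈ s, if P then F x else 0 := by
    intro P _ F s
    split_ifs <;> simp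
  rw [hsum]
  apply Finset.sum_congr rfl
  rintro ⟨x, y⟩ hxy
  rw [Finset.HasAntidiagonal.mem_antidiagonal] at hxy
  simp only at hxy ⊢
  rw [coeff_hc]
  by_cases hy : coeff y q = 0
  · simp [hy]
  · have h1 := hq y hy
    have h2 : Finsupp.degree m = Finsupp.degree x + Finsupp.degree y := by
      rw [← hxy, map_add]
    by_cases h3 : ((Finsupp.degree m : ℕ) : ℤ) = a
    · rw [if_pos h3, if_pos (by omega)]
    · rw [if_neg h3, if_neg (by omega), zero_mul]

theorem constantCoeff_hc_zero (p : MvPolynomial σ k) :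
    constantCoeff (hc 0 p) = constantCoeff p := by
  rw [constantCoeff_eq, coeff_hc]; simp

theorem hc_zero_eq (p : MvPolynomial σ k) : hc 0 p = C (constantCoeff p) := by
  classical
  ext m
  rw [coeff_hc, coeff_C, constantCoeff_eq]
  by_cases h : m = 0
  · simp [h]
  · rw [if_neg, if_neg (Ne.symm h)]
    simpa [Finsupp.degree_eq_zero_iff] using h

theorem hc_neg (d : ℤ) (hd : d < 0) (p : MvPolynomial σ k) : hc d p = 0 := by
  unfold hc; rw [if_neg (by omega)]; simp

variable {ι κ κ' : Type}

/-- degree `t` component in a graded free module -/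
noncomputable def comp (deg : ι → ℤ) (t : ℤ) (f : ι → MvPolynomial σ k) : ι → MvPolynomial σ k :=
  fun i => hc (t - deg i) (f i)

theorem comp_idem (deg : ι → ℤ) (t : ℤ) (f : ι → MvPolynomial σ k) :
    comp deg t (comp deg t f) = comp deg t f := by
  funext i; exact hc_idem _ _

theorem comp_add (deg : ι → ℤ) (t : ℤ) (f g : ι → MvPolynomial σ k) :
    comp deg t (f + g) = comp deg t f + comp deg t g := by
  funext i; simp [comp]

theorem comp_zero (deg : ι → ℤ) (t : ℤ) :
    comp deg t (0 : ι → MvPolynomial σ k) = 0 := by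
  funext i; simp [comp]

theorem comp_sum (deg : ι → ℤ) (t : ℤ) {α : Type} (s : Finset α)
    (f : α → ι → MvPolynomial σ k) :
    comp deg t (∑ a ∈ s, f a) = ∑ a ∈ s, comp deg t (f a) := by
  funext i; simp [comp]

theorem comp_smul (deg : ι → ℤ) (t a : ℤ) (p : MvPolynomial σ k) (v : ι → MvPolynomial σ k)
    (hv : comp deg a v = v) : comp deg t (p • v) = hc (t - a) p • v := by
  funext i
  have h := congrFun hv i
  simp only [comp] at h
  simp only [comp, Pi.smul_apply, smul_eq_mul]
  rw [hc_mul _ _ _ _ h]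
  congr 2; ring_nf

/-- graded maps of degree zero -/
def Gr (dg : κ → ℤ) (deg : ι → ℤ)
    (φ : (κ → MvPolynomial σ k) →ₗ[MvPolynomial σ k] (ι → MvPolynomial σ k)) : Prop :=
  ∀ t f, φ (comp dg t f) = comp deg t (φ f)

theorem comp_single [DecidableEq κ] (dg : κ → ℤ) (s : κ) :
    comp dg (dg s) (Pi.single s (1 : MvPolynomial σ k)) = Pi.single s 1 := by
  funext i
  simp only [comp]
  by_cases h : i = s
  · subst h; simp [hc_zero_eq]
  · simp [Pi.single_eq_of_ne h]

theorem Gr_linComb [Fintype κ] (dg : κ → ℤ) (deg : ι → ℤ) (v : κ → ι → MvPolynomial σ k)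
    (hv : ∀ s, comp deg (dg s) (v s) = v s) :
    Gr dg deg (Fintype.linearCombination (MvPolynomial σ k) v) := by
  intro t f
  rw [Fintype.linearCombination_apply, Fintype.linearCombination_apply, comp_sum]
  apply Finset.sum_congr rfl
  intro s _
  rw [comp_smul _ _ _ _ _ (hv s)]
  rfl

theorem Gr_comp {dg : κ → ℤ} {dg' : κ' → ℤ} {deg : ι → ℤ}
    {φ : (κ → MvPolynomial σ k) →ₗ[MvPolynomial σ k] (ι → MvPolynomial σ k)}
    {ψ : (κ' → MvPolynomial σ k) →ₗ[MvPolynomial σ k] (κ → MvPolynomial σ k)}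
    (h : Gr dg deg φ) (h' : Gr dg' dg ψ) : Gr dg' deg (φ ∘ₗ ψ) := by
  intro t f
  simp only [LinearMap.comp_apply]
  rw [h', h]

/-- recursive definition: `N` has minimal graded Betti numbers `b` (total degrees),
checked for `p` steps. -/
def HasB (k : Type) [Field k] (σ : Type) : (p : ℕ) → (ι : Type) → (ι → ℤ) →
    Submodule (MvPolynomial σ k) (ι → MvPolynomial σ k) → (ℕ → ℤ → ℕ) → Prop
  | 0, _, _, _, _ => True
  | p + 1, ι, deg, N, b => ∃ (κ : Type) (_ : Fintype κ) (dg : κ → ℤ)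
      (φ : (κ → MvPolynomial σ k) →ₗ[MvPolynomial σ k] (ι → MvPolynomial σ k)),
      LinearMap.range φ = N ∧ Gr dg deg φ ∧
      (∀ f, φ f = 0 → ∀ s, constantCoeff (f s) = 0) ∧
      (∀ t, Nat.card {s // dg s = t} = b 0 t) ∧
      HasB k σ p κ dg (LinearMap.ker φ) (fun i => b (i + 1))

theorem HasB_map {p : ℕ} {dg : κ → ℤ} {deg : ι → ℤ}
    {N : Submodule (MvPolynomial σ k) (κ → MvPolynomial σ k)} {b : ℕ → ℤ → ℕ}
    (h : HasB k σ p κ dg N b)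
    (θ : (κ → MvPolynomial σ k) →ₗ[MvPolynomial σ k] (ι → MvPolynomial σ k))
    (hθ : Gr dg deg θ) (hinj : ∀ f ∈ N, θ f = 0 → f = 0) :
    HasB k σ p ι deg (N.map θ) b := by
  cases p with
  | zero => trivial
  | succ p =>
    obtain ⟨κ', hf, dg', φ, hr, hg, hm, hc, hk⟩ := h
    have hker : LinearMap.ker (θ ∘ₗ φ) = LinearMap.ker φ := by
      ext f
      simp only [LinearMap.mem_ker, LinearMap.comp_apply]
      constructor
      · intro h
        exact hinj _ (hr ▸ LinearMap.mem_range_self φ f) h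
      · intro h; rw [h, map_zero]
    refine ⟨κ', hf, dg', θ ∘ₗ φ, ?_, Gr_comp hθ hg, ?_, hc, ?_⟩
    · rw [LinearMap.range_comp, hr]
    · intro f hf
      have : f ∈ LinearMap.ker (θ ∘ₗ φ) := hf
      rw [hker] at this
      exact hm f this
    · rw [hker]; exact hk

theorem HasB_shift {p : ℕ} (d : ℤ) : ∀ {ι : Type} {deg : ι → ℤ}
    {N : Submodule (MvPolynomial σ k) (ι → MvPolynomial σ k)} {b : ℕ → ℤ → ℕ}
    (_ : HasB k σ p ι deg N b),
    HasB k σ p ι (fun i => deg i + d) N (fun i t => b i (t - d)) := by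
  induction p with
  | zero => intros; trivial
  | succ p ih =>
    rintro ι deg N b ⟨κ, hf, dg, φ, hr, hg, hm, hc, hk⟩
    refine ⟨κ, hf, fun s => dg s + d, φ, hr, ?_, hm, ?_, ih hk⟩
    · intro t f
      have := hg (t - d) f
      have e1 : ∀ (α : Type) (dd : α → ℤ) (f : α → MvPolynomial σ k),
          comp (fun s => dd s + d) t f = comp dd (t - d) f := by
        intro α dd f; funext i; simp only [comp]; congr 2; ring
      rw [e1, e1, this]
    · intro t
      refine Eq.trans ?_ (hc (t - d))
      apply Nat.card_congr
      exact Equiv.subtypeEquivRight (fun s => by show dg s + d = t ↔ dg s = t - d; omega)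

theorem pi_eq_sum [Fintype κ] [DecidableEq κ]  (f : κ → MvPolynomial σ k) :
    f = ∑ i, f i • Pi.single i (1 : MvPolynomial σ k) := pi_eq_sum_univ' f

theorem bij_of_unip [Fintype κ] (dg : κ → ℤ)
    (ψ : (κ → MvPolynomial σ k) →ₗ[MvPolynomial σ k] (κ → MvPolynomial σ k))
    (hg : Gr dg dg ψ) (hu : ∀ f s, constantCoeff (ψ f s) = constantCoeff (f s)) :
    Function.Bijective ψ := by
  classical
  have hs : Function.Surjective ψ := by
    have key : ∀ s, Pi.single s (1 : MvPolynomial σ k) ∈ LinearMap.range ψ := by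
      have wf : WellFounded (fun a b : κ => dg a < dg b) :=
        haveI : IsTrans κ (fun a b : κ => dg a < dg b) := ⟨fun a b c h h' => lt_trans h h'⟩
        haveI : Std.Irrefl (fun a b : κ => dg a < dg b) := ⟨fun a h => lt_irrefl _ h⟩
        Finite.wellFounded_of_trans_of_irrefl _
      intro s
      induction s using wf.induction with
      | _ s ih =>
        set e : κ → MvPolynomial σ k := Pi.single s 1 with he
        have h1 : comp dg (dg s) (ψ e) = ψ e := by
          rw [← hg, he, comp_single]
        have h2 : e = ψ e - ∑ t, (ψ e - e) t • Pi.single t (1 : MvPolynomial σ k) := by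
          rw [← pi_eq_sum]; simp
        rw [h2]
        refine Submodule.sub_mem _ (LinearMap.mem_range_self _ _) (Submodule.sum_mem _ ?_)
        intro t _
        by_cases ht : dg t < dg s
        · exact Submodule.smul_mem _ _ (ih t ht)
        · have : (ψ e - e) t = 0 := by
            have h3 : hc (dg s - dg t) ((ψ e - e) t) = (ψ e - e) t := by
              have := congrFun h1 t
              have h4 := congrFun (comp_single (k := k) (σ := σ) dg s) t
              simp only [comp] at this h4
              rw [Pi.sub_apply, map_sub, this, he, h4]
            rcases lt_or_eq_of_le (not_lt.mp ht) with h5 | h5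
            · rw [← h3]; exact hc_neg _ (by omega) _
            · rw [← h3, h5, sub_self, hc_zero_eq, Pi.sub_apply, map_sub, hu, sub_self, map_zero]
          rw [this, zero_smul]; exact Submodule.zero_mem _
    intro f
    have : f ∈ LinearMap.range ψ := by
      rw [pi_eq_sum f]
      exact Submodule.sum_mem _ (fun i _ => Submodule.smul_mem _ _ (key i))
    exact this
  exact ⟨OrzechProperty.injective_of_surjective_endomorphism ψ hs, hs⟩

theorem linComb_single [Fintype κ] [DecidableEq κ] {M : Type} [AddCommGroup M]
    [Module (MvPolynomial σ k) M] (v : κ → M) (s : κ) :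
    Fintype.linearCombination (MvPolynomial σ k) v (Pi.single s 1) = v s := by
  rw [Fintype.linearCombination_apply_single, one_smul]

theorem exists_lift [Fintype κ] {dg : κ → ℤ} {dg' : κ' → ℤ} {deg : ι → ℤ}
    {φ : (κ → MvPolynomial σ k) →ₗ[MvPolynomial σ k] (ι → MvPolynomial σ k)}
    {φ' : (κ' → MvPolynomial σ k) →ₗ[MvPolynomial σ k] (ι → MvPolynomial σ k)}
    (N : Submodule (MvPolynomial σ k) (κ' → MvPolynomial σ k))
    (hN : ∀ f ∈ N, ∀ t, comp dg' t f ∈ N)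
    (hg : Gr dg deg φ) (hg' : Gr dg' deg φ') (hle : LinearMap.range φ ≤ N.map φ') :
    ∃ α : (κ → MvPolynomial σ k) →ₗ[MvPolynomial σ k] (κ' → MvPolynomial σ k),
      Gr dg dg' α ∧ φ' ∘ₗ α = φ ∧ LinearMap.range α ≤ N := by
  classical
  have : ∀ s : κ, ∃ y ∈ N, φ' y = φ (Pi.single s 1) := by
    intro s
    exact hle (LinearMap.mem_range_self φ (Pi.single s 1))
  choose y hyN hy using this
  refine ⟨Fintype.linearCombination _ (fun s => comp dg' (dg s) (y s)), ?_, ?_, ?_⟩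
  · apply Gr_linComb
    intro s
    exact comp_idem _ _ _
  · apply LinearMap.pi_ext'
    intro s
    apply LinearMap.ext_ring
    simp only [LinearMap.comp_apply, LinearMap.coe_single]
    rw [linComb_single, hg', hy, ← hg, comp_single]
  · rintro _ ⟨f, rfl⟩
    rw [Fintype.linearCombination_apply]
    exact Submodule.sum_mem _ (fun s _ => Submodule.smul_mem _ _ (hN _ (hyN s) _))

theorem cc_linear [Fintype κ] [DecidableEq κ]
    (α : (κ → MvPolynomial σ k) →ₗ[MvPolynomial σ k] (κ' → MvPolynomial σ k))
    (f : κ → MvPolynomial σ k) (u : κ') :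
    constantCoeff (α f u) =
      ∑ s, constantCoeff (f s) * constantCoeff (α (Pi.single s 1) u) := by
  conv_lhs => rw [pi_eq_sum f]
  simp [map_sum]

theorem cc_zero_of_deg [DecidableEq κ] {dg : κ → ℤ} {dg' : κ' → ℤ}
    {α : (κ → MvPolynomial σ k) →ₗ[MvPolynomial σ k] (κ' → MvPolynomial σ k)}
    (hg : Gr dg dg' α) (s : κ) (u : κ') (h : dg s ≠ dg' u) :
    constantCoeff (α (Pi.single s 1) u) = 0 := by
  have h1 : comp dg' (dg s) (α (Pi.single s 1)) = α (Pi.single s 1) := by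
    rw [← hg, comp_single]
  rw [← h1]
  simp only [comp]
  rw [constantCoeff_eq, coeff_hc, if_neg]
  simp only [map_zero, Nat.cast_zero]
  omega

theorem card_eq_aux [Fintype κ] [Fintype κ'] {dg : κ → ℤ} {dg' : κ' → ℤ}
    {α : (κ → MvPolynomial σ k) →ₗ[MvPolynomial σ k] (κ' → MvPolynomial σ k)}
    {β : (κ' → MvPolynomial σ k) →ₗ[MvPolynomial σ k] (κ → MvPolynomial σ k)}
    (hα : Gr dg dg' α) (hβ : Gr dg' dg β)
    (h1 : ∀ f s, constantCoeff (β (α f) s) = constantCoeff (f s))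
    (h2 : ∀ f s, constantCoeff (α (β f) s) = constantCoeff (f s)) (t : ℤ) :
    Nat.card {s // dg s = t} = Nat.card {s // dg' s = t} := by
  classical
  have key : ∀ (κ κ' : Type) [Fintype κ] [Fintype κ'] (dg : κ → ℤ) (dg' : κ' → ℤ)
    (α : (κ → MvPolynomial σ k) →ₗ[MvPolynomial σ k] (κ' → MvPolynomial σ k))
    (β : (κ' → MvPolynomial σ k) →ₗ[MvPolynomial σ k] (κ → MvPolynomial σ k))
    (_ : Gr dg dg' α) (_ : Gr dg' dg β)
    (_ : ∀ f s, constantCoeff (β (α f) s) = constantCoeff (f s)),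
    (Matrix.of fun (s : {s // dg s = t}) (u : {u // dg' u = t}) =>
      constantCoeff (α (Pi.single s.1 1) u.1)) *
    (Matrix.of fun (u : {u // dg' u = t}) (s : {s // dg s = t}) =>
      constantCoeff (β (Pi.single u.1 1) s.1)) = 1 := by
    intro κ κ' _ _ dg dg' α β hα hβ h
    ext ⟨s, hs⟩ ⟨s', hs'⟩
    rw [Matrix.mul_apply]
    simp only [Matrix.of_apply]
    have e1 := h (Pi.single s 1) s'
    rw [cc_linear] at e1
    have e2 : ∀ F : κ' → k, (∀ u, F u ≠ 0 → dg' u = t) →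
        ∑ u : {u // dg' u = t}, F u.1 = ∑ u, F u := by
      intro F hF
      rw [← Finset.sum_filter_of_ne (p := fun u => dg' u = t) (fun u _ hu => hF u hu)]
      exact (Finset.sum_subtype _ (by simp) F).symm
    rw [e2 (fun u => constantCoeff (α (Pi.single s 1) u) * constantCoeff (β (Pi.single u 1) s')),
      e1]
    · by_cases hss : s = s'
      · subst hss; simp
      · rw [Pi.single_eq_of_ne (Ne.symm hss), Matrix.one_apply_ne]
        · simp
        · simpa using hss
    · intro u hu
      by_contra hne
      apply hu
      rw [cc_zero_of_deg hα s u (by omega), zero_mul]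
  rw [Nat.card_eq_fintype_card, Nat.card_eq_fintype_card]
  exact Matrix.square_of_invertible _ _ (key _ _ dg dg' α β hα hβ h1) (key _ _ dg' dg β α hβ hα h2)

theorem HasB_unique {p : ℕ} : ∀ {ι : Type} {deg : ι → ℤ}
    {N : Submodule (MvPolynomial σ k) (ι → MvPolynomial σ k)} {b b' : ℕ → ℤ → ℕ}
    (_ : HasB k σ p ι deg N b) (_ : HasB k σ p ι deg N b'), ∀ i < p, b i = b' i := by
  induction p with
  | zero => intro _ _ _ _ _ _ _ i hi; omega
  | succ p ih =>
    rintro ι deg N b b' ⟨κ, hf, dg, φ, hr, hg, hm, hc, hk⟩ ⟨κ', hf', dg', φ', hr', hg', hm', hc', hk'⟩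
    obtain ⟨α, hα, hα2, -⟩ := exists_lift (φ := φ) (φ' := φ') ⊤ (fun _ _ _ => trivial) hg hg'
      (by rw [Submodule.map_top, hr, hr'])
    obtain ⟨β, hβ, hβ2, -⟩ := exists_lift (φ := φ') (φ' := φ) ⊤ (fun _ _ _ => trivial) hg' hg
      (by rw [Submodule.map_top, hr, hr'])
    have a1 : ∀ f, φ' (α f) = φ f := fun f => by rw [← hα2]; rfl
    have a2 : ∀ f, φ (β f) = φ' f := fun f => by rw [← hβ2]; rfl
    have h1 : ∀ f s, constantCoeff (β (α f) s) = constantCoeff (f s) := by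
      intro f s
      have := hm (β (α f) - f) (by rw [map_sub, a2, a1, sub_self]) s
      rw [Pi.sub_apply, map_sub] at this
      exact sub_eq_zero.mp this
    have h2 : ∀ f s, constantCoeff (α (β f) s) = constantCoeff (f s) := by
      intro f s
      have := hm' (α (β f) - f) (by rw [map_sub, a1, a2, sub_self]) s
      rw [Pi.sub_apply, map_sub] at this
      exact sub_eq_zero.mp this
    have b1 := bij_of_unip dg (β ∘ₗ α) (Gr_comp hβ hα) h1
    have b2 := bij_of_unip dg' (α ∘ₗ β) (Gr_comp hα hβ) h2
    have hinj : Function.Injective α := by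
      have := b1.1; rw [LinearMap.coe_comp] at this; exact this.of_comp
    have hsurj : Function.Surjective α := by
      have := b2.2; rw [LinearMap.coe_comp] at this; exact this.of_comp
    have hkm : (LinearMap.ker φ).map α = LinearMap.ker φ' := by
      ext g
      constructor
      · rintro ⟨f, hf, rfl⟩
        have : φ f = 0 := hf
        rw [LinearMap.mem_ker, a1, this]
      · intro hgk
        obtain ⟨f, rfl⟩ := hsurj g
        refine ⟨f, ?_, rfl⟩
        have : φ' (α f) = 0 := hgk
        rw [a1] at this; exact this
    have hk2 := HasB_map hk α hα (fun f _ h => hinj (by rw [h, map_zero]))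
    rw [hkm] at hk2
    have := ih hk2 hk'
    intro i hi
    cases i with
    | zero =>
      funext t
      rw [← hc, ← hc']
      exact card_eq_aux hα hβ h1 h2 t
    | succ i => exact this i (by omega)

end basics

section horseshoe

variable {k : Type} [Field k] {σ : Type}

/-- inclusion of the first summand -/
noncomputable def jn (k : Type) [Field k] (σ α β : Type) :
    (α → MvPolynomial σ k) →ₗ[MvPolynomial σ k] (α ⊕ β → MvPolynomial σ k) where
  toFun f := Sum.elim f 0
  map_add' f g := by ext (i | i) <;> simp
  map_smul' c f := by ext (i | i) <;> simp

/-- restriction to the first summand -/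
noncomputable def pr1 (k : Type) [Field k] (σ α β : Type) :
    (α ⊕ β → MvPolynomial σ k) →ₗ[MvPolynomial σ k] (α → MvPolynomial σ k) where
  toFun f := fun i => f (Sum.inl i)
  map_add' f g := by ext i; simp
  map_smul' c f := by ext i; simp

/-- restriction to the second summand -/
noncomputable def pr2 (k : Type) [Field k] (σ α β : Type) :
    (α ⊕ β → MvPolynomial σ k) →ₗ[MvPolynomial σ k] (β → MvPolynomial σ k) where
  toFun f := fun i => f (Sum.inr i)
  map_add' f g := by ext i; simp
  map_smul' c f := by ext i; simp

theorem Gr_jn {α β : Type} (dα : α → ℤ) (dβ : β → ℤ) :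
    Gr dα (Sum.elim dα dβ) (jn k σ α β) := by
  intro t f
  funext i
  rcases i with i | i <;> simp [jn, comp]

theorem Gr_pr1 {α β : Type} (dα : α → ℤ) (dβ : β → ℤ) :
    Gr (Sum.elim dα dβ) dα (pr1 k σ α β) := by
  intro t f
  funext i
  simp [pr1, comp]

theorem Gr_pr2 {α β : Type} (dα : α → ℤ) (dβ : β → ℤ) :
    Gr (Sum.elim dα dβ) dβ (pr2 k σ α β) := by
  intro t f
  funext i
  simp [pr2, comp]

/-- the horseshoe statement -/
def Horse (k : Type) [Field k] (σ : Type) (p : ℕ) : Prop :=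
  ∀ (α β : Type) (dα : α → ℤ) (dβ : β → ℤ)
    (B : Submodule (MvPolynomial σ k) (α ⊕ β → MvPolynomial σ k))
    (_ : ∀ f ∈ B, ∀ t, comp (Sum.elim dα dβ) t f ∈ B) (a c : ℕ → ℤ → ℕ)
    (_ : HasB k σ p α dα (B.comap (jn k σ α β)) a)
    (_ : HasB k σ p β dβ (B.map (pr2 k σ α β)) c)
    (_ : ∀ i t t', a i t ≠ 0 → c i t' ≠ 0 → t ≤ t'),
    HasB k σ p (α ⊕ β) (Sum.elim dα dβ) B (fun i t => a i t + c i t)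

theorem core {p : ℕ} (Hp : Horse k σ p) {ι α β : Type} [Fintype α] [Fintype β]
    {deg : ι → ℤ} {dα : α → ℤ} {dβ : β → ℤ}
    {φ : (α → MvPolynomial σ k) →ₗ[MvPolynomial σ k] (ι → MvPolynomial σ k)}
    {l : (β → MvPolynomial σ k) →ₗ[MvPolynomial σ k] (ι → MvPolynomial σ k)}
    (hφ : Gr dα deg φ) (hl : Gr dβ deg l)
    (hmA : ∀ f, φ f = 0 → ∀ s, constantCoeff (f s) = 0)
    (hmC : ∀ f, l f ∈ LinearMap.range φ → ∀ s, constantCoeff (f s) = 0)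
    (hle : ∀ s u, dα s ≤ dβ u)
    {a c b : ℕ → ℤ → ℕ}
    (HA : HasB k σ p α dα (LinearMap.ker φ) (fun i => a (i + 1)))
    (HC : HasB k σ p β dβ ((LinearMap.range φ).comap l) (fun i => c (i + 1)))
    (hα : ∀ t, Nat.card {s // dα s = t} = a 0 t)
    (hβ : ∀ t, Nat.card {s // dβ s = t} = c 0 t)
    (hac : ∀ i t t', a (i + 1) t ≠ 0 → c (i + 1) t' ≠ 0 → t ≤ t')
    (hb : ∀ i t, b i t = a i t + c i t) :
    HasB k σ (p + 1) ι deg (LinearMap.range φ ⊔ LinearMap.range l) b := by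
  have hbe : b = fun i t => a i t + c i t := by funext i t; exact hb i t
  subst hbe
  let Φ : (α ⊕ β → MvPolynomial σ k) →ₗ[MvPolynomial σ k] (ι → MvPolynomial σ k) :=
    φ ∘ₗ pr1 k σ α β + l ∘ₗ pr2 k σ α β
  have hΦ : ∀ f, Φ f = φ (pr1 k σ α β f) + l (pr2 k σ α β f) := fun f => rfl
  have hG : Gr (Sum.elim dα dβ) deg Φ := by
    intro t f
    rw [hΦ, hΦ, Gr_pr1, Gr_pr2, hφ, hl, comp_add]
  have hK : ∀ f ∈ LinearMap.ker Φ, ∀ t, comp (Sum.elim dα dβ) t f ∈ LinearMap.ker Φ := by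
    intro f hf t
    rw [LinearMap.mem_ker] at hf ⊢
    rw [hG, hf, comp_zero]
  have hin : ∀ f, Φ (jn k σ α β f) = φ f := by
    intro f
    rw [hΦ]
    have e1 : pr1 k σ α β (jn k σ α β f) = f := rfl
    have e2 : pr2 k σ α β (jn k σ α β f) = 0 := rfl
    rw [e1, e2, map_zero, add_zero]
  have hkerA : (LinearMap.ker Φ).comap (jn k σ α β) = LinearMap.ker φ := by
    ext f
    rw [Submodule.mem_comap, LinearMap.mem_ker, LinearMap.mem_ker, hin]
  have hkerC : (LinearMap.ker Φ).map (pr2 k σ α β) = (LinearMap.range φ).comap l := by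
    ext f
    constructor
    · rintro ⟨g, hg, rfl⟩
      have hg' : Φ g = 0 := hg
      rw [hΦ] at hg'
      refine ⟨- pr1 k σ α β g, ?_⟩
      rw [map_neg, neg_eq_iff_add_eq_zero]
      exact hg'
    · rintro ⟨g, hg⟩
      refine ⟨Sum.elim (-g) f, ?_, rfl⟩
      have e1 : pr1 k σ α β (Sum.elim (-g) f) = -g := rfl
      have e2 : pr2 k σ α β (Sum.elim (-g) f) = f := rfl
      show Φ _ = 0
      rw [hΦ, e1, e2, map_neg, hg, neg_add_cancel]
  refine ⟨α ⊕ β, inferInstance, Sum.elim dα dβ, Φ, ?_, hG, ?_, ?_, ?_⟩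
  · apply le_antisymm
    · rintro _ ⟨f, rfl⟩
      rw [hΦ]
      exact Submodule.add_mem_sup (LinearMap.mem_range_self _ _) (LinearMap.mem_range_self _ _)
    · apply sup_le
      · rintro _ ⟨f, rfl⟩
        exact ⟨_, hin f⟩
      · rintro _ ⟨f, rfl⟩
        refine ⟨Sum.elim 0 f, ?_⟩
        have e1 : pr1 k σ α β (Sum.elim 0 f) = 0 := rfl
        have e2 : pr2 k σ α β (Sum.elim 0 f) = f := rfl
        rw [hΦ, e1, e2, map_zero, zero_add]
  · have hC : ∀ f, Φ f = 0 → ∀ u, constantCoeff (f (Sum.inr u)) = 0 := by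
      intro f hf u
      have : pr2 k σ α β f ∈ (LinearMap.range φ).comap l := by
        rw [← hkerC]; exact ⟨f, hf, rfl⟩
      exact hmC _ this u
    intro f hf s
    rcases s with s | u
    · have h1 : Φ (comp (Sum.elim dα dβ) (dα s) f) = 0 := hK f hf _
      set g := comp (Sum.elim dα dβ) (dα s) f with hg
      have h2 : constantCoeff (g (Sum.inl s)) = constantCoeff (f (Sum.inl s)) := by
        simp only [hg, comp, Sum.elim_inl, sub_self]
        exact constantCoeff_hc_zero _
      have h3 : g = jn k σ α β (pr1 k σ α β g) := by
        funext i
        rcases i with i | i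
        · rfl
        · show g (Sum.inr i) = 0
          have h4 := hC g h1 i
          have h5 : g (Sum.inr i) = hc (dα s - dβ i) (f (Sum.inr i)) := rfl
          have h6 := hle s i
          rcases lt_or_eq_of_le h6 with h7 | h7
          · rw [h5]; exact hc_neg _ (by omega) _
          · rw [h7, sub_self] at h5
            rw [h5, constantCoeff_hc_zero] at h4
            rw [h5, hc_zero_eq, h4, map_zero]
      rw [← h2]
      rw [h3, hin] at h1
      exact hmA _ h1 s
    · exact hC f hf u
  · intro t
    show _ = a 0 t + c 0 t
    rw [← hα, ← hβ, ← Nat.card_sum]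
    exact Nat.card_congr Equiv.subtypeSum
  · apply Hp α β dα dβ (LinearMap.ker Φ) hK _ _ _ _ hac
    · rw [hkerA]; exact HA
    · rw [hkerC]; exact HC

theorem exists_of_card {β : Type} {d : β → ℤ} {c : ℤ → ℕ} [Fintype β]
    (h : ∀ t, Nat.card {s // d s = t} = c t) (s : β) : c (d s) ≠ 0 := by
  rw [← h]
  have : Nonempty {s' // d s' = d s} := ⟨⟨s, rfl⟩⟩
  exact Nat.card_pos.ne'

theorem horse (p : ℕ) : Horse k σ p := by
  induction p with
  | zero => intro α β dα dβ B hB a c _ _ _; trivial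
  | succ p ih =>
    intro α β dα dβ B hB a c HA HC hac
    obtain ⟨κA, _, dA, φA, hrA, hgA, hmA, hcA, hkA⟩ := HA
    obtain ⟨κC, _, dC, φC, hrC, hgC, hmC, hcC, hkC⟩ := HC
    obtain ⟨l, hl, hl2, hl3⟩ := exists_lift (φ := φC) (φ' := pr2 k σ α β) B hB hgC
      (Gr_pr2 dα dβ) hrC.le
    have e2 : ∀ f, pr2 k σ α β (l f) = φC f := fun f => by rw [← hl2]; rfl
    have hker : LinearMap.ker (jn k σ α β ∘ₗ φA) = LinearMap.ker φA := by
      ext f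
      rw [LinearMap.mem_ker, LinearMap.mem_ker, LinearMap.comp_apply]
      constructor
      · intro h
        have : pr1 k σ α β (jn k σ α β (φA f)) = 0 := by rw [h, map_zero]
        exact this
      · intro h; rw [h, map_zero]
    have hrange : ∀ g, g ∈ LinearMap.range (jn k σ α β ∘ₗ φA) ↔ g ∈ B ∧ pr2 k σ α β g = 0 := by
      intro g
      constructor
      · rintro ⟨f, rfl⟩
        refine ⟨?_, rfl⟩
        have : φA f ∈ B.comap (jn k σ α β) := by rw [← hrA]; exact LinearMap.mem_range_self _ _
        exact this
      · rintro ⟨h1, h2⟩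
        have h3 : g = jn k σ α β (pr1 k σ α β g) := by
          funext i
          rcases i with i | i
          · rfl
          · exact congrFun h2 i
        have h4 : pr1 k σ α β g ∈ B.comap (jn k σ α β) := by
          rw [Submodule.mem_comap, ← h3]; exact h1
        rw [← hrA] at h4
        obtain ⟨f, hf⟩ := h4
        exact ⟨f, by rw [LinearMap.comp_apply, hf, ← h3]⟩
    have hcomap : (LinearMap.range (jn k σ α β ∘ₗ φA)).comap l = LinearMap.ker φC := by
      ext f
      rw [Submodule.mem_comap, hrange, e2, LinearMap.mem_ker]
      exact ⟨fun h => h.2, fun h => ⟨hl3 (LinearMap.mem_range_self _ _), h⟩⟩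
    have hB2 : B = LinearMap.range (jn k σ α β ∘ₗ φA) ⊔ LinearMap.range l := by
      apply le_antisymm
      · intro g hg
        have h1 : pr2 k σ α β g ∈ LinearMap.range φC := by rw [hrC]; exact ⟨g, hg, rfl⟩
        obtain ⟨f, hf⟩ := h1
        have h2 : g = (g - l f) + l f := by simp
        rw [h2]
        refine Submodule.add_mem_sup ?_ (LinearMap.mem_range_self _ _)
        rw [hrange]
        refine ⟨B.sub_mem hg (hl3 (LinearMap.mem_range_self _ _)), ?_⟩
        rw [map_sub, e2, hf, sub_self]
      · apply sup_le _ hl3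
        intro g hg
        exact ((hrange g).1 hg).1
    rw [hB2]
    refine core ih (Gr_comp (Gr_jn dα dβ) hgA) hl ?_ ?_ ?_ (a := a) (c := c) ?_ ?_ hcA hcC
      (fun i t t' => hac (i + 1) t t') (fun i t => rfl)
    · intro f hf
      have : f ∈ LinearMap.ker (jn k σ α β ∘ₗ φA) := hf
      rw [hker] at this
      exact hmA f this
    · intro f hf
      have : f ∈ (LinearMap.range (jn k σ α β ∘ₗ φA)).comap l := hf
      rw [hcomap] at this
      exact hmC f this
    · intro s u
      exact hac 0 _ _ (exists_of_card hcA s) (exists_of_card hcC u)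
    · rw [hker]; exact hkA
    · rw [hcomap]; exact hkC

/-- an ideal as a submodule of the free module of rank one -/
noncomputable def idl {k : Type} [Field k] {σ : Type} (I : Ideal (MvPolynomial σ k)) :
    Submodule (MvPolynomial σ k) (Unit → MvPolynomial σ k) :=
  Submodule.comap (LinearMap.proj ()) I

theorem mem_idl (I : Ideal (MvPolynomial σ k)) (f : Unit → MvPolynomial σ k) :
    f ∈ idl I ↔ f () ∈ I := Iff.rfl

theorem HasB_bot (p : ℕ) : ∀ (ι : Type) (deg : ι → ℤ),
    HasB k σ p ι deg ⊥ (fun _ _ => 0) := by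
  induction p with
  | zero => intros; trivial
  | succ p ih =>
    intro ι deg
    refine ⟨Empty, inferInstance, fun _ => 0, 0, LinearMap.range_zero, ?_, ?_, ?_, ?_⟩
    · intro t f; simp [comp_zero]
    · intro f _ s; exact s.elim
    · intro t
      exact Nat.card_of_isEmpty
    · have : LinearMap.ker (0 : (Empty → MvPolynomial σ k) →ₗ[MvPolynomial σ k]
          (ι → MvPolynomial σ k)) = ⊥ := by
        ext f
        simp [Subsingleton.elim f 0]
      rw [this]
      exact ih _ _

theorem addGen {p : ℕ} {I P : Ideal (MvPolynomial σ k)} {m : MvPolynomial σ k} {d : ℤ}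
    (hm : hc d m = m) (hP : ∀ f, f ∈ P ↔ f * m ∈ I)
    (hP0 : ∀ f ∈ P, constantCoeff f = 0)
    {a c b : ℕ → ℤ → ℕ}
    (HI : HasB k σ (p + 1) Unit (fun _ => 0) (idl I) a)
    (HP : HasB k σ p Unit (fun _ => 0) (idl P) c)
    (ha : ∀ i t, a i t ≠ 0 → t ≤ i + d)
    (hcc : ∀ i t, c i t ≠ 0 → (i : ℤ) + 1 ≤ t)
    (hb0 : ∀ t, b 0 t = a 0 t + if t = d then 1 else 0)
    (hb : ∀ i t, b (i + 1) t = a (i + 1) t + c i (t - d)) :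
    HasB k σ (p + 1) Unit (fun _ => 0) (idl (I ⊔ Ideal.span {m})) b := by
  obtain ⟨κ, _, dg, φ, hr, hg, hmin, hcard, hk⟩ := HI
  let l : (Unit → MvPolynomial σ k) →ₗ[MvPolynomial σ k] (Unit → MvPolynomial σ k) :=
    Fintype.linearCombination (MvPolynomial σ k) (fun _ => fun _ => m)
  have hl : ∀ f, l f = fun _ => f () * m := by
    intro f
    funext u
    simp [l, Fintype.linearCombination_apply]
  have hlG : Gr (fun _ : Unit => d) (fun _ => 0) l := by
    apply Gr_linComb
    intro s
    funext u
    simp only [comp, sub_zero]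
    exact hm
  have hmem : ∀ f, l f ∈ LinearMap.range φ ↔ f () ∈ P := by
    intro f
    rw [hr, mem_idl, hl, hP]
  have hcm : (LinearMap.range φ).comap l = idl P := by
    ext f
    rw [Submodule.mem_comap, hmem, mem_idl]
  have hsup : idl (I ⊔ Ideal.span {m}) = LinearMap.range φ ⊔ LinearMap.range l := by
    rw [hr]
    apply le_antisymm
    · intro f hf
      rw [mem_idl, Submodule.mem_sup] at hf
      obtain ⟨x, hx, y, hy, hxy⟩ := hf
      rw [Ideal.mem_span_singleton'] at hy
      obtain ⟨q, rfl⟩ := hy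
      have : f = (fun _ => x) + l (fun _ => q) := by
        rw [hl]; funext u; exact hxy.symm
      rw [this]
      exact Submodule.add_mem_sup (show (fun _ => x) ∈ idl I from hx) (LinearMap.mem_range_self _ _)
    · apply sup_le
      · intro f hf
        exact Ideal.mem_sup_left (show f () ∈ I from hf)
      · rintro _ ⟨f, rfl⟩
        rw [mem_idl, hl]
        exact Ideal.mem_sup_right (Ideal.mul_mem_left _ _ (Ideal.mem_span_singleton_self m))
  rw [hsup]
  refine core (horse p) hg hlG hmin ?_ ?_ (a := a)
    (c := fun i t => match i with
      | 0 => if t = d then 1 else 0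
      | i + 1 => c i (t - d)) hk ?_ hcard ?_ ?_ ?_
  · intro f hf s
    exact hP0 _ ((hmem f).1 hf)
  · intro s u
    have := ha 0 _ (exists_of_card hcard s)
    simpa using this
  · rw [hcm]
    have := HasB_shift d HP
    simpa using this
  · intro t
    show _ = if t = d then 1 else 0
    split_ifs with h
    · subst h
      have : Unique {s : Unit // t = t} := ⟨⟨⟨(), rfl⟩⟩, fun _ => rfl⟩
      exact Nat.card_unique
    · have : IsEmpty {s : Unit // d = t} := ⟨fun x => h x.2.symm⟩
      exact Nat.card_of_isEmpty
  · intro i t t' h1 h2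
    have h3 := ha _ _ h1
    have h4 := hcc _ _ h2
    push_cast at h3
    omega
  · intro i t
    cases i with
    | zero => exact hb0 t
    | succ i => exact hb i t

end horseshoe

section monomials

variable {k : Type} [Field k] {σ : Type}

theorem idl_bot : idl (⊥ : Ideal (MvPolynomial σ k)) = ⊥ := by
  ext f
  rw [mem_idl, Submodule.mem_bot, Submodule.mem_bot]
  constructor
  · intro h; funext u; exact h
  · intro h; rw [h]; rfl

theorem HasB_congr {p : ℕ} {ι : Type} {deg : ι → ℤ}
    {N : Submodule (MvPolynomial σ k) (ι → MvPolynomial σ k)} {b b' : ℕ → ℤ → ℕ}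
    (h : HasB k σ p ι deg N b) (hb : ∀ i t, b i t = b' i t) : HasB k σ p ι deg N b' := by
  have : b = b' := by funext i t; exact hb i t
  rw [← this]; exact h

theorem constantCoeff_vars (A : Set σ) (f : MvPolynomial σ k)
    (hf : f ∈ Ideal.span ((X : σ → MvPolynomial σ k) '' A)) : constantCoeff f = 0 := by
  rw [mem_ideal_span_X_image] at hf
  by_contra h
  obtain ⟨i, _, hi⟩ := hf 0 (by rw [mem_support_iff]; exact h)
  exact hi rfl

theorem HasB_vars (A : Finset σ) : ∀ p, HasB k σ p Unit (fun _ => 0)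
    (idl (Ideal.span ((X : σ → MvPolynomial σ k) '' (A : Set σ))))
    (fun i t => if t = i + 1 then A.card.choose (i + 1) else 0) := by
  classical
  induction A using Finset.induction_on with
  | empty =>
    intro p
    simp only [Finset.coe_empty, Set.image_empty, Ideal.span_empty, idl_bot]
    exact HasB_congr (HasB_bot p _ _) (fun i t => by simp)
  | insert x A hx ih =>
    intro p
    cases p with
    | zero => trivial
    | succ p =>
      have e1 : Ideal.span ((X : σ → MvPolynomial σ k) '' ((insert x A : Finset σ) : Set σ)) =
          Ideal.span (X '' (A : Set σ)) ⊔ Ideal.span {X x} := by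
        rw [Finset.coe_insert, Set.image_insert_eq, Ideal.span_insert, sup_comm]
      rw [e1]
      refine addGen (d := 1) (P := Ideal.span (X '' (A : Set σ))) ?_ ?_
        (constantCoeff_vars _) (ih (p + 1)) (ih p) ?_ ?_ ?_ ?_
      · rw [hc_eq_self_iff]
        intro m hm
        rw [coeff_X] at hm
        have : Finsupp.single x 1 = m := by
          by_contra h; simp [h] at hm
        rw [← this]; simp
      · intro f
        constructor
        · intro h; exact Ideal.mul_mem_right _ _ h
        · intro h
          rw [mem_ideal_span_X_image] at h ⊢
          intro m hm
          obtain ⟨i, hi, hmi⟩ := h (m + Finsupp.single x 1) (by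
            rw [mem_support_iff, coeff_mul_X]; exact mem_support_iff.1 hm)
          refine ⟨i, hi, ?_⟩
          have : i ≠ x := by rintro rfl; exact hx hi
          simpa [Finsupp.single_apply, Ne.symm this] using hmi
      · intro i t h
        by_contra h2
        exact h (if_neg (by omega))
      · intro i t h
        by_contra h2
        exact h (if_neg (by omega))
      · intro t
        simp only [Finset.card_insert_of_notMem hx]
        simp only [Nat.cast_zero, zero_add, Nat.choose_one_right]
        split_ifs <;> rfl
      · intro i t
        simp only [Finset.card_insert_of_notMem hx]
        push_cast
        by_cases h : t = i + 1 + 1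
        · rw [if_pos h, if_pos h, if_pos (by omega), Nat.choose_succ_succ, add_comm]
        · rw [if_neg h, if_neg h, if_neg (by omega)]

/-- monomial ideal -/
noncomputable def mon (k : Type) [Field k] {σ : Type} (T : Set (σ →₀ ℕ)) :
    Ideal (MvPolynomial σ k) :=
  Ideal.span ((fun s => monomial s (1 : k)) '' T)

theorem addMon {p : ℕ} {T : Set (σ →₀ ℕ)} {m : σ →₀ ℕ} {A : Finset σ}
    (h : ∀ x : σ →₀ ℕ, (∃ s ∈ T, s ≤ x + m) ↔ ∃ i ∈ A, x i ≠ 0)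
    {a b : ℕ → ℤ → ℕ}
    (H : HasB k σ p Unit (fun _ => 0) (idl (mon k T)) a)
    (ha : ∀ i t, a i t ≠ 0 → t ≤ i + (Finsupp.degree m : ℕ))
    (hb : ∀ i t, b i t = a i t + if t = i + ((Finsupp.degree m : ℕ) : ℤ)
      then A.card.choose i else 0) :
    HasB k σ p Unit (fun _ => 0) (idl (mon k (insert m T))) b := by
  classical
  cases p with
  | zero => trivial
  | succ p =>
    have e1 : mon k (insert m T) = mon k T ⊔ Ideal.span {monomial m (1 : k)} := by
      unfold mon
      rw [Set.image_insert_eq, Ideal.span_insert, sup_comm]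
    rw [e1]
    refine addGen (d := (Finsupp.degree m : ℕ)) (P := Ideal.span (X '' (A : Set σ))) ?_ ?_
        (constantCoeff_vars _) H (HasB_vars A p) ha ?_ ?_ ?_
    · rw [hc_eq_self_iff]
      intro x hx
      rw [coeff_monomial] at hx
      have : m = x := by
        by_contra h; simp [h] at hx
      rw [this]
    · intro f
      unfold mon
      rw [mem_ideal_span_X_image, mem_ideal_span_monomial_image]
      constructor
      · intro hf y hy
        rw [mem_support_iff, coeff_mul_monomial'] at hy
        by_cases hmy : m ≤ y
        · rw [if_pos hmy, mul_one] at hy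
          have := (h (y - m)).2 (hf _ (mem_support_iff.2 hy))
          rwa [tsub_add_cancel_of_le hmy] at this
        · rw [if_neg hmy] at hy; exact absurd rfl hy
      · intro hf x hx
        apply (h x).1
        apply hf
        rw [mem_support_iff, coeff_mul_monomial, mul_one]
        exact mem_support_iff.1 hx
    · intro i t h
      by_contra h2
      exact h (if_neg (by omega))
    · intro t
      rw [hb]
      simp
    · intro i t
      rw [hb]
      congr 1
      push_cast
      apply if_congr _ rfl rfl
      omega

/-- exponents of degree `s` in the first `e` variables -/
def GS (N e s : ℕ) : Set (Fin N →₀ ℕ) :=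
  {m | Finsupp.degree m = s ∧ ∀ i : Fin N, e ≤ (i : ℕ) → m i = 0}

/-- the same as a finset -/
def GF (N e s : ℕ) : Finset (Fin N →₀ ℕ) :=
  Finset.finsuppAntidiag (Finset.univ.filter (fun i : Fin N => (i : ℕ) < e)) s

theorem mem_GF (N e s : ℕ) (m : Fin N →₀ ℕ) : m ∈ GF N e s ↔ m ∈ GS N e s := by
  unfold GF GS
  rw [Finset.mem_finsuppAntidiag, Set.mem_ofPred_eq]
  have hs : (m.support ⊆ Finset.univ.filter (fun i : Fin N => (i : ℕ) < e)) ↔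
      ∀ i : Fin N, e ≤ (i : ℕ) → m i = 0 := by
    constructor
    · intro h i hi
      by_contra h2
      have := h (Finsupp.mem_support_iff.2 h2)
      simp at this
      omega
    · intro h i hi
      rw [Finsupp.mem_support_iff] at hi
      simp only [Finset.mem_filter, Finset.mem_univ, true_and]
      by_contra h2
      exact hi (h i (by omega))
  rw [hs]
  constructor
  · rintro ⟨h1, h2⟩
    refine ⟨?_, h2⟩
    rw [← h1, Finsupp.degree_apply]
    apply Finset.sum_subset (hs.2 h2)
    intro x _ hx
    simpa using hx
  · rintro ⟨h1, h2⟩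
    refine ⟨?_, h2⟩
    rw [← h1, Finsupp.degree_apply]
    symm
    apply Finset.sum_subset (hs.2 h2)
    intro x _ hx
    simpa using hx

/-- indices below the top index of `m` -/
def AA {N : ℕ} (m : Fin N →₀ ℕ) : Finset (Fin N) :=
  Finset.univ.filter (fun i => ∃ j, i < j ∧ m j ≠ 0)

theorem degree_single_one {N : ℕ} (i : Fin N) : Finsupp.degree (Finsupp.single i 1) = 1 := by
  simp

theorem colon_lex {N e s : ℕ} {m : Fin N →₀ ℕ} (hm : m ∈ GS N e s) (x : Fin N →₀ ℕ) :
    (∃ q ∈ {q | q ∈ GS N e s ∧ toLex m < toLex q}, q ≤ x + m) ↔ ∃ i ∈ AA m, x i ≠ 0 := by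
  constructor
  · rintro ⟨q, ⟨hq, hlt⟩, hle⟩
    rw [Finsupp.Lex.lt_iff] at hlt
    obtain ⟨i, h1, h2⟩ := hlt
    simp only [ofLex_toLex] at h1 h2
    refine ⟨i, ?_, ?_⟩
    · simp only [AA, Finset.mem_filter, Finset.mem_univ, true_and]
      by_contra hcon
      push Not at hcon
      have hle' : m ≤ q := by
        intro j
        rcases lt_trichotomy j i with h | h | h
        · exact (h1 j h).le
        · rw [h]; exact h2.le
        · rw [hcon j h]; exact Nat.zero_le _
      have e1 : Finsupp.degree q = Finsupp.degree (q - m) + Finsupp.degree m := by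
        rw [← map_add, tsub_add_cancel_of_le hle']
      have e2 : Finsupp.degree (q - m) = 0 := by
        have := hm.1; have := hq.1; omega
      rw [Finsupp.degree_eq_zero_iff] at e2
      have := DFunLike.congr_fun e2 i
      simp at this
      omega
    · have := hle i
      simp only [Finsupp.add_apply] at this
      omega
  · rintro ⟨i, hi, hx⟩
    simp only [AA, Finset.mem_filter, Finset.mem_univ, true_and] at hi
    obtain ⟨j, hij, hj⟩ := hi
    have hjm : Finsupp.single j 1 ≤ m := by
      rw [Finsupp.single_le_iff]; omega
    refine ⟨m - Finsupp.single j 1 + Finsupp.single i 1, ⟨⟨?_, ?_⟩, ?_⟩, ?_⟩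
    · have e1 : Finsupp.degree m = Finsupp.degree (m - Finsupp.single j 1) + 1 := by
        conv_lhs => rw [← tsub_add_cancel_of_le hjm, map_add, degree_single_one]
      rw [map_add, degree_single_one, ← e1]
      exact hm.1
    · intro l hl
      have h1 := hm.2 l hl
      have h2 : i ≠ l := by
        rintro rfl
        exact hj (hm.2 j (by have : (i : ℕ) < j := hij; omega))
      simp [Finsupp.single_apply, h1, h2]
    · rw [Finsupp.Lex.lt_iff]
      refine ⟨i, ?_, ?_⟩
      · intro l hl
        have h1 : j ≠ l := (hl.trans hij).ne'
        have h2 : i ≠ l := hl.ne'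
        simp [Finsupp.single_apply, h1, h2]
      · have h1 : j ≠ i := hij.ne'
        simp [Finsupp.single_apply, h1]
    · intro l
      simp only [Finsupp.add_apply, Finsupp.tsub_apply, Finsupp.single_apply]
      by_cases h2 : i = l
      · subst h2; simp; omega
      · simp [h2]; omega

theorem HasB_lex {N e s : ℕ} (p : ℕ) (T : Finset (Lex (Fin N →₀ ℕ))) :
    (∀ q ∈ T, ofLex q ∈ GS N e s ∧ ∀ q', ofLex q' ∈ GS N e s → q < q' → q' ∈ T) →
    HasB k (Fin N) p Unit (fun _ => 0) (idl (mon k {m | toLex m ∈ T}))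
      (fun i t => if t = i + (s : ℤ) then ∑ q ∈ T, (AA (ofLex q)).card.choose i else 0) := by
  classical
  induction T using Finset.induction_on_min with
  | empty =>
    intro _
    have : mon k {m : Fin N →₀ ℕ | toLex m ∈ (∅ : Finset (Lex (Fin N →₀ ℕ)))} = ⊥ := by
      simp [mon]
    rw [this, idl_bot]
    exact HasB_congr (HasB_bot p _ _) (fun i t => by simp)
  | insert a T hlt ih =>
    intro h
    have ha := h a (Finset.mem_insert_self _ _)
    have hT : ∀ q, q ∈ T ↔ ofLex q ∈ GS N e s ∧ a < q := by
      intro q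
      constructor
      · intro hq
        exact ⟨(h q (Finset.mem_insert_of_mem hq)).1, hlt q hq⟩
      · rintro ⟨h1, h2⟩
        have := ha.2 q h1 h2
        rw [Finset.mem_insert] at this
        rcases this with h3 | h3
        · exact absurd h3 h2.ne'
        · exact h3
    have hna : a ∉ T := fun h => lt_irrefl _ (hlt a h)
    have ih' := ih (by
      intro q hq
      refine ⟨((hT q).1 hq).1, fun q' h1 h2 => (hT q').2 ⟨h1, (hlt q hq).trans h2⟩⟩)
    have e1 : {m | toLex m ∈ insert a T} = insert (ofLex a) {m : Fin N →₀ ℕ | toLex m ∈ T} := by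
      ext m
      simp only [Set.mem_ofPred_eq, Finset.mem_insert, Set.mem_insert_iff]
      rfl
    have e2 : {m : Fin N →₀ ℕ | toLex m ∈ T} =
        {q | q ∈ GS N e s ∧ toLex (ofLex a) < toLex q} := by
      ext m
      simp only [Set.mem_ofPred_eq]
      exact hT _
    rw [e1]
    refine addMon (A := AA (ofLex a)) ?_ ih' ?_ ?_
    · rw [e2]
      exact colon_lex ha.1
    · intro i t h
      rw [ha.1.1]
      by_contra h2
      exact h (if_neg (by omega))
    · intro i t
      rw [ha.1.1, Finset.sum_insert hna]
      split_ifs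
      · rw [add_comm]
      · rfl

theorem HasB_GS {N e s : ℕ} (p : ℕ) :
    HasB k (Fin N) p Unit (fun _ => 0) (idl (mon k (GS N e s)))
      (fun i t => if t = i + (s : ℤ) then ∑ q ∈ GF N e s, (AA q).card.choose i else 0) := by
  classical
  have := HasB_lex (k := k) (N := N) (e := e) (s := s) p ((GF N e s).map toLex.toEmbedding) (by
    intro q hq
    rw [Finset.mem_map_equiv] at hq
    refine ⟨(mem_GF _ _ _ _).1 hq, ?_⟩
    intro q' hq' _
    rw [Finset.mem_map_equiv]
    exact (mem_GF _ _ _ _).2 hq')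
  have e1 : {m : Fin N →₀ ℕ | toLex m ∈ (GF N e s).map toLex.toEmbedding} = GS N e s := by
    ext m
    rw [Set.mem_ofPred_eq, Finset.mem_map_equiv]
    exact mem_GF _ _ _ _
  rw [e1] at this
  refine HasB_congr this ?_
  intro i t
  rw [Finset.sum_map]
  rfl

theorem card_GF {N e r : ℕ} (he : e ≤ N) : (GF N e (r + 1)).card = (e + r).choose (r + 1) := by
  unfold GF
  rw [Finset.card_finsuppAntidiag_nat_eq_choose]
  have : (Finset.univ.filter (fun i : Fin N => (i : ℕ) < e)).card = e := by
    rw [Fin.card_filter_val_lt]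
    omega
  rw [this]
  congr 1

theorem sum_GF {N r : ℕ} (i : ℕ) : ∀ e, e ≤ N →
    ∑ q ∈ GF N e (r + 1), (AA q).card.choose i = (e + r).choose (i + r + 1) * (r + i).choose r := by
  intro e
  induction e with
  | zero =>
    intro _
    have : GF N 0 (r + 1) = ∅ := by
      rw [← Finset.card_eq_zero, card_GF (by omega)]
      simp
    rw [this, Nat.choose_eq_zero_of_lt (by omega : 0 + r < i + r + 1)]
    simp
  | succ e ih =>
    intro he
    have hsub : GF N e (r + 1) ⊆ GF N (e + 1) (r + 1) := by
      intro m hm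
      rw [mem_GF] at hm ⊢
      exact ⟨hm.1, fun i hi => hm.2 i (by omega)⟩
    rw [← Finset.sum_sdiff hsub, ih (by omega)]
    have h1 : ∀ q ∈ GF N (e + 1) (r + 1) \ GF N e (r + 1), (AA q).card.choose i = e.choose i := by
      intro q hq
      rw [Finset.mem_sdiff, mem_GF, mem_GF] at hq
      have h2 : q ⟨e, by omega⟩ ≠ 0 := by
        intro h0
        apply hq.2
        refine ⟨hq.1.1, fun i hi => ?_⟩
        rcases Nat.lt_or_ge (i : ℕ) (e + 1) with h | h
        · have : i = ⟨e, by omega⟩ := Fin.ext (by show (i : ℕ) = e; omega)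
          rw [this]; exact h0
        · exact hq.1.2 i h
      have h3 : AA q = Finset.univ.filter (fun i : Fin N => (i : ℕ) < e) := by
        ext j
        simp only [AA, Finset.mem_filter, Finset.mem_univ, true_and]
        constructor
        · rintro ⟨l, hl, hql⟩
          by_contra hcon
          exact hql (hq.1.2 l (by have : (j : ℕ) < l := hl; omega))
        · intro hj
          exact ⟨⟨e, by omega⟩, hj, h2⟩
      rw [h3, Fin.card_filter_val_lt]
      congr 1
      omega
    rw [Finset.sum_congr rfl h1, Finset.sum_const, Finset.card_sdiff_of_subset hsub,
      card_GF he, card_GF (by omega), smul_eq_mul]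
    have e1 : (e + 1 + r).choose (r + 1) = (e + r).choose r + (e + r).choose (r + 1) := by
      rw [show e + 1 + r = (e + r) + 1 by ring, Nat.choose_succ_succ]
    have e2 : (e + 1 + r).choose (i + r + 1) =
        (e + r).choose (i + r) + (e + r).choose (i + r + 1) := by
      rw [show e + 1 + r = (e + r) + 1 by ring, Nat.choose_succ_succ]
    have e3 : (e + r).choose (i + r) * (r + i).choose r = (e + r).choose r * e.choose i := by
      rw [add_comm r i]
      by_cases hie : i ≤ e
      · rw [Nat.choose_mul]
        · congr 2 <;> omega
        · omega
      · rw [Nat.choose_eq_zero_of_lt (by omega : e + r < i + r),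
          Nat.choose_eq_zero_of_lt (by omega : e < i)]
        simp
    rw [e1, e2, Nat.add_sub_cancel, add_mul, e3]

theorem pow_eq_mon (N e s : ℕ) :
    (Ideal.span ((X : Fin N → MvPolynomial (Fin N) k) '' {i | (i : ℕ) < e})) ^ s =
      mon k (GS N e s) := by
  induction s with
  | zero =>
    rw [pow_zero, Ideal.one_eq_top]
    symm
    rw [Ideal.eq_top_iff_one]
    apply Ideal.subset_span
    exact ⟨0, ⟨by simp, fun _ _ => rfl⟩, rfl⟩
  | succ s ih =>
    rw [pow_succ, ih]
    unfold mon
    rw [Ideal.span_mul_span']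
    apply le_antisymm
    · rw [Ideal.span_le]
      rintro _ ⟨_, ⟨m, hm, rfl⟩, _, ⟨i, hi, rfl⟩, rfl⟩
      apply Ideal.subset_span
      refine ⟨m + Finsupp.single i 1, ⟨?_, ?_⟩, ?_⟩
      · rw [map_add, degree_single_one, hm.1]
      · intro j hj
        have : i ≠ j := by
          rintro rfl
          have : (i : ℕ) < e := hi
          omega
        simp [Finsupp.single_apply, this, hm.2 j hj]
      · simp only [X]
        rw [monomial_mul, one_mul]
    · rw [Ideal.span_le]
      rintro _ ⟨m, hm, rfl⟩
      have hne : m ≠ 0 := by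
        rintro rfl
        have := hm.1
        simp at this
      obtain ⟨i, hi⟩ := Finsupp.ne_iff.1 hne
      have hi' : m i ≠ 0 := hi
      have hie : (i : ℕ) < e := by
        by_contra h
        exact hi' (hm.2 i (by omega))
      have hjm : Finsupp.single i 1 ≤ m := by
        rw [Finsupp.single_le_iff]; omega
      have e0 := tsub_add_cancel_of_le hjm
      apply Ideal.subset_span
      refine ⟨monomial (m - Finsupp.single i 1) 1, ⟨_, ⟨?_, ?_⟩, rfl⟩, X i, ⟨i, hie, rfl⟩, ?_⟩
      · have := hm.1
        rw [← e0, map_add, degree_single_one] at this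
        omega
      · intro j hj
        simp [hm.2 j hj]
      · simp only [X]
        rw [monomial_mul, one_mul, e0]

theorem HasB_main {N e r : ℕ} (he : e ≤ N) (mu mv : Fin N →₀ ℕ)
    (hmu : Finsupp.degree mu = r) (hmus : ∀ i : Fin N, e ≤ (i : ℕ) → mu i = 0)
    (hmvs : ∀ i : Fin N, (i : ℕ) < e → mv i = 0)
    (hdeg : r + 1 < Finsupp.degree mu + Finsupp.degree mv) (p : ℕ) :
    HasB k (Fin N) p Unit (fun _ => 0)
      (idl (Ideal.span {monomial (mu + mv) (1 : k)} ⊔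
        (Ideal.span ((X : Fin N → MvPolynomial (Fin N) k) '' {i | (i : ℕ) < e})) ^ (r + 1)))
      (fun i t => (if t = i + ((r : ℤ) + 1) then
          (e + r).choose (i + r + 1) * (r + i).choose r else 0) +
        if t = i + ((Finsupp.degree mu + Finsupp.degree mv : ℕ) : ℤ) then e.choose i else 0) := by
  have e1 : Ideal.span {monomial (mu + mv) (1 : k)} ⊔
        (Ideal.span ((X : Fin N → MvPolynomial (Fin N) k) '' {i | (i : ℕ) < e})) ^ (r + 1) =
      mon k (insert (mu + mv) (GS N e (r + 1))) := by
    rw [pow_eq_mon]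
    unfold mon
    rw [Set.image_insert_eq, Ideal.span_insert]
  rw [e1]
  refine addMon (A := Finset.univ.filter (fun i : Fin N => (i : ℕ) < e)) ?_
    (HasB_GS (k := k) (N := N) (e := e) (s := r + 1) p) ?_ ?_
  · intro x
    constructor
    · rintro ⟨q, hq, hle⟩
      by_contra hcon
      push Not at hcon
      have hq2 : q ≤ mu := by
        intro i
        rcases Nat.lt_or_ge (i : ℕ) e with h | h
        · have h1 := hcon i (by simpa using h)
          have h2 := hle i
          simp only [Finsupp.add_apply] at h2
          rw [h1, hmvs i h] at h2
          omega
        · rw [hq.2 i h]; exact Nat.zero_le _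
      have h3 := hq.1
      have h4 : Finsupp.degree mu = Finsupp.degree (mu - q) + Finsupp.degree q := by
        rw [← map_add, tsub_add_cancel_of_le hq2]
      omega
    · rintro ⟨i, hi, hx⟩
      simp only [Finset.mem_filter, Finset.mem_univ, true_and] at hi
      refine ⟨mu + Finsupp.single i 1, ⟨?_, ?_⟩, ?_⟩
      · rw [map_add, degree_single_one, hmu]
      · intro j hj
        have : i ≠ j := by rintro rfl; omega
        simp [Finsupp.single_apply, this, hmus j hj]
      · intro l
        simp only [Finsupp.add_apply, Finsupp.single_apply]
        by_cases h2 : i = l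
        · subst h2; simp; omega
        · simp [h2]; omega
  · intro i t h
    rw [map_add]
    by_contra h2
    exact h (if_neg (by push_cast at *; omega))
  · intro i t
    rw [map_add, Fin.card_filter_val_lt, min_eq_right he, sum_GF i e he]
    push_cast
    rfl

end monomials

section interface

variable {k : Type} [Field k]

theorem Gr_of_single {σ κ ι : Type} [Fintype κ] [DecidableEq κ] {dg : κ → ℤ} {deg : ι → ℤ}
    (φ : (κ → MvPolynomial σ k) →ₗ[MvPolynomial σ k] (ι → MvPolynomial σ k))
    (h : ∀ s, comp deg (dg s) (φ (Pi.single s 1)) = φ (Pi.single s 1)) : Gr dg deg φ := by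
  have e : φ = Fintype.linearCombination (MvPolynomial σ k) (fun s => φ (Pi.single s 1)) := by
    apply LinearMap.pi_ext'
    intro s
    apply LinearMap.ext_ring
    simp only [LinearMap.comp_apply, LinearMap.coe_single]
    rw [linComb_single]
  rw [e]
  exact Gr_linComb _ _ _ h

theorem hc_of_homog {σ : Type} {p : MvPolynomial σ k} {d : ℤ} (h : Paper.HomogOfDeg k p d) :
    hc d p = p := by
  rcases h with h | ⟨m, hm, hp⟩
  · rw [h, map_zero]
  · rw [hc_eq_self_iff]
    intro x hx
    rw [← hm]
    have := hp hx
    have h2 : Finsupp.degree x = m := by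
      rw [Finsupp.degree_eq_weight_one]
      exact this
    exact congrArg (Nat.cast : ℕ → ℤ) h2

theorem finite_sigma (b : ℤ → ℕ) (hb : (Function.support b).Finite) :
    Finite ((j : ℤ) × Fin (b j)) := by
  have := hb.to_subtype
  refine Finite.of_injective
    (β := (j : Function.support b) × Fin (b j))
    (fun x => ⟨⟨x.1, by
      rw [Function.mem_support]
      have := x.2.isLt
      omega⟩, x.2⟩) ?_
  rintro ⟨j, s⟩ ⟨j', s'⟩ h
  simp only [Sigma.mk.injEq, Subtype.mk.injEq] at h
  obtain ⟨h1, h2⟩ := h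
  subst h1
  simpa using h2

theorem card_sigma (b : ℤ → ℕ) (c t : ℤ) :
    Nat.card {s : (j : ℤ) × Fin (b j) // c + s.1 = t} = b (t - c) := by
  have e : {s : (j : ℤ) × Fin (b j) // c + s.1 = t} ≃ {s : (j : ℤ) × Fin (b j) // s.1 = t - c} :=
    Equiv.subtypeEquivRight (fun s => by omega)
  rw [Nat.card_congr e, Nat.card_congr (Equiv.sigmaSubtype (t - c)), Nat.card_fin]

theorem res_HasB {N : ℕ} (I : Ideal (MvPolynomial (Fin N) k))
    (res : Paper.MinGradedFreeRes k (Fin N) ↥I (Paper.idealDeg k I)) (p : ℕ) :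
    HasB k (Fin N) p Unit (fun _ => 0) (idl I) (fun i t => res.β i (t - i)) := by
  classical
  have hfin : ∀ i, Finite ((j : ℤ) × Fin (res.β i j)) := fun i => finite_sigma _ (res.rowFinite i)
  let hft : ∀ i, Fintype ((j : ℤ) × Fin (res.β i j)) := fun i => Fintype.ofFinite _
  let E : ∀ i, (((j : ℤ) × Fin (res.β i j)) →₀ MvPolynomial (Fin N) k) ≃ₗ[MvPolynomial (Fin N) k]
      (((j : ℤ) × Fin (res.β i j)) → MvPolynomial (Fin N) k) :=
    fun i => Finsupp.linearEquivFunOnFinite _ _ _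
  have hE : ∀ i s, (E i).symm (Pi.single s 1) = Finsupp.single s 1 := by
    intro i s
    rw [LinearEquiv.symm_apply_eq]
    funext t
    change _ = (Finsupp.single s (1 : MvPolynomial (Fin N) k)) t
    rw [Finsupp.single_eq_pi_single]
  let dd : ∀ i, (((j : ℤ) × Fin (res.β (i + 1) j)) → MvPolynomial (Fin N) k) →ₗ[MvPolynomial (Fin N) k]
      (((j : ℤ) × Fin (res.β i j)) → MvPolynomial (Fin N) k) :=
    fun i => (E i).toLinearMap ∘ₗ res.d i ∘ₗ (E (i + 1)).symm.toLinearMap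
  let ee : (((j : ℤ) × Fin (res.β 0 j)) → MvPolynomial (Fin N) k) →ₗ[MvPolynomial (Fin N) k]
      (Unit → MvPolynomial (Fin N) k) :=
    LinearMap.pi (fun _ => I.subtype ∘ₗ res.ε ∘ₗ (E 0).symm.toLinearMap)
  let dg : ∀ i : ℕ, ((j : ℤ) × Fin (res.β i j)) → ℤ := fun i s => (i : ℤ) + s.1
  have hdd : ∀ i f, dd i f = E i (res.d i ((E (i + 1)).symm f)) := fun i f => rfl
  have hee : ∀ f u, ee f u = (res.ε ((E 0).symm f) : MvPolynomial (Fin N) k) := fun f u => rfl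
  have hdds : ∀ i s u, dd i (Pi.single s 1) u = res.d i (Finsupp.single s 1) u := by
    intro i s u
    rw [hdd, hE]
    rfl
  have hG : ∀ i, Gr (dg (i + 1)) (dg i) (dd i) := by
    intro i
    apply Gr_of_single
    rintro ⟨j, s⟩
    funext ⟨j', s'⟩
    simp only [comp]
    rw [hdds]
    apply hc_of_homog
    have := res.graded i j j' s s'
    have e : dg (i + 1) ⟨j, s⟩ - dg i ⟨j', s'⟩ = j + 1 - j' := by
      simp only [dg]; push_cast; ring
    rw [e]
    exact this
  have hGe : Gr (dg 0) (fun _ => 0) ee := by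
    apply Gr_of_single
    rintro ⟨j, s⟩
    funext u
    simp only [comp]
    rw [hee, hE]
    have h1 := res.eps_graded j s
    have e : dg 0 ⟨j, s⟩ - 0 = j := by simp [dg]
    rw [e]
    apply hc_of_homog
    unfold Paper.idealDeg at h1
    split_ifs at h1 with h2
    · right
      refine ⟨j.toNat, by omega, ?_⟩
      exact h1
    · left
      rw [Submodule.mem_bot] at h1
      rw [h1]; rfl
  have hmin : ∀ i f u, constantCoeff (dd i f u) = 0 := by
    intro i f u
    rw [cc_linear]
    apply Finset.sum_eq_zero
    rintro ⟨j, s⟩ _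
    obtain ⟨j', s'⟩ := u
    rw [hdds]
    by_cases h : j' = j + 1
    · rw [res.minimal i j j' s s' h]; simp
    · have h1 := hc_of_homog (res.graded i j j' s s')
      rw [← h1, constantCoeff_eq, coeff_hc, if_neg, mul_zero]
      simp only [map_zero, Nat.cast_zero]
      omega
  have hker : ∀ i, LinearMap.ker (dd i) = LinearMap.range (dd (i + 1)) := by
    intro i
    ext f
    have := res.exactSeq i ((E (i + 1)).symm f)
    rw [LinearMap.mem_ker, hdd, LinearEquiv.map_eq_zero_iff, this]
    constructor
    · rintro ⟨g, hg⟩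
      refine ⟨E (i + 2) g, ?_⟩
      rw [hdd]
      have : (E (i + 1 + 1)).symm (E (i + 2) g) = g := LinearEquiv.symm_apply_apply _ _
      rw [this, hg, LinearEquiv.apply_symm_apply]
    · rintro ⟨g, rfl⟩
      refine ⟨(E (i + 1 + 1)).symm g, ?_⟩
      rw [hdd, LinearEquiv.symm_apply_apply]
  have hkere : LinearMap.ker ee = LinearMap.range (dd 0) := by
    ext f
    have := res.exact0 ((E 0).symm f)
    have h0 : ee f = 0 ↔ res.ε ((E 0).symm f) = 0 := by
      constructor
      · intro h
        have := congrFun h ()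
        rw [hee] at this
        exact Subtype.ext this
      · intro h
        funext u
        rw [hee, h]; rfl
    rw [LinearMap.mem_ker, h0, this]
    constructor
    · rintro ⟨g, hg⟩
      refine ⟨E 1 g, ?_⟩
      rw [hdd]
      have : (E (0 + 1)).symm (E 1 g) = g := LinearEquiv.symm_apply_apply _ _
      rw [this, hg, LinearEquiv.apply_symm_apply]
    · rintro ⟨g, rfl⟩
      refine ⟨(E (0 + 1)).symm g, ?_⟩
      rw [hdd, LinearEquiv.symm_apply_apply]
  have main : ∀ p i, HasB k (Fin N) p _ (dg i) (LinearMap.range (dd i))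
      (fun l t => res.β (i + 1 + l) (t - ((i + 1 + l : ℕ) : ℤ))) := by
    intro p
    induction p with
    | zero => intro i; trivial
    | succ p ih =>
      intro i
      refine ⟨_, hft (i + 1), dg (i + 1), dd i, rfl, hG i, ?_, ?_, ?_⟩
      · intro f hf s
        have h1 : f ∈ LinearMap.ker (dd i) := hf
        rw [hker] at h1
        obtain ⟨g, rfl⟩ := h1
        exact hmin _ _ _
      · intro t
        exact card_sigma (res.β (i + 1)) _ t
      · rw [hker]
        refine HasB_congr (ih (i + 1)) ?_
        intro l t
        rw [show i + 1 + 1 + l = i + 1 + (l + 1) by ring]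
  cases p with
  | zero => trivial
  | succ p =>
    refine ⟨_, hft 0, dg 0, ee, ?_, hGe, ?_, ?_, ?_⟩
    · ext f
      rw [mem_idl]
      constructor
      · rintro ⟨g, rfl⟩
        rw [hee]; exact Subtype.property _
      · intro h
        obtain ⟨g, hg⟩ := res.eps_surj ⟨f (), h⟩
        refine ⟨E 0 g, ?_⟩
        funext u
        rw [hee, LinearEquiv.symm_apply_apply, hg]
    · intro f hf s
      have h1 : f ∈ LinearMap.ker ee := hf
      rw [hkere] at h1
      obtain ⟨g, rfl⟩ := h1
      exact hmin _ _ _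
    · intro t
      exact card_sigma (res.β 0) _ t
    · rw [hkere]
      refine HasB_congr (main p 0) ?_
      intro l t
      rw [show 0 + 1 + l = l + 1 by ring]

end interface

end Betti

/-- Lemma 5.3(b): for `I = (uv) + J^{r+1}` as in Lemma 5.3 with `deg(uv) > r + 1`:
`β_{i,r+1}(I) = C(e+r, i+r+1)·C(r+i, r)` for `0 ≤ i < e`,
`β_{i,deg(uv)}(I) = C(e, i)` for `0 ≤ i ≤ e`, and all other graded Betti numbers of `I`
vanish. -/
theorem stmt16 (k : Type) [Field k] (n e r : ℕ) (he : 1 ≤ e) (hr : 1 ≤ r)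
    (mu mv : Fin (n + e + 1) →₀ ℕ)
    (hmu : Paper.tdeg mu = r)
    (hmusupp : ∀ i : Fin (n + e + 1), e ≤ (i : ℕ) → mu i = 0)
    (hmvne : 1 ≤ Paper.tdeg mv)
    (hmvsupp : ∀ i : Fin (n + e + 1), (i : ℕ) < e → mv i = 0)
    (hdeg : r + 1 < Paper.tdeg mu + Paper.tdeg mv)
    (J I : Ideal (MvPolynomial (Fin (n + e + 1)) k))
    (hJdef : J = Ideal.span {p | ∃ i : Fin (n + e + 1), (i : ℕ) < e ∧ p = MvPolynomial.X i})
    (hIdef : I = Ideal.span {MvPolynomial.monomial (mu + mv) (1 : k)} ⊔ J ^ (r + 1)) :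
    ∀ res : Paper.MinGradedFreeRes k (Fin (n + e + 1)) ↥I (Paper.idealDeg k I),
      (∀ i : ℕ, i < e →
        res.β i ((r : ℤ) + 1) = (e + r).choose (i + r + 1) * (r + i).choose r) ∧
      (∀ i : ℕ, i ≤ e →
        res.β i ((Paper.tdeg mu + Paper.tdeg mv : ℕ) : ℤ) = e.choose i) ∧
      (∀ (i : ℕ) (j : ℤ), ¬(i < e ∧ j = (r : ℤ) + 1) →
        ¬(i ≤ e ∧ j = ((Paper.tdeg mu + Paper.tdeg mv : ℕ) : ℤ)) → res.β i j = 0) := by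
  intro res
  have ht : ∀ a : Fin (n + e + 1) →₀ ℕ, Paper.tdeg a = Finsupp.degree a := fun a => rfl
  have hJ : J = Ideal.span ((MvPolynomial.X : Fin (n + e + 1) → MvPolynomial _ k) ''
      {i | (i : ℕ) < e}) := by
    rw [hJdef]
    congr 1
    ext p
    constructor
    · rintro ⟨i, hi, rfl⟩; exact ⟨i, hi, rfl⟩
    · rintro ⟨i, hi, rfl⟩; exact ⟨i, hi, rfl⟩
  have key : ∀ (i : ℕ) (j : ℤ), res.β i j =
      (if j = (r : ℤ) + 1 then (e + r).choose (i + r + 1) * (r + i).choose r else 0) +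
        if j = ((Paper.tdeg mu + Paper.tdeg mv : ℕ) : ℤ) then e.choose i else 0 := by
    intro i j
    have h1 := Betti.res_HasB I res (i + 1)
    have h2 := Betti.HasB_main (k := k) (N := n + e + 1) (e := e) (r := r) (by omega) mu mv hmu
      hmusupp hmvsupp hdeg (i + 1)
    rw [← hJ, ← hIdef] at h2
    have h3 := congrFun (Betti.HasB_unique h1 h2 i (Nat.lt_succ_self i)) (i + j)
    simp only [add_sub_cancel_left, add_right_inj] at h3
    exact h3
  refine ⟨?_, ?_, ?_⟩
  · intro i hi
    rw [key, if_pos rfl, if_neg (by push_cast; omega), add_zero]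
  · intro i hi
    rw [key, if_pos rfl, if_neg (by push_cast; omega), zero_add]
  · intro i j h1 h2
    rw [key]
    have e1 : (if j = (r : ℤ) + 1 then (e + r).choose (i + r + 1) * (r + i).choose r else 0) = 0 := by
      split_ifs with h
      · have : e + r < i + r + 1 := by
          by_contra h3
          exact h1 ⟨by omega, h⟩
        rw [Nat.choose_eq_zero_of_lt this, zero_mul]
      · rfl
    have e2 : (if j = ((Paper.tdeg mu + Paper.tdeg mv : ℕ) : ℤ) then e.choose i else 0) = 0 := by
      split_ifs with h
      · have : e < i := by
          by_contra h3
          exact h2 ⟨by omega, h⟩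
        rw [Nat.choose_eq_zero_of_lt this]
      · rfl
    rw [e1, e2]
end

section
/- Let $S_0 = k[x_0,\ldots,x_{n+e}]$, let $T_{r+1}$ be the set of all monomials in $x_0,\ldots,x_{e-1}$ of degree $r+1$, let $u$ be a monomial in $x_0,\ldots,x_{e-1}$ of degree $r > 0$, and let $I$ be the ideal generated by $T_{r+1}$ together with $u x_e, \ldots, u x_{n+e}$. Then $\deg(S_0/I) = \binom{e+r}{r} - 1$ and $\mathrm{depth}(S_0/I) = 0$. -/
set_option synthInstance.maxHeartbeats 1000000
set_option maxHeartbeats 2000000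

namespace Aux17

open MvPolynomial

theorem hilb_eq_card (k : Type) [Field k] {N : ℕ} (M : Set (Fin N →₀ ℕ)) (d : ℕ)
    (A : Finset (Fin N →₀ ℕ))
    (hA : ∀ m, m ∈ A ↔ (m.degree = d ∧ ∀ s ∈ M, ¬ s ≤ m)) :
    Paper.hilbFn k (Ideal.span ((fun s => monomial s (1 : k)) '' M)) d = A.card := by
  set I := Ideal.span ((fun s => monomial s (1 : k)) '' M) with hI
  let f : MvPolynomial (Fin N) k →ₗ[k] (MvPolynomial (Fin N) k ⧸ I) :=
    (Ideal.Quotient.mkₐ k I).toLinearMap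
  have hf : ∀ p, f p = 0 ↔ p ∈ I := fun p => Ideal.Quotient.eq_zero_iff_mem
  let v : A → MvPolynomial (Fin N) k := fun m => monomial m.1 1
  have hrange : Set.range v = (fun s => monomial s (1 : k)) '' (A : Set (Fin N →₀ ℕ)) := by
    ext p; simp [v]
  have hspan : Submodule.span k (Set.range v) =
      restrictSupport k (A : Set (Fin N →₀ ℕ)) := by
    rw [hrange, restrictSupport_eq_span]
  have hv : LinearIndependent k v := by
    have h := (basisMonomials (Fin N) k).linearIndependent
    have h2 := h.comp (fun m : A => m.1) Subtype.val_injective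
    have hveq : v = (basisMonomials (Fin N) k) ∘ (fun m : A => m.1) := by
      ext1 m
      simp [v]
    rw [hveq]
    exact h2
  have hdis : Disjoint (Submodule.span k (Set.range v)) (LinearMap.ker f) := by
    rw [hspan, Submodule.disjoint_def]
    intro p hp hk
    rw [LinearMap.mem_ker, hf, hI, mem_ideal_span_monomial_image] at hk
    rw [mem_restrictSupport_iff] at hp
    rw [← support_eq_empty, Finset.eq_empty_iff_forall_notMem]
    intro m hm
    obtain ⟨s, hs, hsm⟩ := hk m hm
    exact ((hA m).1 (hp hm)).2 s hs hsm
  have hli := hv.map hdis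
  have hmap : Submodule.span k (Set.range (f ∘ v)) = Paper.quotComponent k I d := by
    rw [Set.range_comp, ← Submodule.map_span, hspan]
    change Submodule.map f _ = Submodule.map f _
    apply le_antisymm
    · apply Submodule.map_mono
      rw [restrictSupport_eq_span, Submodule.span_le]
      rintro _ ⟨m, hm, rfl⟩
      exact isHomogeneous_monomial _ ((hA m).1 hm).1
    · rw [Submodule.map_le_iff_le_comap]
      intro p hp
      rw [Submodule.mem_comap, p.as_sum, map_sum]
      refine Submodule.sum_mem _ fun m hm => ?_
      by_cases hmA : m ∈ A
      · exact Submodule.mem_map_of_mem ((monomial_mem_restrictSupport k).2 (Or.inl hmA))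
      · have : f (monomial m (coeff m p)) = 0 := by
          rw [hf, hI, mem_ideal_span_monomial_image]
          intro x hx
          have hxm : x = m := by
            have := support_monomial_subset hx
            simpa using this
          subst hxm
          have hdeg : x.degree = d := by
            by_contra hne
            exact mem_support_iff.1 hm (IsHomogeneous.coeff_eq_zero hp hne)
          by_contra hcon
          push Not at hcon
          exact hmA ((hA x).2 ⟨hdeg, hcon⟩)
        rw [this]
        exact Submodule.zero_mem _
  unfold Paper.hilbFn
  rw [← hmap, finrank_span_eq_card hli]
  simp

/-- indices of the head variables -/
def head (n e : ℕ) : Finset (Fin (n + e + 1)) := Finset.univ.filter fun i => (i : ℕ) < e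

/-- indices of the tail variables -/
def tail (n e : ℕ) : Finset (Fin (n + e + 1)) := Finset.univ.filter fun i => e ≤ (i : ℕ)

theorem card_head (n e : ℕ) : (head n e).card = e := by
  unfold head
  rw [Fin.card_filter_val_lt]
  omega

theorem card_tail (n e : ℕ) : (tail n e).card = n + 1 := by
  have h : tail n e = (head n e)ᶜ := by
    ext i; simp [head, tail]
  rw [h, Finset.card_compl, card_head]
  simp
  omega

/-- head exponents of degree at most `r` -/
def bigB (n e r : ℕ) : Finset (Fin (n + e + 1) →₀ ℕ) :=
  (Finset.range (r + 1)).biUnion fun j => Finset.finsuppAntidiag (head n e) j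

theorem sum_eq_degree {N : ℕ} (s : Finset (Fin N)) (m : Fin N →₀ ℕ) (h : m.support ⊆ s) :
    s.sum m = m.degree := by
  rw [Finsupp.degree_apply]
  symm
  apply Finset.sum_subset h
  intro x _ hx
  simpa using hx

theorem mem_anti {N : ℕ} (s : Finset (Fin N)) (m : Fin N →₀ ℕ) (j : ℕ) :
    m ∈ Finset.finsuppAntidiag s j ↔ m.degree = j ∧ m.support ⊆ s := by
  rw [Finset.mem_finsuppAntidiag]
  constructor
  · rintro ⟨h1, h2⟩
    exact ⟨by rw [← sum_eq_degree s m h2, h1], h2⟩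
  · rintro ⟨h1, h2⟩
    exact ⟨by rw [sum_eq_degree s m h2, h1], h2⟩

theorem mem_bigB (n e r : ℕ) (m : Fin (n + e + 1) →₀ ℕ) :
    m ∈ bigB n e r ↔ m.degree ≤ r ∧ m.support ⊆ head n e := by
  simp only [bigB, Finset.mem_biUnion, mem_anti, Finset.mem_range]
  constructor
  · rintro ⟨j, hj, h1, h2⟩
    exact ⟨by omega, h2⟩
  · rintro ⟨h1, h2⟩
    exact ⟨_, by omega, rfl, h2⟩

theorem card_bigB (n e r : ℕ) : (bigB n e r).card = (e + r).choose r := by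
  unfold bigB
  rw [Finset.card_biUnion]
  · simp_rw [Finset.card_finsuppAntidiag_nat_eq_multichoose, card_head]
    rw [Nat.sum_range_multichoose]
    rw [Nat.add_comm r e]
    exact Nat.choose_symm_add
  · intro i _ j _ hij
    rw [Function.onFun, Finset.disjoint_left]
    intro m h1 h2
    rw [mem_anti] at h1 h2
    exact hij (h1.1.symm.trans h2.1)

/-- standard monomials of degree `d` -/
noncomputable def stdA (n e r : ℕ) (mu : Fin (n + e + 1) →₀ ℕ) (d : ℕ) : Finset (Fin (n + e + 1) →₀ ℕ) :=
  (((bigB n e r).erase mu).sigma fun a => Finset.finsuppAntidiag (tail n e) (d - a.degree)).image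
    fun p => p.1 + p.2

theorem supp_head {n e : ℕ} {m : Fin (n + e + 1) →₀ ℕ} :
    m.support ⊆ head n e ↔ ∀ i : Fin (n + e + 1), e ≤ (i : ℕ) → m i = 0 := by
  simp only [Finset.subset_iff, head, Finset.mem_filter, Finset.mem_univ, true_and,
    Finsupp.mem_support_iff]
  refine forall_congr' fun i => ?_
  rw [← not_le]
  tauto

theorem supp_tail {n e : ℕ} {m : Fin (n + e + 1) →₀ ℕ} :
    m.support ⊆ tail n e ↔ ∀ i : Fin (n + e + 1), (i : ℕ) < e → m i = 0 := by
  simp only [Finset.subset_iff, tail, Finset.mem_filter, Finset.mem_univ, true_and,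
    Finsupp.mem_support_iff]
  refine forall_congr' fun i => ?_
  rw [← not_le]
  tauto

theorem mem_stdA {n e r : ℕ} {mu : Fin (n + e + 1) →₀ ℕ} {d : ℕ} (hd : r < d)
    (m : Fin (n + e + 1) →₀ ℕ) :
    m ∈ stdA n e r mu d ↔ ∃ a b : Fin (n + e + 1) →₀ ℕ, m = a + b ∧ a ≠ mu ∧ a.degree ≤ r ∧
      m.degree = d ∧ (∀ i : Fin (n + e + 1), e ≤ (i : ℕ) → a i = 0) ∧
      (∀ i : Fin (n + e + 1), (i : ℕ) < e → b i = 0) := by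
  simp only [stdA, Finset.mem_image, Finset.mem_sigma, Finset.mem_erase, mem_bigB, mem_anti,
    supp_head, supp_tail, Sigma.exists]
  constructor
  · rintro ⟨a, b, ⟨⟨h1, h2, h3⟩, h4, h5⟩, rfl⟩
    refine ⟨a, b, rfl, h1, h2, ?_, h3, h5⟩
    rw [map_add]; omega
  · rintro ⟨a, b, rfl, h1, h2, h4, h3, h5⟩
    refine ⟨a, b, ⟨⟨h1, h2, h3⟩, ?_, h5⟩, rfl⟩
    rw [map_add] at h4; omega

theorem card_stdA {n e r : ℕ} {mu : Fin (n + e + 1) →₀ ℕ} {d : ℕ} :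
    (stdA n e r mu d).card =
      ∑ a ∈ (bigB n e r).erase mu, (d - a.degree + n).choose n := by
  unfold stdA
  rw [Finset.card_image_of_injOn, Finset.card_sigma]
  · refine Finset.sum_congr rfl fun a _ => ?_
    rw [Finset.card_finsuppAntidiag_nat_eq_multichoose, card_tail, Nat.multichoose_eq,
      show n + 1 + (d - a.degree) - 1 = n + (d - a.degree) by omega, Nat.add_comm _ n,
      Nat.choose_symm_add]
  · rintro ⟨a, b⟩ h1 ⟨a2, b2⟩ h2 h
    simp only [Finset.coe_sigma, Set.mem_sigma_iff, Finset.mem_coe, Finset.mem_erase, mem_bigB,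
      mem_anti, supp_head, supp_tail] at h1 h2 h
    have key : ∀ i, a i = a2 i ∧ b i = b2 i := by
      intro i
      have hi := DFunLike.congr_fun h i
      simp only [Finsupp.add_apply] at hi
      rcases lt_or_ge (i : ℕ) e with hlt | hge
      · have := h1.2.2 i hlt
        have := h2.2.2 i hlt
        omega
      · have := h1.1.2.2 i hge
        have := h2.1.2.2 i hge
        omega
    have ha : a = a2 := Finsupp.ext fun i => (key i).1
    have hb : b = b2 := Finsupp.ext fun i => (key i).2
    subst ha hb
    rfl

/-- exponents of the generators -/
def gens (n e r : ℕ) (mu : Fin (n + e + 1) →₀ ℕ) : Set (Fin (n + e + 1) →₀ ℕ) :=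
  {m | m.degree = r + 1 ∧ ∀ i : Fin (n + e + 1), e ≤ (i : ℕ) → m i = 0} ∪
    {m | ∃ i : Fin (n + e + 1), e ≤ (i : ℕ) ∧ m = mu + Finsupp.single i 1}

theorem stdA_iff {n e r : ℕ} {mu : Fin (n + e + 1) →₀ ℕ} (hmu : mu.degree = r)
    (hs : ∀ i : Fin (n + e + 1), e ≤ (i : ℕ) → mu i = 0) {d : ℕ} (hd : r < d)
    (m : Fin (n + e + 1) →₀ ℕ) :
    m ∈ stdA n e r mu d ↔ (m.degree = d ∧ ∀ s ∈ gens n e r mu, ¬ s ≤ m) := by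
  rw [mem_stdA hd]
  constructor
  · rintro ⟨a, b, rfl, hne, ha, hdeg, h1, h2⟩
    have key : ∀ s : Fin (n + e + 1) →₀ ℕ, (∀ i : Fin (n + e + 1), e ≤ (i : ℕ) → s i = 0) →
        s ≤ a + b → s ≤ a := by
      intro s hs hle i
      have := hle i
      rcases lt_or_ge (i : ℕ) e with hlt | hge
      · have := h2 i hlt
        simp only [Finsupp.add_apply] at *
        omega
      · rw [hs i hge]; exact Nat.zero_le _
    refine ⟨hdeg, ?_⟩
    rintro s (⟨hsd, hsh⟩ | ⟨i, hi, rfl⟩) hle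
    · have := Finsupp.degree_mono (key s hsh hle)
      omega
    · have hmua := key mu hs (le_trans le_self_add hle)
      obtain ⟨c, rfl⟩ := le_iff_exists_add.1 hmua
      rw [map_add] at ha
      have : c.degree = 0 := by omega
      rw [Finsupp.degree_eq_zero_iff] at this
      subst this
      simp at hne
  · rintro ⟨hdeg, hno⟩
    classical
    have hsum := Finsupp.filter_add_filter_not m (fun i => (i : ℕ) < e)
    have h1 : ∀ i : Fin (n + e + 1), e ≤ (i : ℕ) → (m.filter fun i : Fin (n + e + 1) => (i : ℕ) < e) i = 0 := by
      intro i hi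
      rw [Finsupp.filter_apply_neg]; omega
    have h2 : ∀ i : Fin (n + e + 1), (i : ℕ) < e → (m.filter fun i : Fin (n + e + 1) => ¬ (i : ℕ) < e) i = 0 := by
      intro i hi
      rw [Finsupp.filter_apply_neg]; omega
    generalize (m.filter fun i : Fin (n + e + 1) => (i : ℕ) < e) = a at *
    generalize (m.filter fun i : Fin (n + e + 1) => ¬ (i : ℕ) < e) = b at *
    subst hsum
    have ha : a.degree ≤ r := by
      by_contra hcon
      obtain ⟨s, hsa, hsd⟩ := Finsupp.exists_le_degree_eq a (r + 1) (by omega)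
      refine hno s (Or.inl ⟨hsd, fun i hi => ?_⟩) (hsa.trans le_self_add)
      have := hsa i
      rw [h1 i hi] at this
      omega
    refine ⟨a, b, rfl, ?_, ha, hdeg, h1, h2⟩
    rintro rfl
    have hb : b ≠ 0 := by
      rintro rfl
      rw [add_zero] at hdeg
      omega
    obtain ⟨i, hi⟩ := Finsupp.ne_iff.1 hb
    simp only [Finsupp.coe_zero, Pi.zero_apply] at hi
    have hie : e ≤ (i : ℕ) := by
      by_contra hcon
      exact hi (h2 i (by omega))
    refine hno _ (Or.inr ⟨i, hie, rfl⟩) ?_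
    gcongr
    rw [Finsupp.single_le_iff]
    omega

end Aux17

/-- Example 5.9: for `I = (T_{r+1}, u·x_e, …, u·x_{n+e})` where `T_{r+1}` consists of all
monomials of degree `r+1` in `x_0,…,x_{e-1}` and `u` is a monomial of degree `r > 0` in
`x_0,…,x_{e-1}`: `deg(S₀/I) = C(e+r, r) - 1` and `depth(S₀/I) = 0` (there is a nonzero
element of `S₀/I` annihilated by the irrelevant maximal ideal). -/
theorem stmt17 (k : Type) [Field k] (n e r : ℕ) (he : 1 ≤ e) (hr : 0 < r)
    (mu : Fin (n + e + 1) →₀ ℕ) (hmu : Paper.tdeg mu = r)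
    (hmusupp : ∀ i : Fin (n + e + 1), e ≤ (i : ℕ) → mu i = 0)
    (I : Ideal (MvPolynomial (Fin (n + e + 1)) k))
    (hIdef : I = Ideal.span
      ({q | ∃ m : Fin (n + e + 1) →₀ ℕ, Paper.tdeg m = r + 1 ∧
          (∀ i : Fin (n + e + 1), e ≤ (i : ℕ) → m i = 0) ∧
          q = MvPolynomial.monomial m (1 : k)} ∪
        {q | ∃ i : Fin (n + e + 1), e ≤ (i : ℕ) ∧
          q = MvPolynomial.monomial mu (1 : k) * MvPolynomial.X i})) :
    Paper.HasDeg k I n ((e + r).choose r - 1) ∧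
      ∃ z : MvPolynomial (Fin (n + e + 1)) k ⧸ I, z ≠ 0 ∧
        ∀ i : Fin (n + e + 1), Ideal.Quotient.mk I (MvPolynomial.X i) * z = 0 := by
  have hmudeg : mu.degree = r := hmu
  have hI : I = Ideal.span ((fun s => MvPolynomial.monomial s (1 : k)) '' Aux17.gens n e r mu) := by
    rw [hIdef]
    congr 1
    unfold Aux17.gens
    rw [Set.image_union]
    congr 1
    · ext q
      constructor
      · rintro ⟨m, h1, h2, rfl⟩
        exact ⟨m, ⟨h1, h2⟩, rfl⟩
      · rintro ⟨m, ⟨h1, h2⟩, rfl⟩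
        exact ⟨m, h1, h2, rfl⟩
    · ext q
      constructor
      · rintro ⟨i, hi, rfl⟩
        refine ⟨_, ⟨i, hi, rfl⟩, ?_⟩
        simp [MvPolynomial.X, MvPolynomial.monomial_mul]
      · rintro ⟨m, ⟨i, hi, rfl⟩, rfl⟩
        refine ⟨i, hi, ?_⟩
        simp [MvPolynomial.X, MvPolynomial.monomial_mul]
  clear hIdef
  subst hI
  constructor
  · have hcardB : ((Aux17.bigB n e r).erase mu).card = (e + r).choose r - 1 := by
      rw [Finset.card_erase_of_mem, Aux17.card_bigB]
      rw [Aux17.mem_bigB, Aux17.supp_head]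
      exact ⟨hmudeg.le, hmusupp⟩
    have hpos : 0 < (e + r).choose r - 1 := by
      have h1 : (e + r).choose r = (e + r - 1).choose (r - 1) + (e + r - 1).choose r := by
        obtain ⟨r, rfl⟩ := Nat.exists_eq_add_of_lt hr
        simp only [Nat.zero_add, Nat.add_sub_cancel]
        exact Nat.choose_succ_succ _ _
      have h2 : 0 < (e + r - 1).choose (r - 1) := Nat.choose_pos (by omega)
      have h3 : 0 < (e + r - 1).choose r := Nat.choose_pos (by omega)
      omega
    set P : Polynomial ℚ := ∑ a ∈ (Aux17.bigB n e r).erase mu,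
      Polynomial.preHilbertPoly ℚ n a.degree with hP
    have hfac : (n.factorial : ℚ) ≠ 0 := by exact_mod_cast n.factorial_ne_zero
    have hcoeff : P.coeff n = (((e + r).choose r - 1 : ℕ) : ℚ) * (n.factorial : ℚ)⁻¹ := by
      rw [hP, Polynomial.finsetSum_coeff]
      simp_rw [Polynomial.coeff_preHilbertPoly_self]
      rw [Finset.sum_const, hcardB, nsmul_eq_mul]
    have hle : P.natDegree ≤ n := by
      rw [hP]
      apply Polynomial.natDegree_sum_le_of_forall_le
      intro a _
      rw [Polynomial.natDegree_preHilbertPoly]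
    have hdeg : P.natDegree = n := by
      refine le_antisymm hle (Polynomial.le_natDegree_of_ne_zero ?_)
      rw [hcoeff]
      have : (((e + r).choose r - 1 : ℕ) : ℚ) ≠ 0 := by exact_mod_cast hpos.ne'
      exact mul_ne_zero this (inv_ne_zero hfac)
    refine ⟨P, hdeg, ?_, ?_⟩
    · rw [Polynomial.leadingCoeff, hdeg, hcoeff, mul_assoc, inv_mul_cancel₀ hfac, mul_one]
    · filter_upwards [Filter.eventually_gt_atTop r] with d hd
      rw [Aux17.hilb_eq_card k _ d _ (Aux17.stdA_iff hmudeg hmusupp hd), Aux17.card_stdA, hP,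
        Polynomial.eval_finsetSum]
      push_cast
      refine Finset.sum_congr rfl fun a ha => ?_
      rw [Finset.mem_erase, Aux17.mem_bigB] at ha
      rw [Polynomial.preHilbertPoly_eq_choose_sub_add]
      omega
  · refine ⟨Ideal.Quotient.mk _ (MvPolynomial.monomial mu 1), ?_, ?_⟩
    · rw [Ne, Ideal.Quotient.eq_zero_iff_mem, MvPolynomial.mem_ideal_span_monomial_image]
      intro h
      obtain ⟨s, hs, hle⟩ := h mu (by simp)
      have hd := Finsupp.degree_mono hle
      rcases hs with ⟨h1, _⟩ | ⟨i, _, rfl⟩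
      · omega
      · rw [map_add, Finsupp.degree_single] at hd
        omega
    · intro i
      rw [← map_mul, Ideal.Quotient.eq_zero_iff_mem, mul_comm]
      have hX : MvPolynomial.monomial mu (1 : k) * MvPolynomial.X i =
          MvPolynomial.monomial (mu + Finsupp.single i 1) 1 := by
        simp [MvPolynomial.X, MvPolynomial.monomial_mul]
      rw [hX]
      apply Ideal.subset_span
      refine ⟨_, ?_, rfl⟩
      rcases lt_or_ge (i : ℕ) e with hlt | hge
      · left
        refine ⟨by rw [map_add, Finsupp.degree_single, hmudeg], fun j hj => ?_⟩
        have hij : i ≠ j := by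
          rintro rfl
          omega
        rw [Finsupp.add_apply, hmusupp j hj, Finsupp.single_apply, if_neg hij, add_zero]
      · right
        exact ⟨i, hge, rfl⟩
end
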